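/- Let ξ ∈ (0,1/2) and let E = E_ξ be the perfect symmetric set of constant ratio ξ (the generalized Cantor set with ζ_n = ξ for all n), whose Hausdorff dimension is dim(E_ξ) = log 2 / log(1/ξ). Let ω : (0,π] → (0,∞) be continuous and increasing, with t ↦ ω(t^γ) concave for some γ > 2, t ↦ tω'(t)/ω(t) increasing, and log ω(dist(·,E)) ∈ L¹(𝕋). Then the following are equivalent: (1) f_{ω,E} ∈ 𝒟; (2) f_{ω,E} is a multiplier of 𝒟; (3) ∫_0^1 ω'(t)² t^{1−dim(E_ξ)} dt < ∞. In particular, for ω(t) = t^α with α ∈ (0,1), f_{α,E_ξ} ∈ 𝒟 ⟺ f_{α,E_ξ} is a multiplier of 𝒟 ⟺ α > dim(E_ξ)/2. -/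

import Mathlib

/-!
Let `δ(θ)` be the distance of `e^{iθ}` to `E = E_ξ`, put `d = log 2 / log ξ⁻¹`, and let `f` be the
outer function with boundary modulus `ω ∘ δ`.

If `∫ ω'(t)² t^{1-d} dt` is finite, then bounding the oscillation of `log ω ∘ δ` against the
derivative of the Herglotz kernel gives `|f'((1-y)e^{iθ})|² ≲ y^{-1/2} T(max(δ(θ), y))`, where `T`
is a weighted tail of `∫ ω'²`. Self-similarity provides the Assouad-type bound
`|{θ ∈ I : δ(θ) < s}| ≲ |I|^d s^{1-d}` for arcs `I`, and integrating the pointwise estimate against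
it shows that the energy of `f` over the Carleson box of `I` is `≲ |I|^d`. As `d > 0`, the energy
density `|f'|²` is then a Carleson measure for the Dirichlet space (mean values on Whitney discs and
Cauchy–Schwarz along radii), so `f` is a multiplier. A multiplier is its own product with `1`, hence
lies in the Dirichlet space.

Conversely, near an end point of a gap of length `L` the modulus of the radial limits grows like
`ω`, and this forces the Dirichlet energy of the sector over the gap to be `≳ ∫_0^L ω'(t)² t dt`.
There are `2^n = ξ^{-nd}` gaps of length proportional to `ξ^n`; summing over all of them turns the
weight `t` into `t^{1-d}`.
-/

open MeasureTheory Real Set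

noncomputable section

/-- The unit circle in `ℂ`. -/
def circleT : Set ℂ := Metric.sphere (0 : ℂ) 1

/-- Arc-length parametrization of the unit circle. -/
def cpt (θ : ℝ) : ℂ := Complex.exp (θ * Complex.I)

/-- Distance from a point to a set. -/
def dE (E : Set ℂ) (ζ : ℂ) : ℝ := Metric.infDist ζ E

/-- Arc-length integral over the whole circle. -/
def circInt (f : ℂ → ℝ) : ℝ := ∫ θ in Set.Ioc 0 (2 * π), f (cpt θ)

/-- Arc-length integral over a subset `Λ` of the circle. -/
def circIntOn (Λ : Set ℂ) (f : ℂ → ℝ) : ℝ :=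
  ∫ θ in {θ ∈ Set.Ioc 0 (2 * π) | cpt θ ∈ Λ}, f (cpt θ)

/-- `E` has arc-length (Lebesgue) measure zero. -/
def MeasureZeroOnCircle (E : Set ℂ) : Prop :=
  volume {θ ∈ Set.Ioc 0 (2 * π) | cpt θ ∈ E} = 0

/-- `E` is a Carleson set: `∫_𝕋 log dist(ζ,E) |dζ| > -∞`. -/
def CarlesonSet (E : Set ℂ) : Prop :=
  IntegrableOn (fun θ => Real.log (dE E (cpt θ))) (Set.Ioc 0 (2 * π)) volume

/-- `I(ζ,E)`: the connected component of `𝕋 \ E` containing `ζ`. -/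
def compArc (E : Set ℂ) (ζ : ℂ) : Set ℂ := connectedComponentIn (circleT \ E) ζ

/-- `Γ(ζ,E)`. -/
def GammaSet (E : Set ℂ) (ζ : ℂ) : Set ℂ :=
  {ζ' ∈ circleT \ compArc E ζ | dE E ζ' ≤ dE E ζ}

/-- `Σ(ζ,E)`. -/
def SigmaSet (E : Set ℂ) (ζ : ℂ) : Set ℂ :=
  {ζ' ∈ circleT \ compArc E ζ | dE E ζ ≤ dE E ζ'}

/-- The Richter–Sundberg integrand for the outer function with boundary modulus
`ω(dist(·,E))`. -/
def RSker (ω : ℝ → ℝ) (E : Set ℂ) (ζ ζ' : ℂ) : ℝ :=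
  ((ω (dE E ζ')) ^ 2 - (ω (dE E ζ)) ^ 2
    - 2 * (ω (dE E ζ)) ^ 2 * Real.log (ω (dE E ζ') / ω (dE E ζ))) / ‖ζ - ζ'‖ ^ 2

/-- Local Dirichlet integral `D_ζ(f_{ω,E})` (Richter–Sundberg formula). -/
def locDir (ω : ℝ → ℝ) (E : Set ℂ) (ζ : ℂ) : ℝ :=
  (1 / (2 * π)) * circInt (fun ζ' => RSker ω E ζ ζ')

/-- Local Dirichlet integral restricted to `Λ`. -/
def locDirOn (ω : ℝ → ℝ) (E : Set ℂ) (Λ : Set ℂ) (ζ : ℂ) : ℝ :=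
  (1 / (2 * π)) * circIntOn Λ (fun ζ' => RSker ω E ζ ζ')

/-- `E` is an `𝓛₁`-set. -/
def L1Set (E : Set ℂ) : Prop :=
  ∃ C > 0, ∀ ζ ∈ circleT \ E,
    circIntOn (GammaSet E ζ)
      (fun ζ' => Real.log (dE E ζ / dE E ζ') / ‖ζ - ζ'‖ ^ 2) ≤ C / dE E ζ

/-- The `𝓛₂` inequality with constant `C`. -/
def L2With (E : Set ℂ) (C : ℝ) : Prop :=
  ∀ ζ ∈ circleT \ E,
    circIntOn (GammaSet E ζ)
      (fun ζ' => (Real.log (dE E ζ / dE E ζ')) ^ 2 / ‖ζ - ζ'‖ ^ 2) ≤ C / dE E ζ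

/-- `E` is an `𝓛₂`-set. -/
def L2Set (E : Set ℂ) : Prop := ∃ C > 0, L2With E C

/-- Supremum of `dist(·,E)` over the arc `cpt '' (a,b]`. -/
def arcSup (E : Set ℂ) (a b : ℝ) : ℝ := sSup ((fun θ => dE E (cpt θ)) '' Set.Ioc a b)

/-- `E` is a `𝒦`-set (Kotochigov). -/
def KSet (E : Set ℂ) : Prop :=
  ∃ c > 0, ∀ a b : ℝ, a < b → b ≤ a + 2 * π → c * (b - a) ≤ arcSup E a b

/-- Integral of a weight over the arc `cpt '' (a,b]` (with respect to arc length). -/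
def arcInt (w : ℂ → ℝ) (a b : ℝ) : ℝ := ∫ θ in Set.Ioc a b, w (cpt θ)

/-- Double logarithmic integral of a weight over an arc. -/
def arcDouble (w : ℂ → ℝ) (a b : ℝ) : ℝ :=
  ∫ θ in Set.Ioc a b, (∫ θ' in Set.Ioc a b,
    Real.log (1 / ‖cpt θ - cpt θ'‖) * w (cpt θ) * w (cpt θ'))

/-- Arc-length measure of `{ζ ∈ I : dist(ζ,E) ≤ t}` for the arc `cpt '' (a,b]`. -/
def sublevelMeas (E : Set ℂ) (a b t : ℝ) : ℝ :=
  (volume {θ ∈ Set.Ioc a b | dE E (cpt θ) ≤ t}).toReal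

/-- Arc-length measure of `E_t = {ζ ∈ 𝕋 : dist(ζ,E) ≤ t}`. -/
def EtMeas (E : Set ℂ) (t : ℝ) : ℝ := sublevelMeas E 0 (2 * π) t

/-- The open unit disc. -/
def unitDisc : Set ℂ := Metric.ball (0 : ℂ) 1

/-- Membership in the (holomorphic) Dirichlet space `𝒟`. -/
def MemDirichlet (f : ℂ → ℂ) : Prop :=
  DifferentiableOn ℂ f unitDisc ∧
  (∃ M : ℝ, ∀ r ∈ Set.Ioo (0 : ℝ) 1,
    (∫ θ in Set.Ioc 0 (2 * π), ‖f ((r : ℂ) * cpt θ)‖ ^ 2) ≤ M) ∧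
  IntegrableOn (fun z => ‖deriv f z‖ ^ 2) unitDisc volume

/-- `f` is a multiplier of the Dirichlet space `𝒟`. -/
def IsMultiplierD (f : ℂ → ℂ) : Prop :=
  ∀ g : ℂ → ℂ, MemDirichlet g → MemDirichlet (fun z => f z * g z)

/-- The outer function `f_{ω,E}` with boundary modulus `ω(dist(·,E))`. -/
def outerFun (ω : ℝ → ℝ) (E : Set ℂ) (z : ℂ) : ℂ :=
  Complex.exp ((((2 * π)⁻¹ : ℝ) : ℂ) * ∫ θ in Set.Ioc 0 (2 * π),
    ((cpt θ + z) / (cpt θ - z)) * ((Real.log (ω (dE E (cpt θ))) : ℝ) : ℂ))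

/-- `log ω(dist(·,E)) ∈ L¹(𝕋)`. -/
def LogOmegaInt (ω : ℝ → ℝ) (E : Set ℂ) : Prop :=
  IntegrableOn (fun θ => Real.log (ω (dE E (cpt θ)))) (Set.Ioc 0 (2 * π)) volume

/-- Standing hypotheses on `ω` (with derivative `ω'`): continuous, positive, increasing on
`(0,π]`, differentiable with derivative `ω'`, `t ↦ ω(t^γ)` concave, and `t ↦ tω'(t)/ω(t)`
increasing. -/
def OmegaHyp (ω ω' : ℝ → ℝ) (γ : ℝ) : Prop :=
  ContinuousOn ω (Set.Ioc 0 π) ∧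
  (∀ t ∈ Set.Ioc (0 : ℝ) π, 0 < ω t) ∧
  MonotoneOn ω (Set.Ioc 0 π) ∧
  (∀ t ∈ Set.Ioo (0 : ℝ) π, HasDerivAt ω (ω' t) t) ∧
  ConcaveOn ℝ (Set.Ioc 0 (π ^ γ⁻¹)) (fun t => ω (t ^ γ)) ∧
  MonotoneOn (fun t => t * ω' t / ω t) (Set.Ioo 0 π)

/-- The generalized Cantor set `E_{(ζ_n)}` (with `ξ k` playing the role of `ζ_{k+1}`). -/
def gCantorSet (ξ : ℕ → ℝ) : Set ℂ :=
  {z | ∃ ε : ℕ → Bool, z = Complex.exp (((2 * π : ℝ) : ℂ) * Complex.I *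
    ((∑' n : ℕ, (if ε n then (1 : ℝ) else 0) * (∏ k ∈ Finset.range n, ξ k) * (1 - ξ n) : ℝ) : ℂ))}

end

namespace CantorDirichlet

open Filter Metric
open scoped ENNReal Topology

/-! ### Self-similar subsets of the line -/

section CantorGeometry

variable {ξ : ℝ} {C : Set ℝ}

/-- The similarity dimension of a set made of two copies of itself scaled by `ξ`. -/
noncomputable def cantorDim (ξ : ℝ) : ℝ := log 2 / log ξ⁻¹

lemma rpow_cantorDim (hξ : ξ ∈ Ioo (0 : ℝ) 1) : ξ ^ cantorDim ξ = 1 / 2 := by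
  have hlog : log ξ ≠ 0 := (log_neg hξ.1 hξ.2).ne
  have hexp : log ξ * cantorDim ξ = log (1 / 2) := by
    rw [cantorDim, log_inv, one_div, log_inv]
    field_simp
  rw [rpow_def_of_pos hξ.1, hexp, exp_log (by norm_num)]

lemma cantorDim_mem_Ioo (hξ : ξ ∈ Ioo (0 : ℝ) (1 / 2)) : cantorDim ξ ∈ Ioo (0 : ℝ) 1 := by
  have hlog : log 2 < log ξ⁻¹ := by
    apply log_lt_log (by norm_num)
    rw [lt_inv_comm₀ (by norm_num) hξ.1]
    linarith [hξ.2]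
  have htwo : 0 < log 2 := log_pos (by norm_num)
  exact ⟨div_pos htwo (htwo.trans hlog), (div_lt_one (htwo.trans hlog)).2 hlog⟩

lemma two_mul_mul_div_rpow_one_sub_cantorDim {s : ℝ} (hξ : ξ ∈ Ioo (0 : ℝ) 1) (hs : 0 ≤ s) :
    2 * ξ * (s / ξ) ^ (1 - cantorDim ξ) = s ^ (1 - cantorDim ξ) := by
  have hξ0 := hξ.1
  rw [div_rpow hs hξ0.le, rpow_sub hξ0 1 (cantorDim ξ), rpow_one, rpow_cantorDim hξ]
  field_simp

lemma mul_div_rpow_mul_div_rpow_one_sub {R s d : ℝ} (hξ : 0 < ξ) (hR : 0 ≤ R) (hs : 0 ≤ s) :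
    ξ * ((R / ξ) ^ d * (s / ξ) ^ (1 - d)) = R ^ d * s ^ (1 - d) := by
  rw [div_rpow hs hξ.le, div_rpow hR hξ.le, rpow_sub hξ, rpow_one]
  have : 0 < ξ ^ d := rpow_pos_of_pos hξ _
  field_simp

lemma le_rpow_mul_rpow_one_sub {s R d : ℝ} (hs : 0 < s) (h : s ≤ R) (hd : 0 ≤ d) :
    s ≤ R ^ d * s ^ (1 - d) := by
  calc s = s ^ d * s ^ (1 - d) := by rw [← rpow_add hs, add_sub_cancel, rpow_one]
    _ ≤ _ := by gcongr

lemma le_rpow_mul_rpow_one_sub' {s R d : ℝ} (hR : 0 < R) (h : R ≤ s) (hd : d ≤ 1) :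
    R ≤ R ^ d * s ^ (1 - d) := by
  calc R = R ^ d * R ^ (1 - d) := by rw [← rpow_add hR, add_sub_cancel, rpow_one]
    _ ≤ _ := by gcongr

/-- A set of reals with the extreme points `0` and `1` that is the union of its images under
`x ↦ ξ x` and `x ↦ ξ x + (1 - ξ)`; the two maps are indexed by their translation part. -/
structure IsSelfSimilar (ξ : ℝ) (C : Set ℝ) : Prop where
  zero_mem : 0 ∈ C
  one_mem : 1 ∈ C
  subset_Icc : C ⊆ Icc 0 1
  mul_add_mem : ∀ e ∈ ({0, 1 - ξ} : Set ℝ), ∀ x ∈ C, ξ * x + e ∈ C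
  exists_eq_mul_add : ∀ x ∈ C, ∃ e ∈ ({0, 1 - ξ} : Set ℝ), ∃ y ∈ C, x = ξ * y + e

lemma volume_preimage_sub_div (hξ : 0 < ξ) (e : ℝ) (S : Set ℝ) :
    volume ((fun x : ℝ => (x - e) / ξ) ⁻¹' S) = ENNReal.ofReal ξ * volume S := by
  have hcomp : (fun x : ℝ => (x - e) / ξ) ⁻¹' S =
      (fun x => x + (-e)) ⁻¹' ((fun x => ξ⁻¹ * x) ⁻¹' S) := by
    ext x
    simp only [mem_preimage, div_eq_inv_mul, sub_eq_add_neg]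
  rw [hcomp, measure_preimage_add_right, Real.volume_preimage_mul_left (inv_ne_zero hξ.ne'),
    inv_inv, abs_of_pos hξ]

lemma dist_sub_div (hξ : 0 < ξ) (e x y : ℝ) :
    dist ((x - e) / ξ) y = dist x (ξ * y + e) / ξ := by
  rw [dist_eq, dist_eq, ← abs_of_pos hξ, ← abs_div, abs_of_pos hξ]
  congr 1
  field_simp
  ring

lemma volume_thickening_le (hC : C ⊆ Icc 0 1) (s : ℝ) :
    volume (thickening s C) ≤ ENNReal.ofReal (1 + 2 * s) := by
  have hsub : thickening s C ⊆ Ioo (-s) (1 + s) := by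
    intro x hx
    obtain ⟨c, hc, hxc⟩ := mem_thickening_iff.1 hx
    rw [dist_eq, abs_lt] at hxc
    constructor <;> linarith [(hC hc).1, (hC hc).2]
  calc volume (thickening s C) ≤ volume (Ioo (-s) (1 + s)) := measure_mono hsub
    _ = ENNReal.ofReal (1 + 2 * s) := by rw [Real.volume_Ioo]; ring_nf

lemma scale_induction {P : ℝ → Prop} {r : ℝ} (hξ : ξ ∈ Ioo (0 : ℝ) 1) (hr : 0 < r)
    (large : ∀ s, r ≤ s → P s) (step : ∀ s, 0 < s → s < r → P (s / ξ) → P s) {s : ℝ}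
    (hs : 0 < s) : P s := by
  suffices h : ∀ (n : ℕ) (s : ℝ), 0 < s → ξ ^ n * r ≤ s → P s by
    obtain ⟨n, hn⟩ := exists_pow_lt_of_lt_one (div_pos hs hr) hξ.2
    exact h n s hs ((lt_div_iff₀ hr).1 hn).le
  intro n
  induction n with
  | zero => exact fun s _ h => large s (by simpa using h)
  | succ n ih =>
    intro s hs h
    rcases le_or_gt r s with hrs | hrs
    · exact large s hrs
    · refine step s hs hrs (ih _ (div_pos hs hξ.1) ?_)
      rw [le_div_iff₀ hξ.1]
      calc ξ ^ n * r * ξ = ξ ^ (n + 1) * r := by ring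
        _ ≤ s := h

lemma volume_ball_inter_le_of_le (S : Set ℝ) {d p R s K : ℝ} (hd : d ≤ 1)
    (hK : 2 ≤ K) (hR : 0 < R) (hRs : R ≤ s) :
    volume (ball p R ∩ S) ≤ ENNReal.ofReal (K * (R ^ d * s ^ (1 - d))) := by
  refine (measure_mono inter_subset_left).trans ?_
  rw [Real.volume_ball]
  refine ENNReal.ofReal_le_ofReal ?_
  gcongr
  exact le_rpow_mul_rpow_one_sub' hR hRs hd

lemma six_le_six_div (hξ : ξ ∈ Ioo (0 : ℝ) (1 / 2)) : 6 ≤ 6 / (ξ * (1 - 2 * ξ)) := by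
  have hξ0 := hξ.1
  have hgap : 0 < 1 - 2 * ξ := by linarith [hξ.2]
  rw [le_div_iff₀ (by positivity)]
  nlinarith [hξ.2]

namespace IsSelfSimilar

lemma volume_thickening_le_mul (hC : IsSelfSimilar ξ C) (hξ : 0 < ξ) (s : ℝ) :
    volume (thickening s C) ≤ ENNReal.ofReal (2 * ξ) * volume (thickening (s / ξ) C) := by
  have hsub : thickening s C ⊆ (fun x => (x - 0) / ξ) ⁻¹' thickening (s / ξ) C ∪
      (fun x => (x - (1 - ξ)) / ξ) ⁻¹' thickening (s / ξ) C := by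
    intro x hx
    obtain ⟨c, hc, hxc⟩ := mem_thickening_iff.1 hx
    obtain ⟨e, he, y, hy, rfl⟩ := hC.exists_eq_mul_add c hc
    have hmem : (x - e) / ξ ∈ thickening (s / ξ) C :=
      mem_thickening_iff.2 ⟨y, hy, by rw [dist_sub_div hξ]; gcongr⟩
    rcases he with rfl | rfl
    exacts [Or.inl hmem, Or.inr hmem]
  refine (measure_mono hsub).trans ((measure_union_le _ _).trans_eq ?_)
  rw [volume_preimage_sub_div hξ, volume_preimage_sub_div hξ, ← two_mul, ← mul_assoc,
    ENNReal.ofReal_mul zero_le_two, ENNReal.ofReal_ofNat]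

lemma volume_thickening_le_rpow (hC : IsSelfSimilar ξ C) (hξ : ξ ∈ Ioo (0 : ℝ) (1 / 2)) {s : ℝ}
    (hs : 0 < s) (hs1 : s ≤ 1) :
    volume (thickening s C) ≤ ENNReal.ofReal (3 / ξ * s ^ (1 - cantorDim ξ)) := by
  have hξ0 := hξ.1
  have hξ1 : ξ ∈ Ioo (0 : ℝ) 1 := ⟨hξ0, by linarith [hξ.2]⟩
  have hd := cantorDim_mem_Ioo hξ
  refine scale_induction (P := fun s => s ≤ 1 → volume (thickening s C) ≤
    ENNReal.ofReal (3 / ξ * s ^ (1 - cantorDim ξ))) hξ1 hξ0 (fun s hξs hs1 => ?_)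
    (fun s hs hsξ ih _ => ?_) hs hs1
  · refine (volume_thickening_le hC.subset_Icc s).trans (ENNReal.ofReal_le_ofReal ?_)
    have hpow : ξ ≤ s ^ (1 - cantorDim ξ) :=
      hξs.trans (self_le_rpow_of_le_one (hξ0.le.trans hξs) hs1 (by linarith [hd.1]))
    calc 1 + 2 * s ≤ 3 / ξ * ξ := by field_simp; linarith
      _ ≤ _ := by gcongr
  · refine (hC.volume_thickening_le_mul hξ0 s).trans ?_
    grw [ih ((div_le_one hξ0).2 hsξ.le)]
    rw [← ENNReal.ofReal_mul (by positivity),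
      ← two_mul_mul_div_rpow_one_sub_cantorDim hξ1 hs.le]
    exact (congrArg _ (by ring)).le

/-- At scales below the central gap, `C` looks like one of its two copies. -/
lemma exists_shift_of_mem (hC : IsSelfSimilar ξ C) (hξ : 0 < ξ) {c : ℝ} (hc : c ∈ C) :
    ∃ e, ∃ y ∈ C, c = ξ * y + e ∧
      ∀ x ∈ C, dist x c < 1 - 2 * ξ → ∃ z ∈ C, x = ξ * z + e := by
  obtain ⟨e, he, y, hy, rfl⟩ := hC.exists_eq_mul_add c hc
  refine ⟨e, y, hy, rfl, fun x hx hdist => ?_⟩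
  obtain ⟨e', he', z, hz, rfl⟩ := hC.exists_eq_mul_add x hx
  refine ⟨z, hz, ?_⟩
  have hyI := hC.subset_Icc hy
  have hzI := hC.subset_Icc hz
  rw [dist_eq, abs_lt] at hdist
  rcases he with rfl | rfl <;> rcases he' with rfl | rfl
  · rfl
  · nlinarith [hyI.2, hzI.1]
  · nlinarith [hyI.1, hzI.2]
  · rfl

lemma ball_inter_thickening_subset (hC : IsSelfSimilar ξ C) (hξ : 0 < ξ) {c R s : ℝ}
    (hc : c ∈ C) (h : R + s ≤ 1 - 2 * ξ) :
    ∃ e, ∃ y ∈ C, ball c R ∩ thickening s C ⊆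
      (fun x => (x - e) / ξ) ⁻¹' (ball y (R / ξ) ∩ thickening (s / ξ) C) := by
  obtain ⟨e, y, hy, rfl, hsame⟩ := hC.exists_shift_of_mem hξ hc
  refine ⟨e, y, hy, fun x ⟨hxR, hxs⟩ => ?_⟩
  rw [mem_ball] at hxR
  obtain ⟨c', hc', hxc'⟩ := mem_thickening_iff.1 hxs
  obtain ⟨z, hz, rfl⟩ := hsame c' hc' (by linarith [dist_triangle_left c' (ξ * y + e) x])
  refine ⟨?_, mem_thickening_iff.2 ⟨z, hz, ?_⟩⟩
  · rw [mem_ball, dist_sub_div hξ]; gcongr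
  · rw [dist_sub_div hξ]; gcongr

lemma volume_thickening_le_of_large (hC : IsSelfSimilar ξ C) (hξ : ξ ∈ Ioo (0 : ℝ) (1 / 2))
    {R s : ℝ} (hR : (1 - 2 * ξ) / 2 ≤ R) (hs : 0 < s) (hsR : s ≤ R) :
    volume (thickening s C) ≤ ENNReal.ofReal
      (6 / (ξ * (1 - 2 * ξ)) * (R ^ cantorDim ξ * s ^ (1 - cantorDim ξ))) := by
  have hξ0 := hξ.1
  have hgap : 0 < 1 - 2 * ξ := by linarith [hξ.2]
  have hd := cantorDim_mem_Ioo hξ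
  rcases le_or_gt s 1 with hs1 | hs1
  · refine (hC.volume_thickening_le_rpow hξ hs hs1).trans (ENNReal.ofReal_le_ofReal ?_)
    have hpow : (1 - 2 * ξ) / 2 ≤ R ^ cantorDim ξ :=
      (self_le_rpow_of_le_one (by positivity) (by linarith) hd.2.le).trans
        (rpow_le_rpow (by positivity) hR hd.1.le)
    calc 3 / ξ * s ^ (1 - cantorDim ξ)
        = 6 / (ξ * (1 - 2 * ξ)) * ((1 - 2 * ξ) / 2 * s ^ (1 - cantorDim ξ)) := by
          generalize 1 - 2 * ξ = g at hgap
          field_simp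
          norm_num
      _ ≤ _ := by gcongr
  · refine (volume_thickening_le hC.subset_Icc s).trans (ENNReal.ofReal_le_ofReal ?_)
    calc 1 + 2 * s ≤ 6 * s := by linarith
      _ ≤ 6 / (ξ * (1 - 2 * ξ)) * (R ^ cantorDim ξ * s ^ (1 - cantorDim ξ)) := by
        gcongr
        · exact six_le_six_div hξ
        · exact le_rpow_mul_rpow_one_sub hs hsR hd.1.le

lemma volume_ball_inter_thickening_le_of_mem (hC : IsSelfSimilar ξ C)
    (hξ : ξ ∈ Ioo (0 : ℝ) (1 / 2)) {c R s : ℝ} (hc : c ∈ C) (hR : 0 < R) (hs : 0 < s) :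
    volume (ball c R ∩ thickening s C) ≤ ENNReal.ofReal
      (6 / (ξ * (1 - 2 * ξ)) * (R ^ cantorDim ξ * s ^ (1 - cantorDim ξ))) := by
  have hξ0 := hξ.1
  have hgap : 0 < 1 - 2 * ξ := by linarith [hξ.2]
  refine scale_induction (P := fun R => ∀ c ∈ C, ∀ s, 0 < s →
    volume (ball c R ∩ thickening s C) ≤ ENNReal.ofReal
      (6 / (ξ * (1 - 2 * ξ)) * (R ^ cantorDim ξ * s ^ (1 - cantorDim ξ))))
    ⟨hξ0, by linarith [hξ.2]⟩ (half_pos hgap) (fun R hR c _ s hs => ?_)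
    (fun R hR hRgap ih c hc s hs => ?_) hR c hc s hs
  all_goals rcases le_or_gt R s with hRs | hRs
  · exact volume_ball_inter_le_of_le _ (cantorDim_mem_Ioo hξ).2.le
      (by linarith [six_le_six_div hξ]) (by linarith) hRs
  · exact (measure_mono inter_subset_right).trans (hC.volume_thickening_le_of_large hξ hR hs hRs.le)
  · exact volume_ball_inter_le_of_le _ (cantorDim_mem_Ioo hξ).2.le
      (by linarith [six_le_six_div hξ]) hR hRs
  · obtain ⟨e, y, hy, hsub⟩ :=
      hC.ball_inter_thickening_subset hξ0 hc (R := R) (s := s) (by linarith)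
    refine (measure_mono hsub).trans ?_
    rw [volume_preimage_sub_div hξ0]
    grw [ih y hy (s / ξ) (by positivity)]
    rw [← ENNReal.ofReal_mul hξ0.le, mul_left_comm,
      mul_div_rpow_mul_div_rpow_one_sub hξ0 hR.le hs.le]

lemma volume_ball_inter_thickening_le (hC : IsSelfSimilar ξ C) (hξ : ξ ∈ Ioo (0 : ℝ) (1 / 2))
    (p : ℝ) {R s : ℝ} (hR : 0 < R) (hs : 0 < s) :
    volume (ball p R ∩ thickening s C) ≤ ENNReal.ofReal
      (18 / (ξ * (1 - 2 * ξ)) * (R ^ cantorDim ξ * s ^ (1 - cantorDim ξ))) := by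
  have hξ0 := hξ.1
  have hgap : 0 < 1 - 2 * ξ := by linarith [hξ.2]
  have hconst : 18 / (ξ * (1 - 2 * ξ)) = 3 * (6 / (ξ * (1 - 2 * ξ))) := by ring
  have hd := cantorDim_mem_Ioo hξ
  rcases le_or_gt R s with hRs | hRs
  · exact volume_ball_inter_le_of_le _ hd.2.le
      (by linarith [six_le_six_div hξ]) hR hRs
  rcases (ball p R ∩ thickening s C).eq_empty_or_nonempty with hempty | ⟨x₀, hx₀R, hx₀s⟩
  · simp [hempty]
  obtain ⟨c, hc, hx₀c⟩ := mem_thickening_iff.1 hx₀s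
  have hsub : ball p R ⊆ ball c (3 * R) := by
    refine ball_subset_ball' ?_
    rw [mem_ball] at hx₀R
    linarith [dist_triangle_left p c x₀]
  have hpow : (3 * R) ^ cantorDim ξ ≤ 3 * R ^ cantorDim ξ := by
    rw [mul_rpow zero_le_three hR.le]
    gcongr
    exact rpow_le_self_of_one_le (by norm_num) hd.2.le
  refine (measure_mono (inter_subset_inter_left _ hsub)).trans
    ((hC.volume_ball_inter_thickening_le_of_mem hξ hc (by positivity) hs).trans
      (ENNReal.ofReal_le_ofReal ?_))
  calc _ ≤ 6 / (ξ * (1 - 2 * ξ)) * (3 * R ^ cantorDim ξ * s ^ (1 - cantorDim ξ)) := by gcongr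
    _ = _ := by rw [hconst]; ring

end IsSelfSimilar

end CantorGeometry

section Gaps

variable {ξ : ℝ} {C : Set ℝ}

/-- The open interval `(a, a + L)` is a gap of `C`: it misses `C` and its endpoints belong to
`C`. -/
def IsGap (C : Set ℝ) (a L : ℝ) : Prop :=
  a ∈ C ∧ a + L ∈ C ∧ ∀ x ∈ C, x ≤ a ∨ a + L ≤ x

lemma IsSelfSimilar.isGap_central (hC : IsSelfSimilar ξ C) (hξ : 0 ≤ ξ) :
    IsGap C ξ (1 - 2 * ξ) := by
  refine ⟨by simpa using hC.mul_add_mem 0 (by simp) 1 hC.one_mem, ?_, fun x hx => ?_⟩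
  · convert hC.mul_add_mem (1 - ξ) (by simp) 0 hC.zero_mem using 1
    ring
  · obtain ⟨e, rfl | rfl, y, hy, rfl⟩ := hC.exists_eq_mul_add x hx
    · left; nlinarith [(hC.subset_Icc hy).2]
    · right; nlinarith [(hC.subset_Icc hy).1]

lemma IsGap.mul_add {a L e : ℝ} (h : IsGap C a L) (hC : IsSelfSimilar ξ C)
    (hξ : ξ ∈ Ioo (0 : ℝ) (1 / 2)) (he : e ∈ ({0, 1 - ξ} : Set ℝ)) :
    IsGap C (ξ * a + e) (ξ * L) := by
  have hξ0 := hξ.1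
  have hξ2 := hξ.2
  have hends : ξ * a + e + ξ * L = ξ * (a + L) + e := by ring
  refine ⟨hC.mul_add_mem e he _ h.1, hends ▸ hC.mul_add_mem e he _ h.2.1, fun x hx => ?_⟩
  obtain ⟨e', he', y, hy, rfl⟩ := hC.exists_eq_mul_add x hx
  have hyI := hC.subset_Icc hy
  have same (hee : e' = e) : ξ * y + e' ≤ ξ * a + e ∨ ξ * a + e + ξ * L ≤ ξ * y + e' := by
    subst hee
    rw [hends]
    exact (h.2.2 y hy).imp (fun _ => by gcongr) (fun _ => by gcongr)
  rcases he with rfl | rfl <;> rcases he' with rfl | rfl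
  · exact same rfl
  · right; nlinarith [hyI.1, (hC.subset_Icc h.2.1).2]
  · left; nlinarith [hyI.2, (hC.subset_Icc h.1).1]
  · exact same rfl

lemma setLIntegral_mul_add (hξ : 0 < ξ) (e a b : ℝ) (f : ℝ → ℝ≥0∞) :
    ∫⁻ x in Ioo a b, ENNReal.ofReal ξ * f (ξ * x + e) =
      ∫⁻ x in Ioo (ξ * a + e) (ξ * b + e), f x := by
  rw [← image_affine_Ioo hξ e, lintegral_image_eq_lintegral_abs_deriv_mul measurableSet_Ioo
    (f' := fun _ => ξ) (f := fun x => ξ * x + e), abs_of_pos hξ]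
  · intro x _
    simpa using ((hasDerivAt_id x).const_mul ξ |>.add_const e).hasDerivWithinAt
  · intro x _ y _ hxy
    simpa [hξ.ne'] using hxy

lemma setLIntegral_copies_add_central_le (hξ : ξ ∈ Ioo (0 : ℝ) (1 / 2)) (f : ℝ → ℝ≥0∞) :
    (∫⁻ x in Ioo 0 1, ENNReal.ofReal ξ * f (ξ * x + 0)) +
        (∫⁻ x in Ioo 0 1, ENNReal.ofReal ξ * f (ξ * x + (1 - ξ))) +
        ∫⁻ x in Ioo ξ (ξ + (1 - 2 * ξ)), f x ≤ ∫⁻ x in Ioo 0 1, f x := by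
  have hξ0 := hξ.1
  have hξ2 := hξ.2
  have hdisj : Disjoint (Ioo (ξ * 0 + 0) (ξ * 1 + 0))
      (Ioo (ξ * 0 + (1 - ξ)) (ξ * 1 + (1 - ξ))) := by
    rw [Set.disjoint_left]
    intro x hx hx'
    linarith [hx.2, hx'.1]
  have hdisj' : Disjoint (Ioo (ξ * 0 + 0) (ξ * 1 + 0) ∪
      Ioo (ξ * 0 + (1 - ξ)) (ξ * 1 + (1 - ξ))) (Ioo ξ (ξ + (1 - 2 * ξ))) := by
    rw [Set.disjoint_left]
    rintro x (hx | hx) hx'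
    · linarith [hx.2, hx'.1]
    · linarith [hx.1, hx'.2]
  rw [setLIntegral_mul_add hξ0, setLIntegral_mul_add hξ0,
    ← lintegral_union measurableSet_Ioo hdisj, ← lintegral_union measurableSet_Ioo hdisj']
  refine lintegral_mono_set ?_
  rintro x ((hx | hx) | hx) <;> constructor <;> linarith [hx.1, hx.2]

/-- The `2 ^ n` gaps of generation `n` have length `ξ ^ n (1 - 2 ξ)`. -/
lemma IsSelfSimilar.sum_gaps_le_setLIntegral (hC : IsSelfSimilar ξ C)
    (hξ : ξ ∈ Ioo (0 : ℝ) (1 / 2)) (N : ℕ) : ∀ (f : ℝ → ℝ≥0∞) (m : ℕ → ℝ≥0∞),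
      (∀ n < N, ∀ a, IsGap C a (ξ ^ n * (1 - 2 * ξ)) →
        m n ≤ ∫⁻ x in Ioo a (a + ξ ^ n * (1 - 2 * ξ)), f x) →
      ∑ n ∈ Finset.range N, 2 ^ n * m n ≤ ∫⁻ x in Ioo 0 1, f x := by
  induction N with
  | zero => intro f m _; simp
  | succ N ih =>
    intro f m hm
    have copy_le (e : ℝ) (he : e ∈ ({0, 1 - ξ} : Set ℝ)) :
        ∑ n ∈ Finset.range N, 2 ^ n * m (n + 1) ≤
          ∫⁻ x in Ioo 0 1, ENNReal.ofReal ξ * f (ξ * x + e) := by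
      refine ih (fun x => ENNReal.ofReal ξ * f (ξ * x + e)) (fun n => m (n + 1)) ?_
      intro n hn a ha
      have hlen : ξ * (ξ ^ n * (1 - 2 * ξ)) = ξ ^ (n + 1) * (1 - 2 * ξ) := by ring
      have hgap := hm (n + 1) (by omega) _ (hlen ▸ ha.mul_add hC hξ he)
      rw [setLIntegral_mul_add hξ.1]
      convert hgap using 4
      ring
    have hcentral := hm 0 N.succ_pos ξ (by simpa using hC.isGap_central hξ.1.le)
    rw [pow_zero, one_mul] at hcentral
    refine le_trans ?_ (setLIntegral_copies_add_central_le hξ f)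
    grw [← copy_le 0 (by simp), ← copy_le (1 - ξ) (by simp), ← hcentral]
    rw [Finset.sum_range_succ', pow_zero, one_mul, ← two_mul, Finset.mul_sum]
    simp only [pow_succ', mul_assoc, le_refl]

end Gaps

section LinearCantorSet

variable {ξ : ℝ}

/-- The point of `[0, 1]` with digit sequence `ε` in the Cantor set of ratio `ξ`. -/
noncomputable def cantorPoint (ξ : ℝ) (ε : ℕ → Bool) : ℝ :=
  ∑' n : ℕ, (if ε n then (1 : ℝ) else 0) * ξ ^ n * (1 - ξ)

/-- The Cantor set of constant ratio `ξ` on the line, whose image under `x ↦ e^{2πix}` is the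
perfect symmetric set. -/
def linearCantorSet (ξ : ℝ) : Set ℝ := range (cantorPoint ξ)

lemma gCantorSet_const (ξ : ℝ) :
    gCantorSet (fun _ => ξ) = (fun x : ℝ => cpt (2 * π * x)) '' linearCantorSet ξ := by
  have hpoint (ε : ℕ → Bool) : Complex.exp (((2 * π : ℝ) : ℂ) * Complex.I * (cantorPoint ξ ε : ℂ))
      = cpt (2 * π * cantorPoint ξ ε) := by
    rw [cpt]
    congr 1
    push_cast
    ring
  ext z
  simp only [linearCantorSet, mem_image, exists_range_iff, ← hpoint]
  simp only [gCantorSet, Finset.prod_const, Finset.card_range, cantorPoint, mem_ofPred_eq]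
  exact exists_congr fun ε => eq_comm

lemma hasSum_pow_mul_one_sub (hξ : ξ ∈ Ico (0 : ℝ) 1) : HasSum (fun n => ξ ^ n * (1 - ξ)) 1 := by
  simpa [inv_mul_cancel₀ (sub_ne_zero.2 hξ.2.ne')] using
    (hasSum_geometric_of_lt_one hξ.1 hξ.2).mul_right (1 - ξ)

lemma digit_mul_pow_mem_Icc (hξ : ξ ∈ Ico (0 : ℝ) 1) (ε : ℕ → Bool) (n : ℕ) :
    (if ε n then (1 : ℝ) else 0) * ξ ^ n * (1 - ξ) ∈ Icc 0 (ξ ^ n * (1 - ξ)) := by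
  have hterm : 0 ≤ ξ ^ n * (1 - ξ) := mul_nonneg (pow_nonneg hξ.1 n) (by linarith [hξ.2])
  split_ifs <;> simpa using hterm

lemma summable_cantorPoint (hξ : ξ ∈ Ico (0 : ℝ) 1) (ε : ℕ → Bool) :
    Summable fun n : ℕ => (if ε n then (1 : ℝ) else 0) * ξ ^ n * (1 - ξ) :=
  .of_nonneg_of_le (fun n => (digit_mul_pow_mem_Icc hξ ε n).1)
    (fun n => (digit_mul_pow_mem_Icc hξ ε n).2) (hasSum_pow_mul_one_sub hξ).summable

lemma cantorPoint_eq (hξ : ξ ∈ Ico (0 : ℝ) 1) (ε : ℕ → Bool) :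
    cantorPoint ξ ε =
      ξ * cantorPoint ξ (fun n => ε (n + 1)) + if ε 0 then 1 - ξ else 0 := by
  rw [cantorPoint, (summable_cantorPoint hξ ε).tsum_eq_zero_add, cantorPoint, ← tsum_mul_left,
    add_comm]
  congr 1
  · refine tsum_congr fun n => ?_
    rw [pow_succ]
    ring
  · simp

lemma cantorPoint_mem_Icc (hξ : ξ ∈ Ico (0 : ℝ) 1) (ε : ℕ → Bool) :
    cantorPoint ξ ε ∈ Icc (0 : ℝ) 1 := by
  refine ⟨tsum_nonneg fun n => (digit_mul_pow_mem_Icc hξ ε n).1, ?_⟩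
  exact (summable_cantorPoint hξ ε).tsum_le_of_sum_le fun s =>
    (Finset.sum_le_sum fun n _ => (digit_mul_pow_mem_Icc hξ ε n).2).trans
      (sum_le_hasSum s (fun n _ => ((digit_mul_pow_mem_Icc hξ ε n).1.trans
        (digit_mul_pow_mem_Icc hξ ε n).2)) (hasSum_pow_mul_one_sub hξ))

lemma isSelfSimilar_linearCantorSet (hξ : ξ ∈ Ico (0 : ℝ) 1) :
    IsSelfSimilar ξ (linearCantorSet ξ) where
  zero_mem := ⟨fun _ => false, by simp [cantorPoint]⟩
  one_mem := ⟨fun _ => true, by simpa [cantorPoint] using (hasSum_pow_mul_one_sub hξ).tsum_eq⟩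
  subset_Icc := range_subset_iff.2 (cantorPoint_mem_Icc hξ)
  mul_add_mem := by
    rintro e he _ ⟨ε, rfl⟩
    rcases he with rfl | rfl
    · exact ⟨fun n => Nat.casesOn n false ε, by rw [cantorPoint_eq hξ]; simp⟩
    · exact ⟨fun n => Nat.casesOn n true ε, by rw [cantorPoint_eq hξ]; simp⟩
  exists_eq_mul_add := by
    rintro _ ⟨ε, rfl⟩
    exact ⟨if ε 0 then 1 - ξ else 0, by split_ifs <;> simp, _, mem_range_self _,
      cantorPoint_eq hξ ε⟩

end LinearCantorSet

/-! ### The distance to a Cantor set on the circle -/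

section Circle

variable {θ θ' : ℝ}

lemma norm_cpt (θ : ℝ) : ‖cpt θ‖ = 1 := by
  rw [cpt, Complex.norm_exp_ofReal_mul_I]

lemma continuous_cpt : Continuous cpt := by
  unfold cpt; fun_prop

lemma periodic_cpt : Function.Periodic cpt (2 * π) := fun θ => by
  rw [cpt, cpt, Complex.ofReal_add, Complex.ofReal_mul, Complex.ofReal_ofNat, add_mul,
    Complex.exp_periodic]

lemma norm_cpt_sub (θ θ' : ℝ) : ‖cpt θ - cpt θ'‖ = 2 * |sin ((θ - θ') / 2)| := by
  have h : cpt θ - cpt θ' = cpt θ' * (Complex.exp (Complex.I * ((θ - θ' : ℝ) : ℂ)) - 1) := by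
    rw [cpt, cpt, mul_sub, mul_one, ← Complex.exp_add]
    push_cast
    ring_nf
  rw [h, norm_mul, norm_cpt, one_mul, Complex.norm_exp_I_mul_ofReal_sub_one, norm_mul,
    norm_ofNat, norm_eq_abs]

lemma norm_cpt_sub_le (θ θ' : ℝ) : ‖cpt θ - cpt θ'‖ ≤ |θ - θ'| := by
  have h := abs_sin_le_abs (x := (θ - θ') / 2)
  rw [abs_div, abs_two] at h
  rw [norm_cpt_sub]
  linarith

lemma le_norm_cpt_sub (h : |θ - θ'| ≤ π) : 2 / π * |θ - θ'| ≤ ‖cpt θ - cpt θ'‖ := by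
  have hsin := mul_abs_le_abs_sin (x := (θ - θ') / 2) (by rw [abs_div, abs_two]; linarith)
  rw [abs_div, abs_two] at hsin
  rw [norm_cpt_sub]
  linarith

lemma exists_int_le_norm_cpt_sub (θ θ' : ℝ) :
    ∃ k : ℤ, 2 / π * |θ - 2 * π * k - θ'| ≤ ‖cpt θ - cpt θ'‖ := by
  set k := round ((θ - θ') / (2 * π))
  have hround : |(θ - θ') / (2 * π) - k| ≤ 1 / 2 := abs_sub_round _
  have hperiod : cpt (θ - 2 * π * k) = cpt θ := by
    rw [mul_comm]; exact periodic_cpt.sub_int_mul_eq k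
  have hle : |θ - 2 * π * k - θ'| ≤ π := by
    have heq : θ - 2 * π * k - θ' = 2 * π * ((θ - θ') / (2 * π) - k) := by
      field_simp
      ring
    rw [heq, abs_mul, abs_of_pos two_pi_pos]
    nlinarith [pi_pos]
  exact ⟨k, hperiod ▸ le_norm_cpt_sub hle⟩

lemma sin_le_sin_of_le_of_le_pi_sub {u w : ℝ} (hu : 0 ≤ u) (huw : u ≤ w) (hw : w ≤ π - u) :
    sin u ≤ sin w := by
  rcases le_total w (π / 2) with h | h
  · exact sin_le_sin_of_le_of_le_pi_div_two (by linarith [pi_pos]) h huw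
  · rw [← sin_pi_sub w]
    exact sin_le_sin_of_le_of_le_pi_div_two (by linarith [pi_pos]) (by linarith) (by linarith)

end Circle

/-- An abstract boundary distance `θ ↦ dist(e^{iθ}, E)`, together with the volume bound
`|{θ ∈ B(p, R) : δ θ < s}| ≤ K R ^ d s ^ (1 - d)`, which expresses that the set `E` has
dimension at most `d` (in the sense of Assouad) uniformly over locations and scales. -/
structure IsRegularDist (δ : ℝ → ℝ) (d K : ℝ) : Prop where
  dim_pos : 0 < d
  dim_lt_one : d < 1
  const_pos : 0 < K
  nonneg : ∀ θ, 0 ≤ δ θ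
  le_two : ∀ θ, δ θ ≤ 2
  le_add_abs : ∀ θ θ', δ θ ≤ δ θ' + |θ - θ'|
  volume_le : ∀ p R s, 0 < R → R ≤ 2 * π → 0 < s →
    volume (ball p R ∩ {θ | δ θ < s}) ≤ ENNReal.ofReal (K * (R ^ d * s ^ (1 - d)))

lemma IsRegularDist.continuous {δ : ℝ → ℝ} {d K : ℝ} (h : IsRegularDist δ d K) :
    Continuous δ :=
  (LipschitzWith.of_le_add fun x y => by rw [dist_eq]; exact h.le_add_abs x y).continuous

lemma IsRegularDist.max_mem_Ioo {δ : ℝ → ℝ} {d K y : ℝ} (h : IsRegularDist δ d K) (θ : ℝ)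
    (hy : y ∈ Ioc 0 1) : max (δ θ) y ∈ Ioo 0 π :=
  ⟨lt_max_of_lt_right hy.1,
    max_lt (by linarith [h.le_two θ, pi_gt_three]) (by linarith [hy.2, pi_gt_three])⟩

section CircleCantor

variable {ξ : ℝ}

lemma cpt_mem_gCantorSet {x : ℝ} (hx : x ∈ linearCantorSet ξ) :
    cpt (2 * π * x) ∈ gCantorSet fun _ => ξ := by
  rw [gCantorSet_const]
  exact mem_image_of_mem _ hx

lemma gCantorSet_const_nonempty (hξ : ξ ∈ Ico (0 : ℝ) 1) :
    (gCantorSet fun _ => ξ).Nonempty :=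
  ⟨_, cpt_mem_gCantorSet (isSelfSimilar_linearCantorSet hξ).zero_mem⟩

lemma exists_mem_thickening_of_dE_lt (hξ : ξ ∈ Ico (0 : ℝ) 1) {θ s : ℝ}
    (h : dE (gCantorSet fun _ => ξ) (cpt θ) < s) :
    ∃ k : ℤ, (θ - 2 * π * k) / (2 * π) ∈ thickening (s / 4) (linearCantorSet ξ) := by
  rw [dE, infDist_lt_iff (gCantorSet_const_nonempty hξ), gCantorSet_const] at h
  obtain ⟨_, ⟨c, hc, rfl⟩, hlt⟩ := h
  obtain ⟨k, hk⟩ := exists_int_le_norm_cpt_sub θ (2 * π * c)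
  refine ⟨k, mem_thickening_iff.2 ⟨c, hc, ?_⟩⟩
  rw [dist_sub_div two_pi_pos, dist_eq, add_comm, ← sub_sub, sub_right_comm]
  have hlt' := hk.trans_lt (dist_eq_norm _ (cpt (2 * π * c)) ▸ hlt)
  rw [div_mul_eq_mul_div, div_lt_iff₀ pi_pos] at hlt'
  rw [div_lt_iff₀ two_pi_pos]
  ring_nf at hlt' ⊢
  linarith

lemma ball_inter_dE_lt_subset (hξ : ξ ∈ Ico (0 : ℝ) 1) {p R s : ℝ} (hR : R ≤ 2 * π)
    (hs : s ≤ 2 * π) :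
    ball p R ∩ {θ | dE (gCantorSet fun _ => ξ) (cpt θ) < s} ⊆
      ⋃ k ∈ Finset.Icc (⌊p / (2 * π)⌋ - 4) (⌊p / (2 * π)⌋ + 4),
        (fun θ => (θ - 2 * π * (k : ℤ)) / (2 * π)) ⁻¹'
          (ball ((p - 2 * π * k) / (2 * π)) (R / (2 * π)) ∩
            thickening (s / 4) (linearCantorSet ξ)) := by
  rintro θ ⟨hθ, hlt⟩
  obtain ⟨k, hk⟩ := exists_mem_thickening_of_dE_lt hξ hlt
  have hball : (θ - 2 * π * k) / (2 * π) ∈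
      ball ((p - 2 * π * k) / (2 * π)) (R / (2 * π)) := by
    rw [mem_ball, dist_sub_div two_pi_pos, mul_div_cancel₀ _ two_pi_pos.ne', sub_add_cancel]
    exact div_lt_div_of_pos_right hθ two_pi_pos
  refine mem_iUnion₂.2 ⟨k, ?_, hball, hk⟩
  obtain ⟨c, hc, hdist⟩ := mem_thickening_iff.1 hk
  have hcI := (isSelfSimilar_linearCantorSet hξ).subset_Icc hc
  have hR1 : R / (2 * π) ≤ 1 := (div_le_one two_pi_pos).2 hR
  have hfloor := Int.floor_le (p / (2 * π))
  have hfloor' := Int.lt_floor_add_one (p / (2 * π))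
  have hp : (p - 2 * π * k) / (2 * π) = p / (2 * π) - k := by field_simp
  rw [mem_ball, hp] at hball
  rw [dist_eq, abs_lt] at hdist hball
  have hpi := pi_lt_d2
  have hlow : ((⌊p / (2 * π)⌋ - 4 : ℤ) : ℝ) ≤ k := by push_cast; linarith [hcI.2]
  have hupp : (k : ℝ) < (⌊p / (2 * π)⌋ + 5 : ℤ) := by push_cast; linarith [hcI.1]
  rw [Int.cast_le] at hlow
  rw [Int.cast_lt] at hupp
  exact Finset.mem_Icc.2 ⟨hlow, by omega⟩

lemma volume_ball_inter_dE_lt_le (hξ : ξ ∈ Ioo (0 : ℝ) (1 / 2)) {p R s : ℝ} (hR : 0 < R)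
    (hR2 : R ≤ 2 * π) (hs : 0 < s) :
    volume (ball p R ∩ {θ | dE (gCantorSet fun _ => ξ) (cpt θ) < s}) ≤
      ENNReal.ofReal (324 * π / (ξ * (1 - 2 * ξ)) *
        (R ^ cantorDim ξ * s ^ (1 - cantorDim ξ))) := by
  obtain ⟨hd0, hd1⟩ := cantorDim_mem_Ioo hξ
  have hξ' : ξ ∈ Ico (0 : ℝ) 1 := ⟨hξ.1.le, by linarith [hξ.2]⟩
  have hgap : 0 < ξ * (1 - 2 * ξ) := mul_pos hξ.1 (by linarith [hξ.2])
  rcases le_or_gt R s with hRs | hRs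
  · refine volume_ball_inter_le_of_le _ hd1.le ?_ hR hRs
    rw [le_div_iff₀ hgap]
    nlinarith [hξ.1, hξ.2, pi_gt_three]
  have hpiece (k : ℤ) : volume ((fun θ => (θ - 2 * π * k) / (2 * π)) ⁻¹'
      (ball ((p - 2 * π * k) / (2 * π)) (R / (2 * π)) ∩
        thickening (s / 4) (linearCantorSet ξ))) ≤
      ENNReal.ofReal (2 * π * (18 / (ξ * (1 - 2 * ξ)) *
        (R ^ cantorDim ξ * s ^ (1 - cantorDim ξ)))) := by
    rw [volume_preimage_sub_div two_pi_pos]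
    grw [(isSelfSimilar_linearCantorSet hξ').volume_ball_inter_thickening_le hξ _
      (by positivity) (by positivity), ← ENNReal.ofReal_mul (by positivity)]
    have _ : 0 ≤ 1 - cantorDim ξ := by linarith
    gcongr
    · exact div_le_self hR.le (by linarith [pi_gt_three])
    · linarith
  grw [ball_inter_dE_lt_subset hξ' hR2 (hRs.le.trans hR2), measure_biUnion_finset_le,
    Finset.sum_le_card_nsmul _ _ _ fun k _ => hpiece k]
  rw [Int.card_Icc, nsmul_eq_mul, show ⌊p / (2 * π)⌋ + 4 + 1 - (⌊p / (2 * π)⌋ - 4) = 9 by ring,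
    ← ENNReal.ofReal_natCast, ← ENNReal.ofReal_mul (by positivity)]
  refine (congrArg ENNReal.ofReal ?_).le
  rw [show Int.toNat 9 = 9 from rfl]
  push_cast
  ring

lemma isRegularDist_dE_gCantorSet (hξ : ξ ∈ Ioo (0 : ℝ) (1 / 2)) :
    IsRegularDist (fun θ => dE (gCantorSet fun _ => ξ) (cpt θ)) (cantorDim ξ)
      (324 * π / (ξ * (1 - 2 * ξ))) where
  dim_pos := (cantorDim_mem_Ioo hξ).1
  dim_lt_one := (cantorDim_mem_Ioo hξ).2
  const_pos := div_pos (by positivity) (mul_pos hξ.1 (by linarith [hξ.2]))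
  nonneg _ := infDist_nonneg
  le_two θ := by
    obtain ⟨z, hz⟩ := gCantorSet_const_nonempty (ξ := ξ) ⟨hξ.1.le, by linarith [hξ.2]⟩
    have hz1 : ‖z‖ = 1 := by
      rw [gCantorSet_const] at hz
      obtain ⟨x, -, rfl⟩ := hz
      exact norm_cpt _
    grw [dE, infDist_le_dist_of_mem hz, dist_eq_norm, norm_sub_le, norm_cpt, hz1]
    norm_num
  le_add_abs θ θ' := by
    grw [dE, infDist_le_infDist_add_dist (y := cpt θ'), dist_eq_norm, norm_cpt_sub_le, dE]
  volume_le _ _ _ := volume_ball_inter_dE_lt_le hξ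

lemma dE_gCantorSet_of_isGap (hξ : ξ ∈ Ico (0 : ℝ) 1) {a L u : ℝ}
    (h : IsGap (linearCantorSet ξ) a L) (hu : 0 ≤ u) (huL : u ≤ π * L) :
    dE (gCantorSet fun _ => ξ) (cpt (2 * π * a + u)) = 2 * sin (u / 2) := by
  have hsub := (isSelfSimilar_linearCantorSet hξ).subset_Icc
  obtain ⟨ha0, -⟩ := hsub h.1
  have haL : π * (a + L) ≤ π * 1 := mul_le_mul_of_nonneg_left (hsub h.2.1).2 pi_pos.le
  have hpia : 0 ≤ π * a := mul_nonneg pi_pos.le ha0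
  apply le_antisymm
  · grw [dE, infDist_le_dist_of_mem (cpt_mem_gCantorSet h.1), dist_eq_norm, norm_cpt_sub,
      add_sub_cancel_left, abs_of_nonneg (sin_nonneg_of_nonneg_of_le_pi _ _)] <;> linarith
  · refine (le_infDist (gCantorSet_const_nonempty hξ)).2 fun z hz => ?_
    rw [gCantorSet_const] at hz
    obtain ⟨c, hc, rfl⟩ := hz
    have hc0 : 0 ≤ π * c := mul_nonneg pi_pos.le (hsub hc).1
    have hc1 : π * c ≤ π * 1 := mul_le_mul_of_nonneg_left (hsub hc).2 pi_pos.le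
    rw [dist_eq_norm]
    rcases h.2.2 c hc with hca | hca
    · have hpic : π * c ≤ π * a := mul_le_mul_of_nonneg_left hca pi_pos.le
      grw [norm_cpt_sub, ← le_abs_self, sin_le_sin_of_le_of_le_pi_sub] <;> linarith
    · have hpic : π * (a + L) ≤ π * c := mul_le_mul_of_nonneg_left hca pi_pos.le
      grw [norm_sub_rev, norm_cpt_sub, ← le_abs_self, sin_le_sin_of_le_of_le_pi_sub] <;>
        linarith

end CircleCantor

/-! ### Regular weights -/

/-- The weights `ω` for which the distance function `f_{ω,E}` is studied: positive, increasing,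
concave, differentiable, and with increasing logarithmic slope `t ω'(t) / ω(t)`. -/
structure IsRegularWeight (ω : ℝ → ℝ) : Prop where
  pos : ∀ t ∈ Ioo 0 π, 0 < ω t
  differentiableAt : ∀ t ∈ Ioo 0 π, DifferentiableAt ℝ ω t
  monotoneOn : MonotoneOn ω (Ioo 0 π)
  concaveOn : ConcaveOn ℝ (Ioo 0 π) ω
  monotoneOn_slope : MonotoneOn (fun t => t * deriv ω t / ω t) (Ioo 0 π)

section RegularWeight

variable {ω ω' : ℝ → ℝ} {γ α : ℝ}

lemma concaveOn_of_concaveOn_comp_rpow {b : ℝ} (hγ : 1 ≤ γ) (hω : MonotoneOn ω (Ioc 0 b))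
    (h : ConcaveOn ℝ (Ioc 0 (b ^ γ⁻¹)) fun t => ω (t ^ γ)) : ConcaveOn ℝ (Ioc 0 b) ω := by
  have hγ0 : 0 < γ := by linarith
  have hinv (t : ℝ) (ht : 0 < t) : (t ^ γ⁻¹) ^ γ = t := rpow_inv_rpow ht.le hγ0.ne'
  have hmaps (t : ℝ) (ht : t ∈ Ioc 0 b) : t ^ γ⁻¹ ∈ Ioc 0 (b ^ γ⁻¹) :=
    ⟨rpow_pos_of_pos ht.1 _, rpow_le_rpow ht.1.le ht.2 (by positivity)⟩
  have hroot : ConcaveOn ℝ (Ioc 0 b) fun t : ℝ => t ^ γ⁻¹ :=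
    (Real.concaveOn_rpow (by positivity) (inv_le_one_of_one_le₀ hγ)).subset
      (Ioc_subset_Ioi_self.trans Ioi_subset_Ici_self) (convex_Ioc 0 b)
  refine ⟨convex_Ioc 0 b, fun s hs t ht a c ha hc hac => ?_⟩
  have hmem := convex_Ioc 0 b hs ht ha hc hac
  have hmem' := convex_Ioc 0 (b ^ γ⁻¹) (hmaps s hs) (hmaps t ht) ha hc hac
  have hpow : (a • s ^ γ⁻¹ + c • t ^ γ⁻¹) ^ γ ≤ a • s + c • t :=
    (rpow_le_rpow hmem'.1.le (hroot.2 hs ht ha hc hac) hγ0.le).trans_eq (hinv _ hmem.1)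
  have hconc := h.2 (hmaps s hs) (hmaps t ht) ha hc hac
  simp only [hinv s hs.1, hinv t ht.1] at hconc
  exact hconc.trans (hω ⟨rpow_pos_of_pos hmem'.1 _, hpow.trans hmem.2⟩ hmem hpow)

lemma eqOn_deriv_of_omegaHyp (h : OmegaHyp ω ω' γ) : EqOn (deriv ω) ω' (Ioo 0 π) :=
  fun t ht => (h.2.2.2.1 t ht).deriv

lemma isRegularWeight_of_omegaHyp (hγ : 1 ≤ γ) (h : OmegaHyp ω ω' γ) : IsRegularWeight ω where
  pos t ht := h.2.1 t (Ioo_subset_Ioc_self ht)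
  differentiableAt t ht := (h.2.2.2.1 t ht).differentiableAt
  monotoneOn := h.2.2.1.mono Ioo_subset_Ioc_self
  concaveOn := (concaveOn_of_concaveOn_comp_rpow hγ h.2.2.1 h.2.2.2.2.1).subset
    Ioo_subset_Ioc_self (convex_Ioo 0 π)
  monotoneOn_slope := h.2.2.2.2.2.congr fun t ht => by
    simp only [eqOn_deriv_of_omegaHyp h ht]

lemma isRegularWeight_rpow (hα : α ∈ Ioc (0 : ℝ) 1) : IsRegularWeight fun t => t ^ α where
  pos t ht := rpow_pos_of_pos ht.1 _
  differentiableAt t ht := differentiableAt_rpow_const_of_ne α ht.1.ne'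
  monotoneOn := fun s hs t _ hst => rpow_le_rpow hs.1.le hst hα.1.le
  concaveOn := (Real.concaveOn_rpow hα.1.le hα.2).subset
    (Ioo_subset_Ioi_self.trans Ioi_subset_Ici_self) (convex_Ioo 0 π)
  monotoneOn_slope := (monotone_const (c := α)).monotoneOn (Ioo 0 π) |>.congr fun t ht => by
    have hpow : t ^ α ≠ 0 := (rpow_pos_of_pos ht.1 α).ne'
    rw [Real.deriv_rpow_const, rpow_sub_one ht.1.ne']
    have := ht.1.ne'
    field_simp

namespace IsRegularWeight

variable {s t : ℝ}

lemma deriv_nonneg (h : IsRegularWeight ω) (ht : t ∈ Ioo 0 π) : 0 ≤ deriv ω t := by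
  rw [← derivWithin_of_isOpen isOpen_Ioo ht]
  exact h.monotoneOn.derivWithin_nonneg

lemma antitoneOn_deriv (h : IsRegularWeight ω) : AntitoneOn (deriv ω) (Ioo 0 π) :=
  h.concaveOn.antitoneOn_deriv h.differentiableAt

lemma sub_le_deriv_mul (h : IsRegularWeight ω) (hs : 0 < s) (hst : s ≤ t) (ht : t < π) :
    ω t - ω s ≤ deriv ω s * (t - s) := by
  rcases hst.eq_or_lt with rfl | hst
  · simp
  have hsπ : s ∈ Ioo 0 π := ⟨hs, hst.trans ht⟩
  have hslope := h.concaveOn.slope_le_deriv hsπ ⟨hs.trans hst, ht⟩ hst (h.differentiableAt s hsπ)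
  rwa [slope_def_field, div_le_iff₀ (sub_pos.2 hst)] at hslope

lemma deriv_mul_le_sub (h : IsRegularWeight ω) (hs : 0 < s) (hst : s ≤ t) (ht : t < π) :
    deriv ω t * (t - s) ≤ ω t - ω s := by
  rcases hst.eq_or_lt with rfl | hst
  · simp
  have htπ : t ∈ Ioo 0 π := ⟨hs.trans hst, ht⟩
  have hslope := h.concaveOn.deriv_le_slope ⟨hs, hst.trans ht⟩ htπ hst (h.differentiableAt t htπ)
  rwa [slope_def_field, le_div_iff₀ (sub_pos.2 hst)] at hslope

lemma deriv_mul_self_le (h : IsRegularWeight ω) (ht : t ∈ Ioo 0 π) : deriv ω t * t ≤ ω t := by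
  have hlim : Tendsto (fun s => deriv ω t * (t - s)) (𝓝[>] 0) (𝓝 (deriv ω t * (t - 0))) :=
    Tendsto.mono_left (Continuous.tendsto (by fun_prop) _) nhdsWithin_le_nhds
  rw [sub_zero] at hlim
  refine le_of_tendsto hlim ?_
  filter_upwards [Ioo_mem_nhdsGT ht.1] with s hs
  linarith [h.deriv_mul_le_sub hs.1 hs.2.le ht.2, h.pos s ⟨hs.1, hs.2.trans ht.2⟩]

lemma le_mul_div (h : IsRegularWeight ω) (hs : 0 < s) (hst : s ≤ t) (ht : t < π) :
    ω t ≤ ω s * (t / s) := by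
  have hderiv : deriv ω s ≤ ω s / s := by
    rw [le_div_iff₀ hs]
    exact h.deriv_mul_self_le ⟨hs, hst.trans_lt ht⟩
  calc ω t ≤ deriv ω s * (t - s) + ω s := by linarith [h.sub_le_deriv_mul hs hst ht]
    _ ≤ ω s / s * (t - s) + ω s := by gcongr
    _ = ω s * (t / s) := by field_simp; ring

lemma log_sub_log_le (h : IsRegularWeight ω) (hs : 0 < s) (hst : s ≤ t) (ht : t < π) :
    log (ω t) - log (ω s) ≤ t * deriv ω t / ω t * log (t / s) := by
  set A := t * deriv ω t / ω t
  have hsub : Icc s t ⊆ Ioo 0 π := fun x hx => ⟨hs.trans_le hx.1, hx.2.trans_lt ht⟩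
  have hderiv (u : ℝ) (hu : u ∈ Ioo 0 π) : HasDerivAt (fun u => A * log u - log (ω u))
      ((A - u * deriv ω u / ω u) / u) u := by
    have hu0 := hu.1.ne'
    refine (((hasDerivAt_log hu0).const_mul A).sub
      ((h.differentiableAt u hu).hasDerivAt.log (h.pos u hu).ne')).congr_deriv ?_
    field_simp
  have hmono : MonotoneOn (fun u => A * log u - log (ω u)) (Icc s t) := by
    refine monotoneOn_of_deriv_nonneg (convex_Icc s t)
      (fun x hx => (hderiv x (hsub hx)).continuousAt.continuousWithinAt)
      (fun x hx => (hderiv x (hsub (interior_subset hx))).differentiableAt.differentiableWithinAt)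
      fun x hx => ?_
    have hxst := interior_subset hx
    rw [(hderiv x (hsub hxst)).deriv]
    exact div_nonneg (sub_nonneg.2 (h.monotoneOn_slope (hsub hxst) (hsub ⟨hst, le_rfl⟩) hxst.2))
      (hsub hxst).1.le
  have hst' := hmono ⟨le_rfl, hst⟩ ⟨hst, le_rfl⟩ hst
  rw [log_div (hs.trans_le hst).ne' hs.ne', mul_sub]
  linarith

lemma mul_log_sub_log_le (h : IsRegularWeight ω) (hs : 0 < s) (hst : s ≤ t) (ht : t < π) :
    ω t * (log (ω t) - log (ω s)) ≤ t * deriv ω t * log (t / s) := by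
  have hωt := h.pos t ⟨hs.trans_le hst, ht⟩
  calc ω t * (log (ω t) - log (ω s)) ≤ ω t * (t * deriv ω t / ω t * log (t / s)) := by
        gcongr
        exact h.log_sub_log_le hs hst ht
    _ = t * deriv ω t * log (t / s) := by field_simp

lemma add_sub_le_of_deriv_le_rpow (h : IsRegularWeight ω) {A x : ℝ} (ht : 0 < t) (hx : 0 ≤ x)
    (htx : t + x ≤ 2) (hA0 : 0 ≤ A) (hA : ∀ u ∈ Icc t 2, deriv ω u ≤ A * u ^ (-(1 / 4) : ℝ)) :
    ω (t + x) - ω t ≤ 4 / 3 * A * x ^ (3 / 4 : ℝ) := by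
  have hsub : Icc t (t + x) ⊆ Ioo 0 π := fun u hu =>
    ⟨ht.trans_le hu.1, by linarith [hu.2, pi_gt_three]⟩
  have hderiv (u : ℝ) (hu : u ∈ Ioo t (t + x)) :
      HasDerivAt (fun u => 4 / 3 * A * (u - t) ^ (3 / 4 : ℝ) - ω u)
        (A * (u - t) ^ (-(1 / 4) : ℝ) - deriv ω u) u := by
    have hpow := ((hasDerivAt_id u).sub_const t).rpow_const (p := (3 / 4 : ℝ))
      (.inl (sub_ne_zero.2 hu.1.ne'))
    refine ((hpow.const_mul (4 / 3 * A)).sub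
      (h.differentiableAt u (hsub (Ioo_subset_Icc_self hu))).hasDerivAt).congr_deriv ?_
    norm_num
    ring
  have hmono : MonotoneOn (fun u => 4 / 3 * A * (u - t) ^ (3 / 4 : ℝ) - ω u) (Icc t (t + x)) := by
    refine monotoneOn_of_deriv_nonneg (convex_Icc _ _) ?_ ?_ ?_ <;> (try rw [interior_Icc])
    · refine .sub (.mul continuousOn_const (.rpow_const (by fun_prop) fun _ _ => .inr ?_))
        fun u hu => (h.differentiableAt u (hsub hu)).continuousAt.continuousWithinAt
      norm_num
    · exact fun u hu => (hderiv u hu).differentiableAt.differentiableWithinAt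
    · intro u hu
      rw [(hderiv u hu).deriv, sub_nonneg]
      grw [hA u ⟨hu.1.le, by linarith [hu.2]⟩]
      gcongr ?_ * ?_
      exact rpow_le_rpow_of_nonpos (sub_pos.2 hu.1) (sub_le_self u ht.le) (by norm_num)
  have hle := hmono ⟨le_rfl, by linarith⟩ ⟨by linarith, le_rfl⟩ (le_add_of_nonneg_right hx)
  simp only [sub_self, add_sub_cancel_left, zero_rpow (by norm_num : (3 / 4 : ℝ) ≠ 0)] at hle
  linarith

end IsRegularWeight

/-- The energy `∫ u ^ (-1/2) ω'(u) ^ 2 du` of the weight `ω` over distances `u > t / 2`; it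
controls the size of the outer function near points at distance `t` from `E`. -/
noncomputable def tailEnergy (ω : ℝ → ℝ) (t : ℝ) : ℝ≥0∞ :=
  ∫⁻ u in Ioo (t / 2) 2, ENNReal.ofReal (u ^ (-(1 / 2) : ℝ) * deriv ω u ^ 2)

lemma IsRegularWeight.rpow_mul_deriv_sq_le (h : IsRegularWeight ω) {s t : ℝ} (hs : 0 < s)
    (hst : s ≤ t) (ht : t ≤ 2) :
    t ^ (-(1 / 2) : ℝ) * deriv ω t ^ 2 ≤ s ^ (-(1 / 2) : ℝ) * deriv ω s ^ 2 := by
  have htπ : t ∈ Ioo 0 π := ⟨hs.trans_le hst, by linarith [pi_gt_three]⟩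
  have hanti := h.antitoneOn_deriv ⟨hs, hst.trans_lt htπ.2⟩ htπ hst
  have hnonneg := h.deriv_nonneg htπ
  gcongr ?_ * ?_ ^ 2
  exact rpow_le_rpow_of_nonpos hs hst (by norm_num)

lemma tailEnergy_lt_top (h : IsRegularWeight ω) {t : ℝ} (ht : 0 < t) : tailEnergy ω t < ∞ := by
  calc tailEnergy ω t ≤ ∫⁻ _ in Ioo (t / 2) 2,
        ENNReal.ofReal ((t / 2) ^ (-(1 / 2) : ℝ) * deriv ω (t / 2) ^ 2) :=
        setLIntegral_mono' measurableSet_Ioo fun u hu =>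
          ENNReal.ofReal_le_ofReal (h.rpow_mul_deriv_sq_le (half_pos ht) hu.1.le hu.2.le)
    _ < ∞ := by
        rw [setLIntegral_const, Real.volume_Ioo]
        exact ENNReal.mul_lt_top ENNReal.ofReal_lt_top ENNReal.ofReal_lt_top

lemma rpow_mul_deriv_sq_le_tailEnergy (h : IsRegularWeight ω) {s t : ℝ} (ht : 0 < t) (hts : t ≤ s)
    (hs : s ≤ 2) :
    ENNReal.ofReal (s ^ (1 / 2 : ℝ) * deriv ω s ^ 2) ≤ 2 * tailEnergy ω t := by
  have hs0 : 0 < s := ht.trans_le hts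
  have hpow : s ^ (1 / 2 : ℝ) = s ^ (-(1 / 2) : ℝ) * s := by
    rw [← rpow_add_one hs0.ne']
    norm_num
  calc ENNReal.ofReal (s ^ (1 / 2 : ℝ) * deriv ω s ^ 2)
      = 2 * ∫⁻ _ in Ioo (s / 2) s, ENNReal.ofReal (s ^ (-(1 / 2) : ℝ) * deriv ω s ^ 2) := by
        rw [setLIntegral_const, Real.volume_Ioo, sub_half, ← ENNReal.ofReal_mul' (by linarith),
          ← ENNReal.ofReal_ofNat 2, ← ENNReal.ofReal_mul zero_le_two, hpow]
        ring_nf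
    _ ≤ 2 * ∫⁻ u in Ioo (s / 2) s, ENNReal.ofReal (u ^ (-(1 / 2) : ℝ) * deriv ω u ^ 2) := by
        gcongr 2 * ?_
        exact setLIntegral_mono' measurableSet_Ioo fun u hu => ENNReal.ofReal_le_ofReal
          (h.rpow_mul_deriv_sq_le (by linarith [hu.1]) hu.2.le hs)
    _ ≤ 2 * tailEnergy ω t := by
        gcongr 2 * ?_
        exact lintegral_mono_set (Ioo_subset_Ioo (by linarith) hs)

/-- The square root of twice the tail energy: the least constant for which concavity bounds
`ω'(s)` by `tailRoot ω t * s ^ (-1/4)` on `[t, 2]`. -/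
noncomputable def tailRoot (ω : ℝ → ℝ) (t : ℝ) : ℝ := √(2 * (tailEnergy ω t).toReal)

lemma tailRoot_nonneg (ω : ℝ → ℝ) (t : ℝ) : 0 ≤ tailRoot ω t := sqrt_nonneg _

lemma ofReal_tailRoot_sq (h : IsRegularWeight ω) {t : ℝ} (ht : 0 < t) :
    ENNReal.ofReal (tailRoot ω t ^ 2) = 2 * tailEnergy ω t := by
  rw [tailRoot, sq_sqrt (by positivity), ENNReal.ofReal_mul zero_le_two,
    ENNReal.ofReal_toReal (tailEnergy_lt_top h ht).ne, ENNReal.ofReal_ofNat]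

lemma deriv_le_tailRoot_mul_rpow (h : IsRegularWeight ω) {s t : ℝ} (ht : 0 < t)
    (hs : s ∈ Icc t 2) : deriv ω s ≤ tailRoot ω t * s ^ (-(1 / 4) : ℝ) := by
  have hs0 : 0 < s := ht.trans_le hs.1
  have hle := rpow_mul_deriv_sq_le_tailEnergy h ht hs.1 hs.2
  rw [← ofReal_tailRoot_sq h ht, ENNReal.ofReal_le_ofReal_iff (sq_nonneg _)] at hle
  have hpow : s ^ (1 / 2 : ℝ) = (s ^ (1 / 4 : ℝ)) ^ 2 := by
    rw [← rpow_natCast, ← rpow_mul hs0.le]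
    norm_num
  rw [hpow, ← mul_pow] at hle
  rw [rpow_neg hs0.le, ← div_eq_mul_inv, le_div_iff₀ (by positivity), mul_comm]
  exact le_of_abs_le (abs_le_of_sq_le_sq hle (tailRoot_nonneg _ _))

end RegularWeight

/-! ### Power and logarithmic kernels -/

lemma lintegral_lintegral_inter_Ioi {X : Type*} [MeasurableSpace X] {μ : Measure X} [SFinite μ]
    {g : X → ℝ} {F : ℝ → ℝ≥0∞} (hg : Measurable g) (hF : Measurable F) (S : Set ℝ) :
    ∫⁻ x, (∫⁻ s in S ∩ Ioi (g x), F s) ∂μ = ∫⁻ s in S, F s * μ {x | g x < s} := by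
  have hmeas : Measurable fun q : X × ℝ => {q : X × ℝ | g q.1 < q.2}.indicator (fun q => F q.2) q :=
    (hF.comp measurable_snd).indicator
      (measurableSet_lt (hg.comp measurable_fst) measurable_snd)
  calc ∫⁻ x, (∫⁻ s in S ∩ Ioi (g x), F s) ∂μ
      = ∫⁻ x, (∫⁻ s in S, (Ioi (g x)).indicator F s) ∂μ := by
        simp_rw [setLIntegral_indicator measurableSet_Ioi, inter_comm]
    _ = ∫⁻ s in S, ∫⁻ x, (Ioi (g x)).indicator F s ∂μ :=
        lintegral_lintegral_swap hmeas.aemeasurable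
    _ = ∫⁻ s in S, ∫⁻ x, {x | g x < s}.indicator (fun _ => F s) x ∂μ := rfl
    _ = ∫⁻ s in S, F s * μ {x | g x < s} := by
        simp_rw [lintegral_indicator_const (measurableSet_lt hg measurable_const)]

lemma lintegral_Ioi_rpow {p c : ℝ} (hp : p < -1) (hc : 0 < c) :
    ∫⁻ s in Ioi c, ENNReal.ofReal (s ^ p) = ENNReal.ofReal (-c ^ (p + 1) / (p + 1)) := by
  rw [← integral_Ioi_rpow_of_lt hp hc,
    ofReal_integral_eq_lintegral_ofReal (integrableOn_Ioi_rpow_of_lt hp hc)]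
  filter_upwards [ae_restrict_mem measurableSet_Ioi] with s hs using rpow_nonneg (hc.trans hs).le p

lemma lintegral_Ioo_rpow {p c : ℝ} (hp : -1 < p) (hc : 0 ≤ c) :
    ∫⁻ s in Ioo 0 c, ENNReal.ofReal (s ^ p) = ENNReal.ofReal (c ^ (p + 1) / (p + 1)) := by
  rw [setLIntegral_congr Ioo_ae_eq_Ioc, ← ofReal_integral_eq_lintegral_ofReal]
  · rw [← intervalIntegral.integral_of_le hc, integral_rpow (.inl hp), zero_rpow (by linarith),
      sub_zero]
  · exact (intervalIntegral.intervalIntegrable_rpow' hp).1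
  · filter_upwards [ae_restrict_mem measurableSet_Ioc] with s hs using rpow_nonneg hs.1.le p

lemma lintegral_Ioo_inv {a b : ℝ} (ha : 0 < a) (hab : a ≤ b) :
    ∫⁻ s in Ioo a b, ENNReal.ofReal s⁻¹ = ENNReal.ofReal (log (b / a)) := by
  rw [setLIntegral_congr Ioo_ae_eq_Ioc, ← ofReal_integral_eq_lintegral_ofReal]
  · rw [← intervalIntegral.integral_of_le hab, integral_inv_of_pos ha (ha.trans_le hab)]
  · rw [← IntegrableOn, ← intervalIntegrable_iff_integrableOn_Ioc_of_le hab]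
    refine intervalIntegral.intervalIntegrable_inv (fun s hs => ?_) continuousOn_id
    rw [uIcc_of_le hab] at hs
    exact (ha.trans_le hs.1).ne'
  · filter_upwards [ae_restrict_mem measurableSet_Ioc] with s hs
    exact inv_nonneg.2 (ha.trans hs.1).le

lemma lintegral_add_dist_rpow_le {X : Type*} [PseudoMetricSpace X] [MeasurableSpace X]
    [OpensMeasurableSpace X] {ν : Measure X} [SFinite ν] {x₀ : X} {M d p y : ℝ} (hM : 0 ≤ M)
    (hd : 0 ≤ d) (hdp : d < p) (hy : 0 < y)
    (hν : ∀ R, 0 < R → ν (ball x₀ R) ≤ ENNReal.ofReal (M * R ^ d)) :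
    ∫⁻ x, ENNReal.ofReal ((y + dist x x₀) ^ (-p)) ∂ν ≤
      ENNReal.ofReal (M * (p / (p - d)) * y ^ (-(p - d))) := by
  have hp : 0 < p := hd.trans_lt hdp
  have hkernel (x : X) : ENNReal.ofReal ((y + dist x x₀) ^ (-p)) =
      ∫⁻ s in Ioi y ∩ Ioi (y + dist x x₀), ENNReal.ofReal (p * s ^ (-p - 1)) := by
    rw [Ioi_inter_Ioi, sup_eq_right.2 (le_add_of_nonneg_right dist_nonneg)]
    simp_rw [ENNReal.ofReal_mul hp.le]
    rw [lintegral_const_mul _ (by fun_prop), lintegral_Ioi_rpow (by linarith) (by positivity),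
      ← ENNReal.ofReal_mul hp.le, sub_add_cancel, neg_div_neg_eq, mul_div_cancel₀ _ hp.ne']
  have hball (s : ℝ) (hs : y < s) : ν {x | y + dist x x₀ < s} ≤ ENNReal.ofReal (M * s ^ d) := by
    calc ν {x | y + dist x x₀ < s} ≤ ν (ball x₀ (s - y)) :=
          measure_mono fun x hx => mem_ball.2 (lt_sub_iff_add_lt'.2 hx)
      _ ≤ ENNReal.ofReal (M * (s - y) ^ d) := hν _ (sub_pos.2 hs)
      _ ≤ ENNReal.ofReal (M * s ^ d) := by
          gcongr
          exact sub_le_self s hy.le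
  calc ∫⁻ x, ENNReal.ofReal ((y + dist x x₀) ^ (-p)) ∂ν
      = ∫⁻ s in Ioi y, ENNReal.ofReal (p * s ^ (-p - 1)) * ν {x | y + dist x x₀ < s} := by
        simp_rw [hkernel]
        exact lintegral_lintegral_inter_Ioi (by fun_prop) (by fun_prop) _
    _ ≤ ∫⁻ s in Ioi y, ENNReal.ofReal (M * p) * ENNReal.ofReal (s ^ (-(p - d) - 1)) := by
        refine setLIntegral_mono' measurableSet_Ioi fun s hs => ?_
        have hs0 : 0 < s := hy.trans hs
        grw [hball s hs]
        rw [← ENNReal.ofReal_mul (by positivity), ← ENNReal.ofReal_mul (by positivity),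
          show -(p - d) - 1 = -p - 1 + d by ring, rpow_add hs0]
        exact ENNReal.ofReal_le_ofReal (by linarith)
    _ = ENNReal.ofReal (M * (p / (p - d)) * y ^ (-(p - d))) := by
        rw [lintegral_const_mul _ (by fun_prop), lintegral_Ioi_rpow (by linarith) hy,
          ← ENNReal.ofReal_mul (by positivity), sub_add_cancel, neg_div_neg_eq]
        congr 1
        ring

lemma setLIntegral_add_abs_rpow_le {q y : ℝ} (hq : 0 < q) (hy : 0 < y) (θ₀ : ℝ) (S : Set ℝ) :
    ∫⁻ θ in S, ENNReal.ofReal ((y + |θ - θ₀|) ^ (-(1 + q))) ≤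
      ENNReal.ofReal (2 * ((1 + q) / q) * y ^ (-q)) := by
  have hle := lintegral_add_dist_rpow_le (ν := volume) (x₀ := θ₀) (M := 2) (d := 1) (p := 1 + q)
    zero_le_two zero_le_one (by linarith) hy
    fun R _ => by rw [Real.volume_ball, rpow_one]
  rw [add_sub_cancel_left] at hle
  exact (setLIntegral_le_lintegral _ _).trans hle

/-- The half-open period of `cpt` centred at `θ₀`, used as the domain of integration when `θ₀` is
the argument of the point under study, so that `|θ - θ₀|` is comparable to the chord. -/
abbrev period (θ₀ : ℝ) : Set ℝ := Ioc (θ₀ - π) (θ₀ + π)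

lemma abs_sub_le_of_mem_period {θ θ₀ : ℝ} (h : θ ∈ period θ₀) : |θ - θ₀| ≤ π :=
  abs_le.2 ⟨by linarith [h.1], by linarith [h.2]⟩

namespace IsRegularDist

variable {δ : ℝ → ℝ} {d K : ℝ}

lemma ae_pos (h : IsRegularDist δ d K) : ∀ᵐ θ, 0 < δ θ := by
  have hlim : Tendsto (fun s : ℝ => ENNReal.ofReal (K * (1 ^ d * s ^ (1 - d)))) (𝓝[>] 0) (𝓝 0) := by
    have hd := h.dim_lt_one
    have hcont : ContinuousAt (fun s : ℝ => ENNReal.ofReal (K * (1 ^ d * s ^ (1 - d)))) 0 := by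
      exact ENNReal.continuous_ofReal.continuousAt.comp <| continuousAt_const.mul <|
        continuousAt_const.mul <| continuousAt_rpow_const 0 (1 - d) (.inr (by linarith))
    have h0 := hcont.tendsto
    rw [zero_rpow (by linarith), mul_zero, mul_zero, ENNReal.ofReal_zero] at h0
    exact h0.mono_left nhdsWithin_le_nhds
  have hnull (n : ℤ) : volume (ball (n : ℝ) 1 ∩ {θ | δ θ = 0}) = 0 := by
    refine le_antisymm (ge_of_tendsto hlim ?_) zero_le
    filter_upwards [self_mem_nhdsWithin] with s hs
    refine (measure_mono ?_).trans (h.volume_le n 1 s one_pos (by linarith [pi_gt_three]) hs)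
    exact inter_subset_inter_right _ fun θ hθ => (hθ : δ θ = 0).trans_lt hs
  rw [ae_iff]
  refine measure_mono_null (fun θ hθ => ?_) (measure_iUnion_null hnull)
  refine mem_iUnion.2 ⟨⌊θ⌋, ?_, ?_⟩
  · rw [mem_ball, Real.dist_eq, abs_lt]
    exact ⟨by linarith [Int.floor_le θ], by linarith [Int.lt_floor_add_one θ]⟩
  · exact le_antisymm (not_lt.1 hθ) (h.nonneg θ)

lemma setLIntegral_ball_log_le (h : IsRegularDist δ d K) {p R t : ℝ} (hR : 0 < R)
    (hRπ : R ≤ 2 * π) (ht : 0 < t) :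
    ∫⁻ θ in ball p R, ENNReal.ofReal (log (t / δ θ)) ≤
      ENNReal.ofReal (K / (1 - d) * t ^ (1 - d) * R ^ d) := by
  have hd := h.dim_lt_one
  have hK := h.const_pos
  have hδ := h.continuous.measurable
  have hlog (θ : ℝ) : ENNReal.ofReal (log (t / δ θ)) ≤
      ∫⁻ s in Ioo 0 t ∩ Ioi (δ θ), ENNReal.ofReal s⁻¹ := by
    rcases (h.nonneg θ).eq_or_lt with h0 | h0
    · simp [← h0]
    rcases le_total t (δ θ) with hle | hle
    · simp [ENNReal.ofReal_of_nonpos (log_nonpos (by positivity) ((div_le_one h0).2 hle))]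
    · rw [Ioo_inter_Ioi, sup_eq_right.2 h0.le, lintegral_Ioo_inv h0 hle]
  calc ∫⁻ θ in ball p R, ENNReal.ofReal (log (t / δ θ))
      ≤ ∫⁻ θ in ball p R, ∫⁻ s in Ioo 0 t ∩ Ioi (δ θ), ENNReal.ofReal s⁻¹ := lintegral_mono hlog
    _ = ∫⁻ s in Ioo 0 t, ENNReal.ofReal s⁻¹ * volume.restrict (ball p R) {θ | δ θ < s} :=
        lintegral_lintegral_inter_Ioi hδ (by fun_prop) _
    _ ≤ ∫⁻ s in Ioo 0 t, ENNReal.ofReal (K * R ^ d) * ENNReal.ofReal (s ^ (-d)) := by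
        refine setLIntegral_mono' measurableSet_Ioo fun s hs => ?_
        rw [Measure.restrict_apply (measurableSet_lt hδ measurable_const), inter_comm]
        grw [h.volume_le p R s hR hRπ hs.1]
        rw [← ENNReal.ofReal_mul (inv_nonneg.2 hs.1.le), ← ENNReal.ofReal_mul (by positivity),
          sub_eq_neg_add, rpow_add_one hs.1.ne']
        have hs0 := hs.1.ne'
        refine (congrArg _ ?_).le
        field_simp
    _ = ENNReal.ofReal (K / (1 - d) * t ^ (1 - d) * R ^ d) := by
        rw [lintegral_const_mul _ (by fun_prop), lintegral_Ioo_rpow (by linarith) ht.le,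
          ← ENNReal.ofReal_mul (by positivity), neg_add_eq_sub]
        congr 1
        ring

lemma setLIntegral_period_log_mul_rpow_le (h : IsRegularDist δ d K) {θ₀ t : ℝ} (ht : 0 < t) :
    ∫⁻ θ in period θ₀, ENNReal.ofReal (log (t / δ θ)) *
        ENNReal.ofReal ((t + |θ - θ₀|) ^ (-2 : ℝ)) ≤
      ENNReal.ofReal (K / (1 - d) * (2 / (2 - d)) / t) := by
  have hd := h.dim_lt_one
  have hd0 := h.dim_pos
  have _ : 0 < 1 - d := sub_pos.2 hd
  have hK := h.const_pos
  have hδ := h.continuous.measurable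
  have hlog : Measurable fun θ => ENNReal.ofReal (log (t / δ θ)) := by fun_prop
  set ν := (volume.restrict (period θ₀)).withDensity fun θ => ENNReal.ofReal (log (t / δ θ))
    with hν
  have hgrowth (R : ℝ) (hR : 0 < R) :
      ν (ball θ₀ R) ≤ ENNReal.ofReal (K / (1 - d) * t ^ (1 - d) * R ^ d) := by
    rw [hν, withDensity_apply _ measurableSet_ball, Measure.restrict_restrict measurableSet_ball]
    calc _ ≤ ∫⁻ θ in ball θ₀ (min R (2 * π)), ENNReal.ofReal (log (t / δ θ)) := by
          refine lintegral_mono_set fun θ hθ => mem_ball.2 (lt_min hθ.1 ?_)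
          exact (abs_sub_le_of_mem_period hθ.2).trans_lt (by linarith [pi_pos])
      _ ≤ ENNReal.ofReal (K / (1 - d) * t ^ (1 - d) * min R (2 * π) ^ d) :=
          h.setLIntegral_ball_log_le (lt_min hR two_pi_pos) (min_le_right _ _) ht
      _ ≤ _ := by
          have _ : 0 ≤ min R (2 * π) := le_min hR.le two_pi_pos.le
          gcongr
          exact min_le_left _ _
  have hle := lintegral_add_dist_rpow_le (p := 2) (by positivity) hd0.le (by linarith) ht hgrowth
  rw [hν, lintegral_withDensity_eq_lintegral_mul _ hlog (by fun_prop)] at hle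
  refine hle.trans_eq (congrArg _ ?_)
  have hpow : t ^ (1 - d) * t ^ (-(2 - d)) = t⁻¹ := by
    rw [← rpow_add ht, ← rpow_neg_one]
    ring_nf
  linear_combination (K / (1 - d) * (2 / (2 - d))) * hpow

end IsRegularDist

/-! ### Oscillation of the boundary data `log ω(δ)` -/

section RealInequalities

lemma mul_rpow_neg_quarter {t : ℝ} (ht : 0 < t) : t * t ^ (-(1 / 4) : ℝ) = t ^ (3 / 4 : ℝ) := by
  rw [mul_comm, ← rpow_add_one ht.ne']
  norm_num

lemma rpow_mul_log_div_le {s t x : ℝ} (ht : 0 < t) (hx : 0 ≤ x) (hxt : 2 * x ≤ t)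
    (hs : t - x ≤ s) : t ^ (3 / 4 : ℝ) * log (t / s) ≤ 2 * x ^ (3 / 4 : ℝ) := by
  have hs0 : 0 < s := by linarith
  have hlog : log (t / s) ≤ 2 * (x / t) := by
    calc log (t / s) ≤ t / s - 1 := log_le_sub_one_of_pos (by positivity)
      _ = (t - s) / s := by field_simp
      _ ≤ x / (t / 2) := by gcongr <;> linarith
      _ = 2 * (x / t) := by field_simp
  have hpow : t ^ (3 / 4 : ℝ) * (x / t) ≤ x ^ (3 / 4 : ℝ) := by
    rcases hx.eq_or_lt with rfl | hx0
    · simp [zero_rpow]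
    · calc t ^ (3 / 4 : ℝ) * (x / t) = x * t ^ (-(1 / 4) : ℝ) := by
            rw [← mul_rpow_neg_quarter ht]
            field_simp
        _ ≤ x * x ^ (-(1 / 4) : ℝ) := by
            gcongr ?_ * ?_
            exact rpow_le_rpow_of_nonpos hx0 (by linarith) (by norm_num)
        _ = x ^ (3 / 4 : ℝ) := mul_rpow_neg_quarter hx0
  calc t ^ (3 / 4 : ℝ) * log (t / s) ≤ t ^ (3 / 4 : ℝ) * (2 * (x / t)) := by gcongr
    _ ≤ 2 * x ^ (3 / 4 : ℝ) := by linarith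

lemma rpow_mul_add_rpow_neg_two_le {x y : ℝ} (hx : 0 ≤ x) (hy : 0 < y) :
    x ^ (3 / 4 : ℝ) * (y + x) ^ (-2 : ℝ) ≤ (y + x) ^ (-(1 + 1 / 4) : ℝ) := by
  calc x ^ (3 / 4 : ℝ) * (y + x) ^ (-2 : ℝ) ≤ (y + x) ^ (3 / 4 : ℝ) * (y + x) ^ (-2 : ℝ) := by
        gcongr
        exact le_add_of_nonneg_left hy.le
    _ = (y + x) ^ (-(1 + 1 / 4) : ℝ) := by
        rw [← rpow_add (by positivity)]
        norm_num

lemma rpow_neg_two_le_nine_mul {a b : ℝ} (hb : 0 < b) (hba : b ≤ 3 * a) :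
    a ^ (-2 : ℝ) ≤ 9 * b ^ (-2 : ℝ) := by
  calc a ^ (-2 : ℝ) ≤ (b / 3) ^ (-2 : ℝ) :=
        rpow_le_rpow_of_nonpos (by positivity) (by linarith) (by norm_num)
    _ = 9 * b ^ (-2 : ℝ) := by
        rw [div_rpow hb.le (by norm_num), rpow_neg (by norm_num : (0 : ℝ) ≤ 3)]
        norm_num
        ring

end RealInequalities

namespace IsRegularWeight

variable {ω : ℝ → ℝ} {s t : ℝ}

lemma mul_abs_log_sub_log_le_of_le (h : IsRegularWeight ω) (hs : 0 < s) (hst : s ≤ t)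
    (ht : t ≤ 2) :
    ω t * |log (ω s) - log (ω t)| ≤ tailRoot ω t * t ^ (3 / 4 : ℝ) * log (t / s) := by
  have ht0 := hs.trans_le hst
  have htπ : t < π := by linarith [pi_gt_three]
  have hsπ : s ∈ Ioo 0 π := ⟨hs, hst.trans_lt htπ⟩
  rw [abs_sub_comm, abs_of_nonneg
    (sub_nonneg.2 (log_le_log (h.pos s hsπ) (h.monotoneOn hsπ ⟨ht0, htπ⟩ hst)))]
  refine (h.mul_log_sub_log_le hs hst htπ).trans ?_
  gcongr ?_ * _
  · exact log_nonneg ((one_le_div hs).2 hst)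
  · calc t * deriv ω t ≤ t * (tailRoot ω t * t ^ (-(1 / 4) : ℝ)) := by
          gcongr
          exact deriv_le_tailRoot_mul_rpow h ht0 ⟨le_rfl, ht⟩
      _ = tailRoot ω t * t ^ (3 / 4 : ℝ) := by
          rw [← mul_rpow_neg_quarter ht0]
          ring

lemma mul_abs_log_sub_log_le_of_ge (h : IsRegularWeight ω) (ht : 0 < t) (hts : t ≤ s)
    (hs : s ≤ 2) :
    ω t * |log (ω s) - log (ω t)| ≤ 2 * tailRoot ω t * (s - t) ^ (3 / 4 : ℝ) := by
  have hsπ : s ∈ Ioo 0 π := ⟨ht.trans_le hts, by linarith [pi_gt_three]⟩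
  have htπ : t ∈ Ioo 0 π := ⟨ht, hts.trans_lt hsπ.2⟩
  have hωs := h.pos s hsπ
  have hωt := h.pos t htπ
  have hA := tailRoot_nonneg ω t
  rw [abs_of_nonneg (sub_nonneg.2 (log_le_log hωt (h.monotoneOn htπ hsπ hts))),
    ← log_div hωs.ne' hωt.ne']
  calc ω t * log (ω s / ω t) ≤ ω t * (ω s / ω t - 1) := by
        gcongr
        exact log_le_sub_one_of_pos (by positivity)
    _ = ω (t + (s - t)) - ω t := by
        rw [add_sub_cancel]
        field_simp
    _ ≤ 4 / 3 * tailRoot ω t * (s - t) ^ (3 / 4 : ℝ) :=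
        h.add_sub_le_of_deriv_le_rpow ht (sub_nonneg.2 hts) (by linarith) hA
          fun u hu => deriv_le_tailRoot_mul_rpow h ht hu
    _ ≤ 2 * tailRoot ω t * (s - t) ^ (3 / 4 : ℝ) := by
        have _ : 0 ≤ s - t := sub_nonneg.2 hts
        gcongr
        norm_num

lemma mul_abs_log_sub_log_le_or (h : IsRegularWeight ω) {a x y : ℝ} (hy : 0 < y) (hs : 0 < s)
    (hs2 : s ≤ 2) (hmax : max a y ≤ 2) (hx : |s - a| ≤ x) :
    ω (max a y) * |log (ω s) - log (ω (max a y))| ≤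
        2 * tailRoot ω (max a y) * x ^ (3 / 4 : ℝ) ∨
      max a y + x ≤ 3 * (y + x) ∧ ω (max a y) * |log (ω s) - log (ω (max a y))| ≤
        tailRoot ω (max a y) * max a y ^ (3 / 4 : ℝ) * log (max a y / s) := by
  set t := max a y
  have ht0 : 0 < t := lt_max_of_lt_right hy
  have hat : a ≤ t := le_max_left a y
  have hA := tailRoot_nonneg ω t
  obtain ⟨hxa, hsa⟩ := abs_le.1 hx
  rcases le_total t s with hts | hst
  · refine .inl ((h.mul_abs_log_sub_log_le_of_ge ht0 hts hs2).trans ?_)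
    gcongr
    linarith
  · have hlog := h.mul_abs_log_sub_log_le_of_le hs hst hmax
    rcases le_or_gt (t + x) (3 * (y + x)) with hxy | hxy
    · exact .inr ⟨hxy, hlog⟩
    · have hya : y ≤ a := by
        by_contra! hle
        linarith [max_eq_right hle.le]
      have hta : t = a := max_eq_left hya
      refine .inl (hlog.trans ?_)
      calc tailRoot ω t * t ^ (3 / 4 : ℝ) * log (t / s)
          = tailRoot ω t * (t ^ (3 / 4 : ℝ) * log (t / s)) := by ring
        _ ≤ tailRoot ω t * (2 * x ^ (3 / 4 : ℝ)) := by
            gcongr _ * ?_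
            exact rpow_mul_log_div_le ht0 ((abs_nonneg _).trans hx) (by linarith)
              (by rw [hta]; linarith)
        _ = 2 * tailRoot ω t * x ^ (3 / 4 : ℝ) := by ring

lemma log_sub_log_le_rpow (h : IsRegularWeight ω) {x y : ℝ} (hy : 0 < y) (hyt : y ≤ t)
    (hx : 0 ≤ x) (hs : 0 < s) (hst : s ≤ t + x) (hs2 : s ≤ 2) (ht2 : t ≤ 2) :
    log (ω s) - log (ω t) ≤ 4 / 3 * ((y + x) / y) ^ (3 / 4 : ℝ) := by
  have ht0 := hy.trans_le hyt
  have htπ : t ∈ Ioo 0 π := ⟨ht0, by linarith [pi_gt_three]⟩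
  have hsπ : s ∈ Ioo 0 π := ⟨hs, by linarith [pi_gt_three]⟩
  have hωs := h.pos s hsπ
  have hωt := h.pos t htπ
  rcases le_total s t with hle | hle
  · calc log (ω s) - log (ω t) ≤ 0 :=
          sub_nonpos.2 (log_le_log hωs (h.monotoneOn hsπ htπ hle))
      _ ≤ _ := by positivity
  · have hratio : ω s / ω t ≤ (y + x) / y := by
      rw [div_le_iff₀' hωt]
      refine (h.le_mul_div ht0 hle hsπ.2).trans ?_
      gcongr ω t * ?_
      rw [div_le_div_iff₀ ht0 hy]
      nlinarith
    calc log (ω s) - log (ω t) = log (ω s / ω t) := (log_div hωs.ne' hωt.ne').symm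
      _ ≤ log ((y + x) / y) := log_le_log (by positivity) hratio
      _ ≤ ((y + x) / y) ^ (3 / 4 : ℝ) / (3 / 4) := log_le_rpow_div (by positivity) (by norm_num)
      _ = 4 / 3 * ((y + x) / y) ^ (3 / 4 : ℝ) := by ring

end IsRegularWeight

/-- The constant with which the oscillation of `log ω(δ)` against the kernel
`(y + |θ - θ₀|) ^ (-2)` is controlled by the tail energy of `ω`. -/
noncomputable def oscConst (d K : ℝ) : ℝ := 20 + 9 * (K / (1 - d) * (2 / (2 - d)))

section Oscillation

variable {δ ω : ℝ → ℝ} {d K θ₀ y : ℝ}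

lemma oscConst_nonneg (h : IsRegularDist δ d K) : 0 ≤ oscConst d K := by
  have hd := h.dim_lt_one
  have hK := h.const_pos
  have _ : 0 < 1 - d := by linarith
  have _ : 0 < 2 - d := by linarith
  unfold oscConst
  positivity

lemma IsRegularDist.abs_sub_le (h : IsRegularDist δ d K) (θ θ₀ : ℝ) : |δ θ - δ θ₀| ≤ |θ - θ₀| := by
  refine abs_sub_le_iff.2 ⟨by linarith [h.le_add_abs θ θ₀], ?_⟩
  rw [abs_sub_comm]
  linarith [h.le_add_abs θ₀ θ]

lemma ofReal_mul_abs_log_sub_log_le (h : IsRegularDist δ d K) (hω : IsRegularWeight ω)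
    (hy : y ∈ Ioc 0 1) {θ : ℝ} (hθ : 0 < δ θ) :
    ENNReal.ofReal (ω (max (δ θ₀) y) * |log (ω (δ θ)) - log (ω (max (δ θ₀) y))| *
        (y + |θ - θ₀|) ^ (-2 : ℝ)) ≤
      ENNReal.ofReal (2 * tailRoot ω (max (δ θ₀) y)) *
          ENNReal.ofReal ((y + |θ - θ₀|) ^ (-(1 + 1 / 4) : ℝ)) +
        ENNReal.ofReal (9 * tailRoot ω (max (δ θ₀) y) * max (δ θ₀) y ^ (3 / 4 : ℝ)) *
          (ENNReal.ofReal (log (max (δ θ₀) y / δ θ)) *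
            ENNReal.ofReal ((max (δ θ₀) y + |θ - θ₀|) ^ (-2 : ℝ))) := by
  have hosc := hω.mul_abs_log_sub_log_le_or hy.1 hθ (h.le_two θ)
    (max_le (h.le_two θ₀) (by linarith [hy.2])) (h.abs_sub_le θ θ₀)
  set t := max (δ θ₀) y
  set x := |θ - θ₀|
  have hx : 0 ≤ x := abs_nonneg _
  have hy0 := hy.1
  have _ : 0 < t := lt_max_of_lt_right hy.1
  have hA := tailRoot_nonneg ω t
  rcases hosc with hosc | ⟨hxy, hosc⟩
  · refine le_add_right ?_
    rw [← ENNReal.ofReal_mul (by positivity)]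
    refine ENNReal.ofReal_le_ofReal ?_
    grw [hosc, mul_assoc, rpow_mul_add_rpow_neg_two_le hx hy.1]
  · refine le_add_left ?_
    rw [← ENNReal.ofReal_mul' (by positivity), ← ENNReal.ofReal_mul (by positivity)]
    refine ENNReal.ofReal_le_ofReal ?_
    have hωt : 0 < ω t := hω.pos t (h.max_mem_Ioo θ₀ hy)
    have hnonneg := (mul_nonneg hωt.le (abs_nonneg _)).trans hosc
    calc _ ≤ tailRoot ω t * t ^ (3 / 4 : ℝ) * log (t / δ θ) * (9 * (t + x) ^ (-2 : ℝ)) := by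
          gcongr
          exact rpow_neg_two_le_nine_mul (by positivity) hxy
      _ = _ := by ring

lemma lintegral_oscillation_le (h : IsRegularDist δ d K) (hω : IsRegularWeight ω)
    (hy : y ∈ Ioc 0 1) :
    ∫⁻ θ in period θ₀, ENNReal.ofReal (ω (max (δ θ₀) y) *
      |log (ω (δ θ)) - log (ω (max (δ θ₀) y))| * (y + |θ - θ₀|) ^ (-2 : ℝ)) ≤
      ENNReal.ofReal (oscConst d K * tailRoot ω (max (δ θ₀) y) * y ^ (-(1 / 4) : ℝ)) := by
  have hpointwise := h.ae_pos.mono fun θ hθ =>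
    ofReal_mul_abs_log_sub_log_le (θ₀ := θ₀) h hω hy hθ
  set t := max (δ θ₀) y
  set A := tailRoot ω t
  set B := K / (1 - d) * (2 / (2 - d)) with hB
  have hδ := h.continuous.measurable
  have hy0 := hy.1
  have hyt : y ≤ t := le_max_right _ _
  have ht0 : 0 < t := hy0.trans_le hyt
  have hA : 0 ≤ A := tailRoot_nonneg ω t
  have hB0 : 0 ≤ B := mul_nonneg (div_nonneg h.const_pos.le (by linarith [h.dim_lt_one]))
    (div_nonneg zero_le_two (by linarith [h.dim_lt_one]))
  refine (lintegral_mono_ae (ae_restrict_of_ae hpointwise)).trans ?_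
  rw [lintegral_add_left (by fun_prop), lintegral_const_mul _ (by fun_prop),
    lintegral_const_mul _ (by fun_prop)]
  grw [setLIntegral_add_abs_rpow_le (by norm_num) hy0 θ₀ (period θ₀),
    h.setLIntegral_period_log_mul_rpow_le ht0]
  rw [← hB, ← ENNReal.ofReal_mul (by positivity), ← ENNReal.ofReal_mul (by positivity),
    ← ENNReal.ofReal_add (by positivity) (by positivity)]
  refine ENNReal.ofReal_le_ofReal ?_
  calc _ = 20 * A * y ^ (-(1 / 4) : ℝ) + 9 * B * A * t ^ (-(1 / 4) : ℝ) := by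
        rw [← mul_rpow_neg_quarter ht0]
        field_simp
        ring
    _ ≤ 20 * A * y ^ (-(1 / 4) : ℝ) + 9 * B * A * y ^ (-(1 / 4) : ℝ) := by
        gcongr _ + _ * ?_
        exact rpow_le_rpow_of_nonpos hy0 hyt (by norm_num)
    _ = oscConst d K * A * y ^ (-(1 / 4) : ℝ) := by
        rw [oscConst, ← hB]
        ring

lemma lintegral_mul_log_sub_log_le (h : IsRegularDist δ d K) (hω : IsRegularWeight ω)
    (hy : y ∈ Ioc 0 1) :
    ∫⁻ θ in period θ₀, ENNReal.ofReal (y * (y + |θ - θ₀|) ^ (-2 : ℝ) *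
      (log (ω (δ θ)) - log (ω (max (δ θ₀) y)))) ≤ ENNReal.ofReal 14 := by
  have hy0 := hy.1
  have hpow : y ^ (1 / 4 : ℝ) * y ^ (-(1 / 4) : ℝ) = 1 := by
    rw [← rpow_add hy0, add_neg_cancel, rpow_zero]
  calc _ ≤ ∫⁻ θ in period θ₀, ENNReal.ofReal (4 / 3 * y ^ (1 / 4 : ℝ)) *
            ENNReal.ofReal ((y + |θ - θ₀|) ^ (-(1 + 1 / 4) : ℝ)) := by
        refine lintegral_mono_ae (ae_restrict_of_ae ?_)
        filter_upwards [h.ae_pos] with θ hθ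
        rw [← ENNReal.ofReal_mul (by positivity)]
        refine ENNReal.ofReal_le_ofReal ?_
        have hyx : 0 < y + |θ - θ₀| := by positivity
        grw [hω.log_sub_log_le_rpow hy0 (le_max_right (δ θ₀) y) (abs_nonneg (θ - θ₀)) hθ
          ((h.le_add_abs θ θ₀).trans (by grw [← le_max_left])) (h.le_two θ)
          (max_le (h.le_two _) (by linarith [hy.2]))]
        refine le_of_eq ?_
        rw [div_rpow hyx.le hy0.le, show -(1 + 1 / 4 : ℝ) = 3 / 4 + -2 by norm_num,
          rpow_add hyx]
        have hy34 : y = y ^ (1 / 4 : ℝ) * y ^ (3 / 4 : ℝ) := by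
          rw [← rpow_add hy0]
          norm_num
        have hne := (rpow_pos_of_pos hy0 (3 / 4)).ne'
        field_simp
        linarith
    _ ≤ ENNReal.ofReal (4 / 3 * y ^ (1 / 4 : ℝ)) *
          ENNReal.ofReal (2 * ((1 + 1 / 4) / (1 / 4)) * y ^ (-(1 / 4) : ℝ)) := by
        rw [lintegral_const_mul _ (by fun_prop)]
        gcongr
        exact setLIntegral_add_abs_rpow_le (by norm_num) hy0 _ _
    _ ≤ ENNReal.ofReal 14 := by
        rw [← ENNReal.ofReal_mul (by positivity)]
        exact ENNReal.ofReal_le_ofReal (by linarith)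

lemma integrableOn_log_two_div (h : IsRegularDist δ d K) :
    IntegrableOn (fun θ => log (2 / δ θ)) (Ioc 0 (2 * π)) := by
  have hδ := h.continuous.measurable
  refine ⟨(by fun_prop : Measurable fun θ => log (2 / δ θ)).aestronglyMeasurable, ?_⟩
  rw [hasFiniteIntegral_iff_norm]
  calc ∫⁻ θ in Ioc 0 (2 * π), ENNReal.ofReal ‖log (2 / δ θ)‖
      = ∫⁻ θ in Ioc 0 (2 * π), ENNReal.ofReal (log (2 / δ θ)) := by
        refine lintegral_congr_ae (ae_restrict_of_ae ?_)
        filter_upwards [h.ae_pos] with θ hθ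
        rw [norm_of_nonneg (log_nonneg ((one_le_div hθ).2 (h.le_two θ)))]
    _ ≤ ∫⁻ θ in ball π (2 * π), ENNReal.ofReal (log (2 / δ θ)) := by
        refine lintegral_mono_set fun θ hθ => ?_
        rw [mem_ball, Real.dist_eq, abs_lt]
        constructor <;> linarith [hθ.1, hθ.2, pi_pos]
    _ < ∞ := (h.setLIntegral_ball_log_le two_pi_pos le_rfl two_pos).trans_lt ENNReal.ofReal_lt_top

lemma integrableOn_log_comp (h : IsRegularDist δ d K) (hω : IsRegularWeight ω) :
    IntegrableOn (fun θ => log (ω (δ θ))) (Ioc 0 (2 * π)) := by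
  have h2π : (2 : ℝ) < π := by linarith [pi_gt_three]
  set c := 2 * deriv ω 2 / ω 2
  have hbound : IntegrableOn (fun θ => |log (ω 2)| + c * log (2 / δ θ)) (Ioc 0 (2 * π)) :=
    (integrableOn_const (by simp [ENNReal.mul_eq_top])).add
      ((integrableOn_log_two_div h).const_mul c)
  have hmeas : AEStronglyMeasurable (fun θ => log (ω (δ θ))) volume := by
    rw [← Measure.restrict_eq_self_of_ae_mem (s := {θ | 0 < δ θ}) h.ae_pos]
    refine ContinuousOn.aestronglyMeasurable (fun θ (hθ : 0 < δ θ) => ?_)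
      (measurableSet_lt measurable_const h.continuous.measurable)
    have hδπ : δ θ ∈ Ioo 0 π := ⟨hθ, (h.le_two θ).trans_lt h2π⟩
    exact (((hω.differentiableAt _ hδπ).continuousAt.comp h.continuous.continuousAt).log
      (hω.pos _ hδπ).ne').continuousWithinAt
  refine hbound.mono' hmeas.restrict (ae_restrict_of_ae ?_)
  filter_upwards [h.ae_pos] with θ hθ
  have hδπ : δ θ ∈ Ioo 0 π := ⟨hθ, (h.le_two θ).trans_lt h2π⟩
  have hle := hω.log_sub_log_le hθ (h.le_two θ) h2π
  have hlog := log_le_log (hω.pos _ hδπ) (hω.monotoneOn hδπ ⟨two_pos, h2π⟩ (h.le_two θ))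
  rw [Real.norm_eq_abs, abs_le]
  constructor <;> linarith [neg_abs_le (log (ω 2)), le_abs_self (log (ω 2))]

end Oscillation

/-! ### Outer functions -/

lemma circleMap_zero_one (θ : ℝ) : circleMap 0 1 θ = cpt θ := by
  simp [circleMap, cpt]

lemma circleIntegrable_iff_integrableOn_cpt {V : Type*} [NormedAddCommGroup V] {f : ℂ → V} :
    CircleIntegrable f 0 1 ↔ IntegrableOn (fun θ => f (cpt θ)) (Ioc 0 (2 * π)) := by
  simp only [CircleIntegrable, intervalIntegrable_iff_integrableOn_Ioc_of_le two_pi_pos.le,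
    circleMap_zero_one]

lemma circleAverage_eq_integral_period {V : Type*} [NormedAddCommGroup V] [NormedSpace ℝ V]
    (f : ℂ → V) (θ₀ : ℝ) :
    circleAverage f 0 1 = (2 * π)⁻¹ • ∫ θ in period θ₀, f (cpt θ) := by
  have hper : Function.Periodic (fun θ => f (cpt θ)) (2 * π) := fun θ => by
    simp only [periodic_cpt θ]
  have hshift := hper.intervalIntegral_add_eq 0 (θ₀ - π)
  rw [zero_add, show θ₀ - π + 2 * π = θ₀ + π by ring,
    intervalIntegral.integral_of_le (by linarith [pi_pos] : θ₀ - π ≤ θ₀ + π)] at hshift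
  simp only [circleAverage, circleMap_zero_one, hshift]

section Kernels

variable {θ θ₀ y : ℝ} {z : ℂ}

lemma norm_circleMap_one_sub (hy : y ≤ 1) (θ : ℝ) : ‖circleMap 0 (1 - y) θ‖ = 1 - y := by
  rw [norm_circleMap_zero, abs_of_nonneg (sub_nonneg.2 hy)]

lemma circleMap_one_sub_mem_unitDisc (hy : y ∈ Ioc 0 1) (θ : ℝ) :
    circleMap 0 (1 - y) θ ∈ unitDisc := by
  rw [unitDisc, mem_ball_zero_iff, norm_circleMap_one_sub hy.2]
  linarith [hy.1]

lemma le_norm_cpt_sub_circleMap (hy : y ∈ Ioc 0 1) (h : |θ - θ₀| ≤ π) :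
    (y + |θ - θ₀|) / 6 ≤ ‖cpt θ - circleMap 0 (1 - y) θ₀‖ := by
  set z := circleMap 0 (1 - y) θ₀ with hz
  have hradial : y ≤ ‖cpt θ - z‖ := by
    have h1 := norm_sub_norm_le (cpt θ) z
    rw [norm_cpt, norm_circleMap_one_sub hy.2] at h1
    linarith
  have hchord : ‖cpt θ - cpt θ₀‖ ≤ ‖cpt θ - z‖ + y := by
    calc ‖cpt θ - cpt θ₀‖ = ‖(cpt θ - z) - (y : ℂ) * cpt θ₀‖ := by
          rw [hz, circleMap_zero, ← cpt]
          push_cast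
          ring_nf
      _ ≤ ‖cpt θ - z‖ + ‖(y : ℂ) * cpt θ₀‖ := norm_sub_le _ _
      _ = ‖cpt θ - z‖ + y := by
          rw [norm_mul, norm_cpt, Complex.norm_real, mul_one, norm_of_nonneg hy.1.le]
  have hjordan : 2 / 4 * |θ - θ₀| ≤ 2 / π * |θ - θ₀| := by
    gcongr
    exact pi_le_four
  linarith [le_norm_cpt_sub h, norm_nonneg (cpt θ - z)]

lemma inv_norm_cpt_sub_circleMap_sq_le (hy : y ∈ Ioc 0 1) (h : |θ - θ₀| ≤ π) :
    (‖cpt θ - circleMap 0 (1 - y) θ₀‖ ^ 2)⁻¹ ≤ 36 * (y + |θ - θ₀|) ^ (-2 : ℝ) := by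
  have hpos : 0 < y + |θ - θ₀| := add_pos_of_pos_of_nonneg hy.1 (abs_nonneg _)
  calc (‖cpt θ - circleMap 0 (1 - y) θ₀‖ ^ 2)⁻¹ ≤ (((y + |θ - θ₀|) / 6) ^ 2)⁻¹ := by
        gcongr
        exact le_norm_cpt_sub_circleMap hy h
    _ = 36 * (y + |θ - θ₀|) ^ (-2 : ℝ) := by
        rw [rpow_neg hpos.le, rpow_two]
        field_simp
        norm_num

lemma poissonKernel_zero_cpt (z : ℂ) (θ : ℝ) :
    poissonKernel 0 z (cpt θ) = (1 - ‖z‖ ^ 2) / ‖cpt θ - z‖ ^ 2 := by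
  simp only [poissonKernel, sub_zero, norm_cpt, one_pow]

lemma poissonKernel_zero_cpt_nonneg (hz : ‖z‖ ≤ 1) (θ : ℝ) : 0 ≤ poissonKernel 0 z (cpt θ) := by
  rw [poissonKernel_zero_cpt]
  have _ : ‖z‖ ^ 2 ≤ 1 := pow_le_one₀ (norm_nonneg z) hz
  have _ : 0 ≤ 1 - ‖z‖ ^ 2 := by linarith
  positivity

lemma poissonKernel_circleMap_le (hy : y ∈ Ioc 0 1) (h : |θ - θ₀| ≤ π) :
    poissonKernel 0 (circleMap 0 (1 - y) θ₀) (cpt θ) ≤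
      72 * y * (y + |θ - θ₀|) ^ (-2 : ℝ) := by
  rw [poissonKernel_zero_cpt, norm_circleMap_one_sub hy.2, div_eq_mul_inv]
  have hy0 := hy.1
  calc (1 - (1 - y) ^ 2) * (‖cpt θ - circleMap 0 (1 - y) θ₀‖ ^ 2)⁻¹
      ≤ 2 * y * (36 * (y + |θ - θ₀|) ^ (-2 : ℝ)) := by
        gcongr
        · nlinarith
        · exact inv_norm_cpt_sub_circleMap_sq_le hy h
    _ = 72 * y * (y + |θ - θ₀|) ^ (-2 : ℝ) := by ring

lemma continuousOn_two_mul_div_sub_sq (hz : z ∈ unitDisc) :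
    ContinuousOn (fun ζ : ℂ => 2 * ζ / (ζ - z) ^ 2) (sphere 0 |1|) := by
  refine ContinuousOn.div (by fun_prop) (by fun_prop) fun ζ hζ => pow_ne_zero 2 ?_
  rw [abs_one] at hζ
  exact sub_ne_zero.2 (ne_of_mem_of_not_mem hζ fun h => by
    rw [unitDisc, mem_ball] at hz
    exact hz.ne h)

lemma circleAverage_two_mul_div_sub_sq_mul_const (z c : ℂ) :
    circleAverage (fun ζ => 2 * ζ / (ζ - z) ^ 2 * c) 0 1 = 0 := by
  rw [circleAverage_eq_circleIntegral one_ne_zero]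
  have hcongr : EqOn (fun ζ : ℂ => (ζ - 0)⁻¹ • (2 * ζ / (ζ - z) ^ 2 * c))
      (fun ζ => 2 * c * (ζ - z) ^ (-2 : ℤ)) (sphere 0 1) := fun ζ hζ => by
    have hζ0 : ζ ≠ 0 := ne_of_mem_sphere hζ one_ne_zero
    simp only [sub_zero, smul_eq_mul, zpow_neg]
    field_simp
  rw [circleIntegral.integral_congr zero_le_one hcongr, circleIntegral.integral_const_mul,
    circleIntegral.integral_sub_zpow_of_ne (by norm_num)]
  simp

end Kernels

section OuterFun

variable {ω : ℝ → ℝ} {E : Set ℂ} {z : ℂ}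

lemma circleIntegrable_log_of_logOmegaInt (hL : LogOmegaInt ω E) :
    CircleIntegrable (fun ζ => log (ω (dE E ζ))) 0 1 :=
  circleIntegrable_iff_integrableOn_cpt.2 hL

lemma outerFun_eq_exp_circleAverage (ω : ℝ → ℝ) (E : Set ℂ) :
    outerFun ω E = fun z => Complex.exp (circleAverage
      (fun ζ => herglotzRieszKernel 0 z ζ • (log (ω (dE E ζ)) : ℂ)) 0 1) := by
  funext z
  rw [outerFun, circleAverage, intervalIntegral.integral_of_le two_pi_pos.le, Complex.real_smul]
  simp only [circleMap_zero_one, herglotzRieszKernel, sub_zero, smul_eq_mul]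

lemma norm_outerFun (hL : LogOmegaInt ω E) (hz : z ∈ unitDisc) :
    ‖outerFun ω E z‖ =
      exp (circleAverage (fun ζ => poissonKernel 0 z ζ * log (ω (dE E ζ))) 0 1) := by
  rw [outerFun_eq_exp_circleAverage, Complex.norm_exp,
    re_circleAverage_herglotzRieszKernel_smul (circleIntegrable_log_of_logOmegaInt hL) hz,
    ← poissonKernel_eq_re_herglotzRieszKernel]
  rfl

lemma circleIntegrable_poissonKernel_mul {g : ℂ → ℝ} (hg : CircleIntegrable g 0 1)
    (hz : z ∈ unitDisc) : CircleIntegrable (fun ζ => poissonKernel 0 z ζ * g ζ) 0 1 := by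
  rw [poissonKernel_eq_re_herglotzRieszKernel]
  exact hg.continuousOn_smul
    (Complex.continuous_re.comp_continuousOn (continuousOn_herglotzRieszKernel_sphere hz))

lemma norm_outerFun_eq_mul_exp (hL : LogOmegaInt ω E) (hz : z ∈ unitDisc) {c : ℝ} (hc : 0 < c) :
    ‖outerFun ω E z‖ =
      c * exp (circleAverage (fun ζ => poissonKernel 0 z ζ * (log (ω (dE E ζ)) - log c)) 0 1) := by
  have hconst : circleAverage (fun ζ => poissonKernel 0 z ζ * log c) 0 1 = log c :=
    InnerProductSpace.HarmonicOnNhd.circleAverage_poissonKernel_smul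
      (InnerProductSpace.harmonicOnNhd_const _) hz
  simp only [mul_sub]
  rw [circleAverage_fun_sub
    (circleIntegrable_poissonKernel_mul (circleIntegrable_log_of_logOmegaInt hL) hz)
    (circleIntegrable_poissonKernel_mul (circleIntegrable_const _ _ _) hz), hconst, exp_sub,
    exp_log hc, mul_div_cancel₀ _ hc.ne', norm_outerFun hL hz]

lemma hasDerivAt_outerFun (hL : LogOmegaInt ω E) (hz : z ∈ unitDisc) (c : ℝ) :
    HasDerivAt (outerFun ω E) (outerFun ω E z * circleAverage
      (fun ζ => 2 * ζ / (ζ - z) ^ 2 * (log (ω (dE E ζ)) - c : ℝ)) 0 1) z := by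
  have hlog : CircleIntegrable (fun ζ => (log (ω (dE E ζ)) : ℂ)) 0 1 :=
    circleIntegrable_iff_integrableOn_cpt.2 (Integrable.ofReal hL)
  have hker := continuousOn_two_mul_div_sub_sq hz
  have hsub : circleAverage (fun ζ => (2 * ζ / (ζ - z) ^ 2) • (log (ω (dE E ζ)) : ℂ)) 0 1 =
      circleAverage (fun ζ => 2 * ζ / (ζ - z) ^ 2 * (log (ω (dE E ζ)) - c : ℝ)) 0 1 := by
    simp only [smul_eq_mul, Complex.ofReal_sub, mul_sub]
    refine .symm <| (circleAverage_fun_sub (hlog.continuousOn_smul hker)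
      ((circleIntegrable_const (c : ℂ) 0 1).continuousOn_smul hker)).trans ?_
    exact (congrArg _ (circleAverage_two_mul_div_sub_sq_mul_const z c)).trans (sub_zero _)
  rw [← hsub, outerFun_eq_exp_circleAverage]
  exact (hasDerivAt_circleAverage_herglotzRieszKernel_smul hlog hz).cexp

lemma differentiableOn_outerFun (hL : LogOmegaInt ω E) :
    DifferentiableOn ℂ (outerFun ω E) unitDisc := fun _ hz =>
  (hasDerivAt_outerFun hL hz 0).differentiableAt.differentiableWithinAt

end OuterFun

section RadialBounds

variable {ω : ℝ → ℝ} {E : Set ℂ} {d K θ₀ y : ℝ}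

lemma logOmegaInt_of_isRegularDist (h : IsRegularDist (fun θ => dE E (cpt θ)) d K)
    (hω : IsRegularWeight ω) : LogOmegaInt ω E :=
  integrableOn_log_comp h hω

lemma mul_norm_integral_period_le {V : Type*} [NormedAddCommGroup V] [NormedSpace ℝ V]
    {δ : ℝ → ℝ} (h : IsRegularDist δ d K) (hω : IsRegularWeight ω) (hy : y ∈ Ioc 0 1)
    {G : ℝ → V} {c : ℝ} (hc : 0 ≤ c)
    (hG : ∀ θ ∈ period θ₀, ‖G θ‖ ≤
      c * (|log (ω (δ θ)) - log (ω (max (δ θ₀) y))| * (y + |θ - θ₀|) ^ (-2 : ℝ))) :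
    ω (max (δ θ₀) y) * ‖∫ θ in period θ₀, G θ‖ ≤
      c * (oscConst d K * tailRoot ω (max (δ θ₀) y) * y ^ (-(1 / 4) : ℝ)) := by
  have hosc := lintegral_oscillation_le (θ₀ := θ₀) h hω hy
  have hωt := hω.pos _ (h.max_mem_Ioo θ₀ hy)
  have hB : 0 ≤ oscConst d K * tailRoot ω (max (δ θ₀) y) * y ^ (-(1 / 4) : ℝ) :=
    mul_nonneg (mul_nonneg (oscConst_nonneg h) (tailRoot_nonneg ω _)) (rpow_nonneg hy.1.le _)
  generalize oscConst d K * tailRoot ω (max (δ θ₀) y) * y ^ (-(1 / 4) : ℝ) = B at *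
  generalize max (δ θ₀) y = t at *
  rw [← ENNReal.ofReal_le_ofReal_iff (by positivity), ENNReal.ofReal_mul hωt.le, ofReal_norm]
  calc ENNReal.ofReal (ω t) * ‖∫ θ in period θ₀, G θ‖ₑ
      ≤ ENNReal.ofReal (ω t) * ∫⁻ θ in period θ₀, ‖G θ‖ₑ := by
        gcongr
        exact enorm_integral_le_lintegral_enorm _
    _ = ∫⁻ θ in period θ₀, ENNReal.ofReal (ω t) * ‖G θ‖ₑ :=
        (lintegral_const_mul' _ _ ENNReal.ofReal_ne_top).symm
    _ ≤ ∫⁻ θ in period θ₀, ENNReal.ofReal c * ENNReal.ofReal (ω t *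
          |log (ω (δ θ)) - log (ω t)| * (y + |θ - θ₀|) ^ (-2 : ℝ)) := by
        refine setLIntegral_mono' measurableSet_Ioc fun θ hθ => ?_
        rw [← ofReal_norm, ← ENNReal.ofReal_mul hωt.le, ← ENNReal.ofReal_mul hc]
        refine ENNReal.ofReal_le_ofReal ?_
        grw [hG θ hθ]
        linarith
    _ ≤ ENNReal.ofReal c * ENNReal.ofReal B := by
        rw [lintegral_const_mul' _ _ ENNReal.ofReal_ne_top]
        gcongr
    _ = ENNReal.ofReal (c * B) := (ENNReal.ofReal_mul hc).symm

lemma mul_norm_circleAverage_le {V : Type*} [NormedAddCommGroup V] [NormedSpace ℝ V]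
    (h : IsRegularDist (fun θ => dE E (cpt θ)) d K) (hω : IsRegularWeight ω) (hy : y ∈ Ioc 0 1)
    {F : ℂ → V} {c : ℝ} (hc : 0 ≤ c)
    (hF : ∀ θ ∈ period θ₀, ‖F (cpt θ)‖ ≤ c * (|log (ω (dE E (cpt θ))) -
      log (ω (max (dE E (cpt θ₀)) y))| * (y + |θ - θ₀|) ^ (-2 : ℝ))) :
    ω (max (dE E (cpt θ₀)) y) * ‖circleAverage F 0 1‖ ≤
      c / 6 * (oscConst d K * tailRoot ω (max (dE E (cpt θ₀)) y) * y ^ (-(1 / 4) : ℝ)) := by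
  have key := mul_norm_integral_period_le h hω hy hc hF
  have hωt := hω.pos _ (h.max_mem_Ioo θ₀ hy)
  rw [circleAverage_eq_integral_period F θ₀, norm_smul, norm_of_nonneg (by positivity),
    mul_left_comm, div_mul_eq_mul_div, div_eq_inv_mul]
  gcongr
  linarith [pi_gt_three]

lemma integral_le_of_lintegral_ofReal_le {α : Type*} [MeasurableSpace α] {μ : Measure α}
    {f : α → ℝ} {C : ℝ} (hC : 0 ≤ C) (h : ∫⁻ x, ENNReal.ofReal (f x) ∂μ ≤ ENNReal.ofReal C) :
    ∫ x, f x ∂μ ≤ C := by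
  by_cases hf : Integrable f μ
  · rw [integral_eq_lintegral_pos_part_sub_lintegral_neg_part hf]
    exact (sub_le_self _ ENNReal.toReal_nonneg).trans (ENNReal.toReal_le_of_le_ofReal hC h)
  · rwa [integral_undef hf]

lemma circleAverage_poissonKernel_mul_le (h : IsRegularDist (fun θ => dE E (cpt θ)) d K)
    (hω : IsRegularWeight ω) (hy : y ∈ Ioc 0 1) :
    circleAverage (fun ζ => poissonKernel 0 (circleMap 0 (1 - y) θ₀) ζ *
      (log (ω (dE E ζ)) - log (ω (max (dE E (cpt θ₀)) y)))) 0 1 ≤ 168 := by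
  set t := max (dE E (cpt θ₀)) y
  have hz : ‖circleMap 0 (1 - y) θ₀‖ ≤ 1 := by
    rw [norm_circleMap_one_sub hy.2]
    linarith [hy.1]
  have hintegral : ∫ θ in period θ₀, poissonKernel 0 (circleMap 0 (1 - y) θ₀) (cpt θ) *
      (log (ω (dE E (cpt θ))) - log (ω t)) ≤ 72 * 14 := by
    refine integral_le_of_lintegral_ofReal_le (by norm_num) ?_
    calc _ ≤ ∫⁻ θ in period θ₀, ENNReal.ofReal 72 * ENNReal.ofReal
            (y * (y + |θ - θ₀|) ^ (-2 : ℝ) * (log (ω (dE E (cpt θ))) - log (ω t))) := by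
          refine setLIntegral_mono' measurableSet_Ioc fun θ hθ => ?_
          rcases le_or_gt (log (ω (dE E (cpt θ))) - log (ω t)) 0 with hneg | hpos
          · rw [ENNReal.ofReal_of_nonpos (mul_nonpos_of_nonneg_of_nonpos
              (poissonKernel_zero_cpt_nonneg hz θ) hneg)]
            exact zero_le
          · rw [← ENNReal.ofReal_mul (by norm_num), ← mul_assoc, ← mul_assoc]
            gcongr
            exact poissonKernel_circleMap_le hy (abs_sub_le_of_mem_period hθ)
      _ ≤ ENNReal.ofReal 72 * ENNReal.ofReal 14 := by
          rw [lintegral_const_mul' _ _ ENNReal.ofReal_ne_top]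
          gcongr
          exact lintegral_mul_log_sub_log_le h hω hy
      _ = ENNReal.ofReal (72 * 14) := (ENNReal.ofReal_mul (by norm_num)).symm
  rw [circleAverage_eq_integral_period _ θ₀]
  calc _ ≤ (2 * π)⁻¹ * (72 * 14) := by
        rw [smul_eq_mul]
        gcongr
    _ ≤ (2 * 3)⁻¹ * (72 * 14) := by
        gcongr
        exact pi_gt_three.le
    _ = 168 := by norm_num

lemma norm_outerFun_le (h : IsRegularDist (fun θ => dE E (cpt θ)) d K) (hω : IsRegularWeight ω)
    (hy : y ∈ Ioc 0 1) :
    ‖outerFun ω E (circleMap 0 (1 - y) θ₀)‖ ≤ exp 168 * ω (max (dE E (cpt θ₀)) y) := by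
  have hωt := hω.pos _ (h.max_mem_Ioo θ₀ hy)
  rw [norm_outerFun_eq_mul_exp (logOmegaInt_of_isRegularDist h hω)
    (circleMap_one_sub_mem_unitDisc hy θ₀) hωt, mul_comm]
  gcongr
  exact circleAverage_poissonKernel_mul_le h hω hy

lemma norm_deriv_outerFun_le (h : IsRegularDist (fun θ => dE E (cpt θ)) d K)
    (hω : IsRegularWeight ω) (hy : y ∈ Ioc 0 1) :
    ‖deriv (outerFun ω E) (circleMap 0 (1 - y) θ₀)‖ ≤ exp 168 * (12 * (oscConst d K *
      tailRoot ω (max (dE E (cpt θ₀)) y) * y ^ (-(1 / 4) : ℝ))) := by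
  set t := max (dE E (cpt θ₀)) y with ht
  rw [(hasDerivAt_outerFun (logOmegaInt_of_isRegularDist h hω)
    (circleMap_one_sub_mem_unitDisc hy θ₀) (log (ω t))).deriv, norm_mul]
  grw [norm_outerFun_le h hω hy, ← ht, mul_assoc]
  refine mul_le_mul_of_nonneg_left ?_ (exp_pos _).le
  rw [show (12 : ℝ) = 72 / 6 by norm_num]
  refine mul_norm_circleAverage_le (c := 72) h hω hy (by norm_num) fun θ hθ => ?_
  rw [norm_mul, norm_div, norm_mul, norm_cpt, norm_pow, Complex.norm_real, Complex.norm_ofNat,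
    mul_one, Real.norm_eq_abs, div_eq_mul_inv]
  grw [inv_norm_cpt_sub_circleMap_sq_le hy (abs_sub_le_of_mem_period hθ)]
  linarith

lemma tendsto_norm_outerFun (h : IsRegularDist (fun θ => dE E (cpt θ)) d K)
    (hω : IsRegularWeight ω) (hpos : 0 < dE E (cpt θ₀)) :
    Tendsto (fun y => ‖outerFun ω E (circleMap 0 (1 - y) θ₀)‖) (𝓝[>] 0)
      (𝓝 (ω (dE E (cpt θ₀)))) := by
  set t := dE E (cpt θ₀)
  have hωt : 0 < ω t := hω.pos t ⟨hpos, by linarith [h.le_two θ₀, pi_gt_three]⟩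
  set u : ℝ → ℝ := fun y => circleAverage (fun ζ => poissonKernel 0 (circleMap 0 (1 - y) θ₀) ζ *
    (log (ω (dE E ζ)) - log (ω t))) 0 1
  have hmem : Ioc 0 (min 1 t) ∈ 𝓝[>] (0 : ℝ) := Ioc_mem_nhdsGT (lt_min one_pos hpos)
  have hu : ∀ y ∈ Ioc 0 (min 1 t),
      ‖u y‖ ≤ 12 * (oscConst d K * tailRoot ω t) / ω t * y ^ (3 / 4 : ℝ) := fun y hy => by
    have hy1 : y ∈ Ioc 0 1 := ⟨hy.1, hy.2.trans (min_le_left _ _)⟩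
    have hmax : max (dE E (cpt θ₀)) y = t := max_eq_left (hy.2.trans (min_le_right _ _))
    have hz : ‖circleMap 0 (1 - y) θ₀‖ ≤ 1 := by
      rw [norm_circleMap_one_sub hy1.2]
      linarith [hy.1]
    have key := mul_norm_circleAverage_le (θ₀ := θ₀) (c := 72 * y)
      (F := fun ζ => poissonKernel 0 (circleMap 0 (1 - y) θ₀) ζ *
        (log (ω (dE E ζ)) - log (ω t))) h hω hy1 (by linarith [hy.1]) fun θ hθ => by
        rw [hmax, norm_mul,
          norm_of_nonneg (poissonKernel_zero_cpt_nonneg hz θ), Real.norm_eq_abs]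
        grw [poissonKernel_circleMap_le hy1 (abs_sub_le_of_mem_period hθ)]
        linarith
    rw [hmax, ← le_div_iff₀' hωt] at key
    refine key.trans_eq ?_
    rw [← mul_rpow_neg_quarter hy.1]
    ring
  have hu0 : Tendsto u (𝓝[>] 0) (𝓝 0) := by
    refine squeeze_zero_norm' (eventually_of_mem hmem hu) ?_
    have hpow : Tendsto (fun y : ℝ => y ^ (3 / 4 : ℝ)) (𝓝[>] 0) (𝓝 (0 ^ (3 / 4 : ℝ))) :=
      ((continuousAt_rpow_const 0 _ (.inr (by norm_num))).tendsto).mono_left nhdsWithin_le_nhds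
    simpa [zero_rpow] using hpow.const_mul (12 * (oscConst d K * tailRoot ω t) / ω t)
  have hexp : Tendsto (fun y => ω t * exp (u y)) (𝓝[>] 0) (𝓝 (ω t)) := by
    simpa using ((continuous_exp.tendsto 0).comp hu0).const_mul (ω t)
  refine hexp.congr' (eventually_of_mem hmem fun y hy => ?_)
  exact (norm_outerFun_eq_mul_exp (logOmegaInt_of_isRegularDist h hω)
    (circleMap_one_sub_mem_unitDisc ⟨hy.1, hy.2.trans (min_le_left _ _)⟩ θ₀) hωt).symm

end RadialBounds

/-! ### A Carleson embedding -/

@[fun_prop]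
lemma measurable_circleMap {X : Type*} [MeasurableSpace X] {r θ : X → ℝ} (c : ℂ)
    (hr : Measurable r) (hθ : Measurable θ) : Measurable fun x => circleMap c (r x) (θ x) := by
  simp only [circleMap]
  fun_prop

lemma setLIntegral_period {F : ℝ → ℝ≥0∞} (hF : Function.Periodic F (2 * π)) (θ₀ : ℝ) :
    ∫⁻ θ in period θ₀, F θ = ∫⁻ θ in Ioc 0 (2 * π), F θ := by
  have : VAddInvariantMeasure (AddSubgroup.zmultiples (2 * π)) ℝ volume :=
    ⟨fun c s _ => measure_preimage_add _ _ _⟩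
  have hshift := (isAddFundamentalDomain_Ioc two_pi_pos (θ₀ - π)).setLIntegral_eq
    (isAddFundamentalDomain_Ioc two_pi_pos 0) F hF.map_vadd_zmultiples
  rwa [zero_add, show θ₀ - π + 2 * π = θ₀ + π by ring] at hshift

lemma lintegral_ball_polar {F : ℂ → ℝ≥0∞} (hF : Measurable F) (c : ℂ) (R : ℝ) :
    ∫⁻ z in ball c R, F z =
      ∫⁻ θ in Ioc 0 (2 * π), ∫⁻ r in Ioo 0 R, ENNReal.ofReal r * F (circleMap c r θ) := by
  have hsymm : ∀ r θ, c + Complex.polarCoord.symm (r, θ) = circleMap c r θ := fun r θ => by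
    rw [Complex.polarCoord_symm_apply, circleMap, Complex.exp_mul_I]
    simp
  have hradius : ∀ θ, ∫⁻ r in Ioi 0, ENNReal.ofReal r * (ball c R).indicator F (circleMap c r θ) =
      ∫⁻ r in Ioo 0 R, ENNReal.ofReal r * F (circleMap c r θ) := fun θ => by
    rw [← Iio_inter_Ioi, ← setLIntegral_indicator measurableSet_Iio]
    refine setLIntegral_congr_fun measurableSet_Ioi fun r hr => ?_
    have hmem : circleMap c r θ ∈ ball c R ↔ r ∈ Iio R := by
      rw [mem_ball_iff_norm, circleMap_sub_center, norm_circleMap_zero, abs_of_pos hr, mem_Iio]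
    by_cases h : r ∈ Iio R
    · rw [indicator_of_mem h, indicator_of_mem (hmem.2 h)]
    · rw [indicator_of_notMem h, indicator_of_notMem (mt hmem.1 h), mul_zero]
  have hmeas : Measurable fun p : ℝ × ℝ =>
      ENNReal.ofReal p.1 * (ball c R).indicator F (circleMap c p.1 p.2) :=
    (by fun_prop : Measurable fun p : ℝ × ℝ => ENNReal.ofReal p.1).mul
      ((hF.indicator measurableSet_ball).comp (by fun_prop))
  rw [← setLIntegral_period (θ₀ := 0) fun θ => by simp only [periodic_circleMap c _ θ],
    ← lintegral_indicator measurableSet_ball, ← lintegral_add_left_eq_self _ c,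
    ← Complex.lintegral_comp_polarCoord_symm, polarCoord_target]
  simp only [hsymm, smul_eq_mul, ← hradius]
  rw [Measure.volume_eq_prod, ← Measure.prod_restrict, lintegral_prod_symm' _ hmeas, period,
    zero_sub, zero_add, Measure.restrict_congr_set Ioo_ae_eq_Ioc]

lemma lintegral_Ioo_zero_ofReal {R : ℝ} (hR : 0 ≤ R) :
    ∫⁻ r in Ioo 0 R, ENNReal.ofReal r = ENNReal.ofReal (R ^ 2 / 2) := by
  simpa [one_add_one_eq_two] using lintegral_Ioo_rpow (p := 1) (by norm_num) hR

section MeanValue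

variable {V : Type*} [NormedAddCommGroup V] [NormedSpace ℂ V] [CompleteSpace V] {h : ℂ → V}
  {z : ℂ} {R : ℝ}

lemma enorm_le_lintegral_circleMap {r : ℝ} (hr : r ∈ Ico 0 R)
    (hh : DifferentiableOn ℂ h (ball z R)) :
    ENNReal.ofReal (2 * π) * ‖h z‖ₑ ≤ ∫⁻ θ in Ioc 0 (2 * π), ‖h (circleMap z r θ)‖ₑ := by
  have hd : DiffContOnCl ℂ h (ball z |r|) := by
    refine (hh.mono (closure_ball_subset_closedBall.trans ?_)).diffContOnCl
    exact closedBall_subset_ball (by rw [abs_of_nonneg hr.1]; exact hr.2)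
  have hmean := hd.circleAverage
  rw [circleAverage_def, intervalIntegral.integral_of_le two_pi_pos.le] at hmean
  rw [← hmean, enorm_smul, ← mul_assoc, Real.enorm_of_nonneg (by positivity),
    ← ENNReal.ofReal_mul two_pi_pos.le, mul_inv_cancel₀ two_pi_pos.ne', ENNReal.ofReal_one,
    one_mul]
  exact enorm_integral_le_lintegral_enorm _

lemma enorm_le_setLIntegral_ball (hR : 0 ≤ R) (hh : DifferentiableOn ℂ h (ball z R))
    (hm : Measurable fun w => ‖h w‖ₑ) :
    ENNReal.ofReal (π * R ^ 2) * ‖h z‖ₑ ≤ ∫⁻ w in ball z R, ‖h w‖ₑ := by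
  have hm' : Measurable fun p : ℝ × ℝ => ‖h (circleMap z p.2 p.1)‖ₑ :=
    hm.comp (by fun_prop : Measurable fun p : ℝ × ℝ => circleMap z p.2 p.1)
  calc ENNReal.ofReal (π * R ^ 2) * ‖h z‖ₑ
      = ∫⁻ r in Ioo 0 R, ENNReal.ofReal r * (ENNReal.ofReal (2 * π) * ‖h z‖ₑ) := by
        rw [lintegral_mul_const _ (by fun_prop), lintegral_Ioo_zero_ofReal hR, ← mul_assoc,
          ← ENNReal.ofReal_mul (by positivity)]
        ring_nf
    _ ≤ ∫⁻ r in Ioo 0 R, ∫⁻ θ in Ioc 0 (2 * π),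
          ENNReal.ofReal r * ‖h (circleMap z r θ)‖ₑ := by
        refine setLIntegral_mono' measurableSet_Ioo fun r hr => ?_
        rw [lintegral_const_mul' _ _ ENNReal.ofReal_ne_top]
        gcongr
        exact enorm_le_lintegral_circleMap (Ioo_subset_Ico_self hr) hh
    _ = ∫⁻ w in ball z R, ‖h w‖ₑ := by
        rw [lintegral_ball_polar hm, lintegral_lintegral_swap]
        exact ((by fun_prop : Measurable fun p : ℝ × ℝ => ENNReal.ofReal p.1).mul
          (hm'.comp measurable_swap)).aemeasurable

end MeanValue

lemma enorm_sq_le_setLIntegral_ball {h : ℂ → ℂ} {z : ℂ} {R : ℝ} (hR : 0 < R)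
    (hh : DifferentiableOn ℂ h (ball z R)) (hm : Measurable h) :
    ‖h z‖ₑ ^ 2 ≤ ENNReal.ofReal (R⁻¹ ^ 2) * ∫⁻ w in ball z R, ‖h w‖ₑ ^ 2 := by
  have hmean := enorm_le_setLIntegral_ball (h := fun w => h w ^ 2) hR.le (hh.pow 2) (by fun_prop)
  simp only [enorm_pow] at hmean
  calc ‖h z‖ₑ ^ 2 ≤ ENNReal.ofReal (R⁻¹ ^ 2) * (ENNReal.ofReal (π * R ^ 2) * ‖h z‖ₑ ^ 2) := by
        rw [← mul_assoc, ← ENNReal.ofReal_mul (by positivity)]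
        refine le_mul_of_one_le_left zero_le (ENNReal.one_le_ofReal.2 ?_)
        have : R⁻¹ ^ 2 * (π * R ^ 2) = π := by field_simp
        linarith [pi_gt_three]
    _ ≤ _ := by gcongr

lemma lintegral_mul_enorm_sq_le_of_ball {X : Type*} [MeasurableSpace X] {μ : Measure X}
    [SFinite μ] {z : X → ℂ} {ρ : X → ℝ} {W : X → ℝ≥0∞} {U : Set ℂ} {C : ℝ≥0∞} {h : ℂ → ℂ}
    (hz : Measurable z) (hρ : Measurable ρ) (hW : Measurable W) (hU : MeasurableSet U)
    (hball : ∀ᵐ x ∂μ, 0 < ρ x ∧ ball (z x) (ρ x) ⊆ U)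
    (hC : ∀ w ∈ U, ∫⁻ x in {x | w ∈ ball (z x) (ρ x)}, ENNReal.ofReal ((ρ x)⁻¹ ^ 2) * W x ∂μ ≤ C)
    (hh : DifferentiableOn ℂ h U) (hm : Measurable h) :
    ∫⁻ x, W x * ‖h (z x)‖ₑ ^ 2 ∂μ ≤ C * ∫⁻ w in U, ‖h w‖ₑ ^ 2 := by
  set B : Set (X × ℂ) := {p | p.2 ∈ ball (z p.1) (ρ p.1)}
  have hB : MeasurableSet B :=
    measurableSet_lt (f := fun p : X × ℂ => dist p.2 (z p.1)) (by fun_prop) (by fun_prop)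
  set G : X × ℂ → ℝ≥0∞ := fun p => ENNReal.ofReal ((ρ p.1)⁻¹ ^ 2) * W p.1 * ‖h p.2‖ₑ ^ 2
  have hG : Measurable G := by fun_prop
  calc ∫⁻ x, W x * ‖h (z x)‖ₑ ^ 2 ∂μ ≤ ∫⁻ x, (∫⁻ w in U, B.indicator G (x, w)) ∂μ := by
        refine lintegral_mono_ae (hball.mono fun x ⟨hρx, hxU⟩ => ?_)
        calc W x * ‖h (z x)‖ₑ ^ 2 ≤ W x * (ENNReal.ofReal ((ρ x)⁻¹ ^ 2) *
              ∫⁻ w in ball (z x) (ρ x), ‖h w‖ₑ ^ 2) := by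
              gcongr
              exact enorm_sq_le_setLIntegral_ball hρx (hh.mono hxU) hm
          _ = ∫⁻ w in ball (z x) (ρ x), G (x, w) := by
              simp only [G]
              rw [lintegral_const_mul _ (by fun_prop), ← mul_assoc, mul_comm (W x)]
          _ = ∫⁻ w in U, (ball (z x) (ρ x)).indicator (fun w => G (x, w)) w := by
              rw [setLIntegral_indicator measurableSet_ball, inter_eq_left.2 hxU]
    _ = ∫⁻ w in U, (∫⁻ x, B.indicator G (x, w) ∂μ) :=
        lintegral_lintegral_swap (hG.indicator hB).aemeasurable
    _ ≤ ∫⁻ w in U, C * ‖h w‖ₑ ^ 2 := by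
        refine setLIntegral_mono' hU fun w hw => ?_
        calc ∫⁻ x, B.indicator G (x, w) ∂μ
            = ∫⁻ x in {x | w ∈ ball (z x) (ρ x)}, G (x, w) ∂μ := by
              exact lintegral_indicator (measurable_prodMk_right hB) fun x => G (x, w)
          _ ≤ C * ‖h w‖ₑ ^ 2 := by
              simp only [G]
              rw [lintegral_mul_const' _ _ (by finiteness)]
              gcongr
              exact hC w hw
    _ = C * ∫⁻ w in U, ‖h w‖ₑ ^ 2 := lintegral_const_mul _ (by fun_prop)

lemma setLIntegral_prod_mul_eq {X Y : Type*} [MeasurableSpace X] [MeasurableSpace Y]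
    {μ : Measure X} {ν : Measure Y} [SFinite μ] [SFinite ν] {B : Set (X × Y)} {f : X → ℝ≥0∞}
    {F : Y → ℝ≥0∞} (hB : MeasurableSet B) (hf : Measurable f) (hF : Measurable F) :
    ∫⁻ p in B, F p.2 * f p.1 ∂μ.prod ν =
      ∫⁻ y, F y * (∫⁻ x, {x | (x, y) ∈ B}.indicator f x ∂μ) ∂ν := by
  rw [← lintegral_indicator hB, lintegral_prod_symm' _ (Measurable.indicator (by fun_prop) hB)]
  refine lintegral_congr fun y => ?_
  rw [← lintegral_const_mul (F y) (hf.indicator (s := {x | (x, y) ∈ B})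
    (measurable_prodMk_right hB))]
  refine lintegral_congr fun x => ?_
  by_cases hx : (x, y) ∈ B <;> simp [indicator, hx]

/-- A `2π`-periodic density satisfying a Morrey (Carleson-type) growth condition: its mass on an
interval of radius `R` is `O(R ^ d)`. -/
structure IsMorreyDensity (b : ℝ → ℝ≥0∞) (C : ℝ≥0∞) (d : ℝ) : Prop where
  measurable : Measurable b
  periodic : Function.Periodic b (2 * π)
  setLIntegral_ball_le : ∀ p R, 0 < R → R ≤ 2 * π →
    ∫⁻ θ in ball p R, b θ ≤ C * ENNReal.ofReal (R ^ d)

section BoxEmbedding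

variable {b : ℝ → ℝ≥0∞} {C : ℝ≥0∞} {d s θ : ℝ} {w : ℂ}

lemma inv_half_sq_mul_rpow_mul (hs : 0 < s) :
    (s / 2)⁻¹ ^ 2 * s ^ (1 - d) * (9 * s) ^ d = 4 * 9 ^ d * s⁻¹ := by
  rw [mul_rpow (by norm_num) hs.le, rpow_sub hs, rpow_one]
  field_simp
  norm_num

lemma mem_Ioo_of_mem_ball_circleMap (hs : s ≤ 1) (hw : w ∈ ball (circleMap 0 (1 - s) θ) (s / 2)) :
    s ∈ Ioo (2 / 3 * (1 - ‖w‖)) (2 * (1 - ‖w‖)) := by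
  have hdist := (abs_norm_sub_norm_le _ _).trans_lt (mem_ball_iff_norm.1 hw)
  rw [norm_circleMap_one_sub hs, abs_lt] at hdist
  constructor <;> linarith

lemma abs_sub_arg_lt_of_mem_ball_circleMap (hs : s ∈ Ioc 0 1)
    (hw : w ∈ ball (circleMap 0 (1 - s) θ) (s / 2)) (hw1 : ‖w‖ < 1) (hθ : |θ - w.arg| ≤ π) :
    |θ - w.arg| < 9 * s := by
  have hpolar : circleMap 0 (1 - (1 - ‖w‖)) w.arg = w := by
    rw [sub_sub_cancel, circleMap_zero, Complex.norm_mul_exp_arg_mul_I]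
  have hlower := le_norm_cpt_sub_circleMap (y := 1 - ‖w‖) ⟨by linarith, by simp⟩ hθ
  rw [hpolar] at hlower
  have hradial : ‖cpt θ - circleMap 0 (1 - s) θ‖ = s := by
    rw [circleMap_zero, ← cpt, ← one_sub_mul, norm_mul, norm_cpt, mul_one]
    simp [abs_of_pos hs.1]
  have htriangle := norm_sub_le_norm_sub_add_norm_sub (cpt θ) (circleMap 0 (1 - s) θ) w
  rw [hradial] at htriangle
  linarith [mem_ball_iff_norm'.1 hw]

lemma IsMorreyDensity.setLIntegral_mem_ball_circleMap_le (hb : IsMorreyDensity b C d) (hd : 0 ≤ d)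
    (hw : ‖w‖ < 1) (hs : s ∈ Ioc 0 1) :
    ∫⁻ θ in Ioc 0 (2 * π), {θ | w ∈ ball (circleMap 0 (1 - s) θ) (s / 2)}.indicator b θ ≤
      C * ENNReal.ofReal ((9 * s) ^ d) := by
  set R := min (9 * s) (2 * π)
  have hR : 0 < R := lt_min (by linarith [hs.1]) two_pi_pos
  set S := {θ | w ∈ ball (circleMap 0 (1 - s) θ) (s / 2)}
  have hmem : ∀ θ, θ + 2 * π ∈ S ↔ θ ∈ S := fun θ => by
    simp only [S, mem_ofPred_eq, periodic_circleMap 0 _ θ]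
  have hper : Function.Periodic (S.indicator b) (2 * π) := fun θ => by
    by_cases hθ : θ ∈ S
    · rw [indicator_of_mem hθ, indicator_of_mem ((hmem θ).2 hθ), hb.periodic]
    · rw [indicator_of_notMem hθ, indicator_of_notMem (mt (hmem θ).1 hθ)]
  calc ∫⁻ θ in Ioc 0 (2 * π), S.indicator b θ = ∫⁻ θ in period w.arg, S.indicator b θ :=
        (setLIntegral_period hper _).symm
    _ ≤ ∫⁻ θ in period w.arg, (ball w.arg R).indicator b θ := by
        refine setLIntegral_mono' measurableSet_Ioc fun θ hθ => ?_
        refine indicator_apply_le' (fun hθS => ?_) fun _ => zero_le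
        have hθ := abs_sub_le_of_mem_period hθ
        rw [indicator_of_mem]
        exact lt_min (abs_sub_arg_lt_of_mem_ball_circleMap hs hθS hw hθ) (by linarith [pi_pos])
    _ ≤ ∫⁻ θ in ball w.arg R, b θ := by
        rw [← lintegral_indicator measurableSet_ball]
        exact setLIntegral_le_lintegral _ _
    _ ≤ C * ENNReal.ofReal (R ^ d) := hb.setLIntegral_ball_le _ _ hR (min_le_right _ _)
    _ ≤ C * ENNReal.ofReal ((9 * s) ^ d) := by
        gcongr
        exact min_le_left _ _

lemma IsMorreyDensity.lintegral_mem_ball_circleMap_le (hb : IsMorreyDensity b C d) (hd : 0 ≤ d)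
    (hw : ‖w‖ < 1) :
    ∫⁻ x in {x : ℝ × ℝ | w ∈ ball (circleMap 0 (1 - x.2) x.1) (x.2 / 2)},
      ENNReal.ofReal ((x.2 / 2)⁻¹ ^ 2) * (b x.1 * ENNReal.ofReal (x.2 ^ (1 - d)))
        ∂(volume.restrict (Ioc 0 (2 * π))).prod (volume.restrict (Ioo 0 1)) ≤
      C * ENNReal.ofReal (8 * 9 ^ d) := by
  have hbm := hb.measurable
  set I := Ioo (2 / 3 * (1 - ‖w‖)) (2 * (1 - ‖w‖))
  have hy : 0 < 1 - ‖w‖ := sub_pos.2 hw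
  have hB : MeasurableSet {x : ℝ × ℝ | w ∈ ball (circleMap 0 (1 - x.2) x.1) (x.2 / 2)} :=
    measurableSet_lt (f := fun x : ℝ × ℝ => dist w (circleMap 0 (1 - x.2) x.1))
      (by fun_prop) (by fun_prop)
  calc _ = ∫⁻ s in Ioo 0 1, ENNReal.ofReal ((s / 2)⁻¹ ^ 2) * ENNReal.ofReal (s ^ (1 - d)) *
        ∫⁻ θ in Ioc 0 (2 * π), {θ | w ∈ ball (circleMap 0 (1 - s) θ) (s / 2)}.indicator b θ := by
        simp only [mul_comm (b _), ← mul_assoc]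
        exact setLIntegral_prod_mul_eq (F := fun s => ENNReal.ofReal ((s / 2)⁻¹ ^ 2) *
          ENNReal.ofReal (s ^ (1 - d))) hB hbm (by fun_prop)
    _ ≤ ∫⁻ s in Ioo 0 1, I.indicator
          (fun s => C * ENNReal.ofReal (4 * 9 ^ d) * ENNReal.ofReal s⁻¹) s := by
        refine setLIntegral_mono' measurableSet_Ioo fun s hs => ?_
        by_cases hsI : s ∈ I
        · have hs0 := hs.1
          rw [indicator_of_mem hsI]
          grw [hb.setLIntegral_mem_ball_circleMap_le hd hw (Ioo_subset_Ioc_self hs)]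
          rw [mul_left_comm, mul_assoc C, ← ENNReal.ofReal_mul (by positivity),
            ← ENNReal.ofReal_mul (by positivity), ← ENNReal.ofReal_mul (by positivity),
            inv_half_sq_mul_rpow_mul hs0]
        · have hempty : {θ | w ∈ ball (circleMap 0 (1 - s) θ) (s / 2)} = ∅ :=
            eq_empty_of_forall_notMem fun θ hθ => hsI (mem_Ioo_of_mem_ball_circleMap hs.2.le hθ)
          simp only [hempty, indicator_empty, lintegral_zero, mul_zero, zero_le]
    _ ≤ ∫⁻ s in I, C * ENNReal.ofReal (4 * 9 ^ d) * ENNReal.ofReal s⁻¹ :=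
        (setLIntegral_le_lintegral _ _).trans_eq (lintegral_indicator measurableSet_Ioo _)
    _ = C * ENNReal.ofReal (4 * 9 ^ d * log 3) := by
        rw [lintegral_const_mul _ (by fun_prop), lintegral_Ioo_inv (by positivity) (by linarith),
          mul_assoc, ← ENNReal.ofReal_mul (by positivity)]
        congr 4
        field_simp
    _ ≤ C * ENNReal.ofReal (8 * 9 ^ d) := by
        gcongr C * ENNReal.ofReal ?_
        have hlog : log 3 ≤ 2 := (log_le_sub_one_of_pos (by norm_num)).trans (by norm_num)
        nlinarith [rpow_pos_of_pos (show (0 : ℝ) < 9 by norm_num) d]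

theorem IsMorreyDensity.lintegral_mul_enorm_sq_circleMap_le (hb : IsMorreyDensity b C d)
    (hd : 0 ≤ d) {h : ℂ → ℂ} (hh : DifferentiableOn ℂ h (ball 0 1)) (hm : Measurable h) :
    ∫⁻ θ in Ioc 0 (2 * π), b θ * ∫⁻ s in Ioo 0 1,
      ENNReal.ofReal (s ^ (1 - d)) * ‖h (circleMap 0 (1 - s) θ)‖ₑ ^ 2 ≤
      C * ENNReal.ofReal (8 * 9 ^ d) * ∫⁻ w in ball 0 1, ‖h w‖ₑ ^ 2 := by
  have hbm := hb.measurable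
  set μ := (volume.restrict (Ioc 0 (2 * π))).prod (volume.restrict (Ioo (0 : ℝ) 1))
  have hball : ∀ᵐ x ∂μ, 0 < x.2 / 2 ∧ ball (circleMap 0 (1 - x.2) x.1) (x.2 / 2) ⊆ ball 0 1 := by
    have hs : ∀ᵐ x ∂μ, x.2 ∈ Ioo (0 : ℝ) 1 :=
      Measure.quasiMeasurePreserving_snd.ae (ae_restrict_mem measurableSet_Ioo)
    refine hs.mono fun x hx => ⟨half_pos hx.1, ball_subset_ball' ?_⟩
    rw [dist_zero_right, norm_circleMap_one_sub hx.2.le]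
    linarith [hx.1]
  calc _ = ∫⁻ x, b x.1 * ENNReal.ofReal (x.2 ^ (1 - d)) *
        ‖h (circleMap 0 (1 - x.2) x.1)‖ₑ ^ 2 ∂μ := by
        rw [lintegral_prod _ (by fun_prop)]
        refine lintegral_congr fun θ => ?_
        rw [← lintegral_const_mul _ (by fun_prop)]
        simp only [mul_assoc]
    _ ≤ _ := lintegral_mul_enorm_sq_le_of_ball (by fun_prop) (by fun_prop) (by fun_prop)
        measurableSet_ball hball
        (fun w hw => hb.lintegral_mem_ball_circleMap_le hd (mem_ball_zero_iff.1 hw)) hh hm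

end BoxEmbedding

/-! ### Multipliers of the Dirichlet space -/

lemma ennreal_add_sq_le (a b : ℝ≥0∞) : (a + b) ^ 2 ≤ 2 * (a ^ 2 + b ^ 2) := by
  have h := ENNReal.rpow_add_le_mul_rpow_add_rpow a b one_le_two
  norm_num at h
  exact h

lemma sq_lintegral_mul_le {X : Type*} [MeasurableSpace X] {μ : Measure X} {f g : X → ℝ≥0∞}
    (hf : AEMeasurable f μ) (hg : AEMeasurable g μ) :
    (∫⁻ x, f x * g x ∂μ) ^ 2 ≤ (∫⁻ x, f x ^ 2 ∂μ) * ∫⁻ x, g x ^ 2 ∂μ := by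
  have holder := ENNReal.lintegral_mul_le_Lp_mul_Lq μ .two_two hf hg
  simp only [Pi.mul_apply, ENNReal.rpow_two] at holder
  calc (∫⁻ x, f x * g x ∂μ) ^ 2
      ≤ ((∫⁻ x, f x ^ 2 ∂μ) ^ (1 / 2 : ℝ) * (∫⁻ x, g x ^ 2 ∂μ) ^ (1 / 2 : ℝ)) ^ 2 := by gcongr
    _ = _ := by
      rw [mul_pow, ← ENNReal.rpow_mul_natCast, ← ENNReal.rpow_mul_natCast]
      norm_num

lemma sq_setLIntegral_Ioo_le {F : ℝ → ℝ≥0∞} (hF : Measurable F) {d : ℝ} (hd : 0 < d) :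
    (∫⁻ s in Ioo 0 1, F s) ^ 2 ≤
      ENNReal.ofReal (1 / d) * ∫⁻ s in Ioo 0 1, ENNReal.ofReal (s ^ (1 - d)) * F s ^ 2 := by
  have hsq : ∀ p : ℝ, ∀ s ∈ Ioo (0 : ℝ) 1,
      ENNReal.ofReal (s ^ (p / 2)) ^ 2 = ENNReal.ofReal (s ^ p) := fun p s hs => by
    rw [← ENNReal.ofReal_pow (rpow_nonneg hs.1.le _), ← rpow_mul_natCast hs.1.le, Nat.cast_two,
      div_mul_cancel₀ _ two_ne_zero]
  have hsplit : ∀ s ∈ Ioo (0 : ℝ) 1, F s = ENNReal.ofReal (s ^ ((d - 1) / 2)) *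
      (ENNReal.ofReal (s ^ ((1 - d) / 2)) * F s) := fun s hs => by
    rw [← mul_assoc, ← ENNReal.ofReal_mul (rpow_nonneg hs.1.le _), ← rpow_add hs.1,
      ← add_div, sub_add_sub_cancel', sub_self, zero_div, rpow_zero, ENNReal.ofReal_one, one_mul]
  rw [setLIntegral_congr_fun measurableSet_Ioo hsplit]
  grw [sq_lintegral_mul_le (by fun_prop) (by fun_prop)]
  simp only [mul_pow]
  rw [setLIntegral_congr_fun measurableSet_Ioo (hsq (d - 1)),
    setLIntegral_congr_fun measurableSet_Ioo fun s hs => congrArg (· * F s ^ 2) (hsq (1 - d) s hs),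
    lintegral_Ioo_rpow (by linarith) zero_le_one, sub_add_cancel, one_rpow]

lemma setLIntegral_Ioo_const_sub (F : ℝ → ℝ≥0∞) (a b c : ℝ) :
    ∫⁻ x in Ioo a b, F (c - x) = ∫⁻ x in Ioo (c - b) (c - a), F x := by
  have h := (Measure.measurePreserving_sub_left volume c).setLIntegral_comp_preimage_emb
    (MeasurableEquiv.subLeft c).measurableEmbedding F (Ioo (c - b) (c - a))
  rwa [preimage_const_sub_Ioo, sub_sub_cancel, sub_sub_cancel] at h

lemma integrableOn_norm_sq_iff {X V : Type*} [MeasurableSpace X] {μ : Measure X}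
    [NormedAddCommGroup V] {S : Set X} {F : X → V} (hF : AEStronglyMeasurable F (μ.restrict S)) :
    IntegrableOn (fun x => ‖F x‖ ^ 2) S μ ↔ ∫⁻ x in S, ‖F x‖ₑ ^ 2 ∂μ < ∞ := by
  simp only [IntegrableOn, Integrable, HasFiniteIntegral, enorm_pow, enorm_norm]
  exact and_iff_right (hF.norm.pow 2)

section Growth

variable {V : Type*} [NormedAddCommGroup V] [NormedSpace ℂ V] [CompleteSpace V] {g : ℂ → V}
  {a b : ℝ}

lemma enorm_sub_le_lintegral_path {U : Set ℂ} {γ γ' : ℝ → ℂ} (hU : IsOpen U)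
    (hg : DifferentiableOn ℂ g U) (hab : a ≤ b) (hγ : ∀ t ∈ Icc a b, HasDerivAt γ (γ' t) t)
    (hγ' : ContinuousOn γ' (Icc a b)) (hγU : MapsTo γ (Icc a b) U)
    (hle : ∀ t ∈ Icc a b, ‖γ' t‖ ≤ 1) :
    ‖g (γ b) - g (γ a)‖ₑ ≤ ∫⁻ t in Ioo a b, ‖deriv g (γ t)‖ₑ := by
  have hd : ∀ t ∈ Icc a b, HasDerivAt (g ∘ γ) (γ' t • deriv g (γ t)) t := fun t ht =>
    (hg.differentiableAt (hU.mem_nhds (hγU ht))).hasDerivAt.scomp t (hγ t ht)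
  have hc : ContinuousOn (fun t => γ' t • deriv g (γ t)) (Icc a b) :=
    hγ'.smul ((hg.deriv hU).continuousOn.comp (HasDerivAt.continuousOn hγ) hγU)
  rw [← uIcc_of_le hab] at hd hc
  have hftc := intervalIntegral.integral_eq_sub_of_hasDerivAt hd hc.intervalIntegrable
  rw [intervalIntegral.integral_of_le hab] at hftc
  rw [← Function.comp_apply (f := g), ← Function.comp_apply (f := g), ← hftc,
    Measure.restrict_congr_set Ioo_ae_eq_Ioc]
  refine (enorm_integral_le_lintegral_enorm _).trans ?_
  refine setLIntegral_mono' measurableSet_Ioc fun t ht => ?_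
  rw [enorm_smul]
  refine mul_le_of_le_one_left zero_le ?_
  rw [← ofReal_norm]
  exact ENNReal.ofReal_le_one.2 (hle t (Ioc_subset_Icc_self ht))

lemma enorm_sub_le_lintegral_radius (hg : DifferentiableOn ℂ g unitDisc) (ha : 0 < a) (hab : a ≤ b)
    (hb : b ≤ 1) (θ : ℝ) :
    ‖g (circleMap 0 (1 - b) θ) - g (circleMap 0 (1 - a) θ)‖ₑ ≤
      ∫⁻ y in Ioo a b, ‖deriv g (circleMap 0 (1 - y) θ)‖ₑ := by
  refine enorm_sub_le_lintegral_path (γ := fun y => circleMap 0 (1 - y) θ) (γ' := fun _ => -cpt θ)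
    isOpen_ball hg hab (fun y _ => ?_) continuousOn_const
    (fun y hy => circleMap_one_sub_mem_unitDisc ⟨ha.trans_le hy.1, hy.2.trans hb⟩ θ)
    fun y _ => by rw [norm_neg, norm_cpt]
  simpa [circleMap, cpt] using
    ((hasDerivAt_id y).const_sub 1).ofReal_comp.mul_const (cpt θ)

lemma enorm_circleMap_le {r : ℝ} (hg : DifferentiableOn ℂ g unitDisc) (hr : r ∈ Ico 0 1) (θ : ℝ) :
    ‖g (circleMap 0 r θ)‖ₑ ≤ ‖g 0‖ₑ + ∫⁻ s in Ioo 0 1, ‖deriv g (circleMap 0 (1 - s) θ)‖ₑ := by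
  have hradius := enorm_sub_le_lintegral_radius hg (sub_pos.2 hr.2) (sub_le_self 1 hr.1) le_rfl θ
  rw [sub_self, sub_sub_cancel, circleMap_zero_radius, Function.const_apply, enorm_sub_rev]
    at hradius
  calc ‖g (circleMap 0 r θ)‖ₑ = ‖g 0 + (g (circleMap 0 r θ) - g 0)‖ₑ := by rw [add_sub_cancel]
    _ ≤ ‖g 0‖ₑ + ‖g (circleMap 0 r θ) - g 0‖ₑ := enorm_add_le _ _
    _ ≤ _ := by
        grw [hradius]
        gcongr
        linarith [hr.2]

lemma enorm_sq_circleMap_le {r d : ℝ} [MeasurableSpace V] [BorelSpace V]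
    (hg : DifferentiableOn ℂ g unitDisc) (hr : r ∈ Ico 0 1) (hd : 0 < d) (θ : ℝ) :
    ‖g (circleMap 0 r θ)‖ₑ ^ 2 ≤ 2 * (‖g 0‖ₑ ^ 2 + ENNReal.ofReal (1 / d) *
      ∫⁻ s in Ioo 0 1, ENNReal.ofReal (s ^ (1 - d)) * ‖deriv g (circleMap 0 (1 - s) θ)‖ₑ ^ 2) := by
  grw [enorm_circleMap_le hg hr θ, ennreal_add_sq_le, sq_setLIntegral_Ioo_le _ hd]
  exact ((measurable_deriv g).comp (by fun_prop)).enorm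

end Growth

/-- The part of the Dirichlet energy `∫ ‖f'‖²` of the disc carried by the radius at angle `θ`. The
weight `r` is the Jacobian of polar coordinates. -/
noncomputable def radialEnergy (f : ℂ → ℂ) (θ : ℝ) : ℝ≥0∞ :=
  ∫⁻ r in Ioo 0 1, ENNReal.ofReal r * ‖deriv f (circleMap 0 r θ)‖ₑ ^ 2

section RadialEnergy

variable {f g : ℂ → ℂ} {C : ℝ≥0∞} {M d : ℝ}

lemma measurable_radialEnergy (f : ℂ → ℂ) : Measurable (radialEnergy f) := by
  have := measurable_deriv f
  exact Measurable.lintegral_prod_right' (f := fun q : ℝ × ℝ =>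
    ENNReal.ofReal q.2 * ‖deriv f (circleMap 0 q.2 q.1)‖ₑ ^ 2) (by fun_prop)

lemma periodic_radialEnergy (f : ℂ → ℂ) : Function.Periodic (radialEnergy f) (2 * π) := fun θ => by
  simp only [radialEnergy, periodic_circleMap 0 _ θ]

lemma lintegral_radialEnergy (f : ℂ → ℂ) :
    ∫⁻ θ in Ioc 0 (2 * π), radialEnergy f θ = ∫⁻ z in unitDisc, ‖deriv f z‖ₑ ^ 2 := by
  have := measurable_deriv f
  rw [unitDisc, lintegral_ball_polar (by fun_prop)]
  rfl

lemma IsMorreyDensity.setLIntegral_ne_top {b : ℝ → ℝ≥0∞} (hb : IsMorreyDensity b C d)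
    (hC : C ≠ ∞) : ∫⁻ θ in Ioc 0 (2 * π), b θ ≠ ∞ := by
  refine ne_top_of_le_ne_top (ENNReal.mul_ne_top hC ENNReal.ofReal_ne_top)
    (le_trans (lintegral_mono_set fun θ hθ => ?_)
      (hb.setLIntegral_ball_le π (2 * π) two_pi_pos le_rfl))
  rw [mem_ball, dist_eq, abs_lt]
  constructor <;> linarith [hθ.1, hθ.2, pi_pos]

lemma setLIntegral_enorm_deriv_sq_mul_lt_top (hb : IsMorreyDensity (radialEnergy f) C d)
    (hC : C ≠ ∞) (hd : 0 < d) (hg : DifferentiableOn ℂ g unitDisc)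
    (hgd : ∫⁻ z in unitDisc, ‖deriv g z‖ₑ ^ 2 < ∞) (hgm : Measurable (unitDisc.indicator g)) :
    ∫⁻ z in unitDisc, ‖deriv f z‖ₑ ^ 2 * ‖unitDisc.indicator g z‖ₑ ^ 2 < ∞ := by
  have _ := measurable_deriv f
  have hg'm := measurable_deriv g
  set D : ℝ → ℝ≥0∞ := fun θ =>
    ∫⁻ s in Ioo 0 1, ENNReal.ofReal (s ^ (1 - d)) * ‖deriv g (circleMap 0 (1 - s) θ)‖ₑ ^ 2
  have hDm : Measurable D := Measurable.lintegral_prod_right' (f := fun q : ℝ × ℝ =>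
    ENNReal.ofReal (q.2 ^ (1 - d)) * ‖deriv g (circleMap 0 (1 - q.2) q.1)‖ₑ ^ 2) (by fun_prop)
  have hradius : ∀ θ, ∫⁻ r in Ioo 0 1, ENNReal.ofReal r * (‖deriv f (circleMap 0 r θ)‖ₑ ^ 2 *
        ‖unitDisc.indicator g (circleMap 0 r θ)‖ₑ ^ 2) ≤
      radialEnergy f θ * (2 * (‖g 0‖ₑ ^ 2 + ENNReal.ofReal (1 / d) * D θ)) := fun θ => by
    rw [radialEnergy, ← lintegral_mul_const _ (by fun_prop)]
    refine setLIntegral_mono' measurableSet_Ioo fun r hr => ?_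
    rw [← mul_assoc, indicator_of_mem
      (by rw [unitDisc, mem_ball_zero_iff, norm_circleMap_zero, abs_of_pos hr.1]; exact hr.2)]
    gcongr
    exact enorm_sq_circleMap_le hg ⟨hr.1.le, hr.2⟩ hd θ
  rw [unitDisc, lintegral_ball_polar (by fun_prop)]
  calc _ ≤ ∫⁻ θ in Ioc 0 (2 * π),
          radialEnergy f θ * (2 * (‖g 0‖ₑ ^ 2 + ENNReal.ofReal (1 / d) * D θ)) :=
        lintegral_mono hradius
    _ = 2 * ‖g 0‖ₑ ^ 2 * (∫⁻ θ in Ioc 0 (2 * π), radialEnergy f θ) +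
          2 * ENNReal.ofReal (1 / d) * ∫⁻ θ in Ioc 0 (2 * π), radialEnergy f θ * D θ := by
        have := hb.measurable
        rw [← lintegral_const_mul _ this, ← lintegral_const_mul _ (by fun_prop),
          ← lintegral_add_left (by fun_prop)]
        exact lintegral_congr fun θ => by ring
    _ < ∞ := by
        have hembed := hb.lintegral_mul_enorm_sq_circleMap_le hd.le (hg.deriv isOpen_ball) hg'm
        have htotal := hb.setLIntegral_ne_top hC
        grw [hembed]
        finiteness [hgd.ne]

lemma exists_setIntegral_norm_mul_sq_le (hf : ContinuousOn f unitDisc)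
    (hM : ∀ z ∈ unitDisc, ‖f z‖ ≤ M) (hg : ContinuousOn g unitDisc)
    (hH : ∃ A, ∀ r ∈ Ioo (0 : ℝ) 1, ∫ θ in Ioc 0 (2 * π), ‖g (r * cpt θ)‖ ^ 2 ≤ A) :
    ∃ A, ∀ r ∈ Ioo (0 : ℝ) 1, ∫ θ in Ioc 0 (2 * π), ‖f (r * cpt θ) * g (r * cpt θ)‖ ^ 2 ≤ A := by
  obtain ⟨A, hA⟩ := hH
  refine ⟨M ^ 2 * A, fun r hr => ?_⟩
  have hmem : ∀ θ, r * cpt θ ∈ unitDisc := fun θ => by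
    rw [unitDisc, mem_ball_zero_iff, norm_mul, norm_cpt, mul_one, Complex.norm_of_nonneg hr.1.le]
    exact hr.2
  have hcont : Continuous fun θ => (r : ℂ) * cpt θ := continuous_const.mul continuous_cpt
  have hgc := hg.comp_continuous hcont hmem
  have hfc := hf.comp_continuous hcont hmem
  have hintegrable : ∀ {F : ℝ → ℝ}, Continuous F → IntegrableOn F (Ioc 0 (2 * π)) := fun hF =>
    (hF.intervalIntegrable 0 (2 * π)).1
  calc _ ≤ ∫ θ in Ioc 0 (2 * π), M ^ 2 * ‖g (r * cpt θ)‖ ^ 2 := by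
        refine setIntegral_mono (hintegrable ((hfc.mul hgc).norm.pow 2))
          (hintegrable (continuous_const.mul (hgc.norm.pow 2))) fun θ => ?_
        simp only [norm_mul, mul_pow]
        gcongr
        exact hM _ (hmem θ)
    _ ≤ M ^ 2 * A := by
        rw [integral_const_mul]
        gcongr
        exact hA r hr

theorem isMultiplierD_of_isMorreyDensity (hf : DifferentiableOn ℂ f unitDisc)
    (hM : ∀ z ∈ unitDisc, ‖f z‖ ≤ M) (hd : 0 < d) (hC : C ≠ ∞)
    (hb : IsMorreyDensity (radialEnergy f) C d) : IsMultiplierD f := by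
  rintro g ⟨hg, hgH, hgd⟩
  refine ⟨hf.mul hg,
    exists_setIntegral_norm_mul_sq_le hf.continuousOn hM hg.continuousOn hgH, ?_⟩
  have hopen : IsOpen unitDisc := isOpen_ball
  have hg'm := measurable_deriv g
  rw [integrableOn_norm_sq_iff (by fun_prop)] at hgd
  rw [integrableOn_norm_sq_iff (measurable_deriv _).aestronglyMeasurable]
  have hgm : Measurable (unitDisc.indicator g) := by
    classical
    rw [← piecewise_eq_indicator]
    exact hg.continuousOn.measurable_piecewise continuousOn_const hopen.measurableSet
  have hprod := setLIntegral_enorm_deriv_sq_mul_lt_top hb hC hd hg hgd hgm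
  have hpoint : ∀ z ∈ unitDisc, ‖deriv (fun z => f z * g z) z‖ₑ ^ 2 ≤
      2 * (‖deriv f z‖ₑ ^ 2 * ‖unitDisc.indicator g z‖ₑ ^ 2 +
        ENNReal.ofReal M ^ 2 * ‖deriv g z‖ₑ ^ 2) := fun z hz => by
    rw [deriv_fun_mul (hf.differentiableAt (hopen.mem_nhds hz))
      (hg.differentiableAt (hopen.mem_nhds hz)), indicator_of_mem hz, ← mul_pow, ← mul_pow]
    refine le_trans ?_ (ennreal_add_sq_le _ _)
    grw [enorm_add_le, enorm_mul, enorm_mul, ← ofReal_norm (f z), hM z hz]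
  refine (setLIntegral_mono' hopen.measurableSet hpoint).trans_lt ?_
  have _ := measurable_deriv f
  rw [lintegral_const_mul _ (by fun_prop), lintegral_add_left (by fun_prop),
    lintegral_const_mul _ (by fun_prop)]
  finiteness [hprod.ne, hgd.ne]

end RadialEnergy

/-! ### The Dirichlet energy of an outer function over boxes -/

section Boxes

variable {δ ω : ℝ → ℝ} {E : Set ℂ} {d K p R : ℝ}

lemma antitone_tailEnergy (ω : ℝ → ℝ) : Antitone (tailEnergy ω) := fun s t hst =>
  lintegral_mono_set (Ioo_subset_Ioo_left (by linarith))

lemma lintegral_tailEnergy_comp {X : Type*} [MeasurableSpace X] {μ : Measure X} [SFinite μ]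
    {g : X → ℝ} (hg : Measurable g) (hg0 : ∀ᵐ x ∂μ, 0 ≤ g x) (ω : ℝ → ℝ) :
    ∫⁻ x, tailEnergy ω (g x) ∂μ = ∫⁻ u in Ioo 0 2,
      ENNReal.ofReal (u ^ (-(1 / 2) : ℝ) * deriv ω u ^ 2) * μ {x | g x < 2 * u} := by
  have _ := measurable_deriv ω
  have hhalf : ∀ x u, g x / 2 < u ↔ g x < 2 * u := fun x u => div_lt_iff₀' two_pos
  simp only [← hhalf]
  rw [← lintegral_lintegral_inter_Ioi (hg.div_const 2) (by fun_prop)]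
  refine lintegral_congr_ae ?_
  filter_upwards [hg0] with x hx
  rw [tailEnergy, Ioo_inter_Ioi, max_eq_right (by linarith)]

lemma setLIntegral_inter_rpow_neg_half_le {s : ℝ} (hs : 0 ≤ s) :
    ∫⁻ y in Ioo 0 1 ∩ Iio s, ENNReal.ofReal (y ^ (-(1 / 2) : ℝ)) ≤
      ENNReal.ofReal (s ^ (1 / 2 : ℝ) * 2) := by
  calc _ ≤ ∫⁻ y in Ioo 0 s, ENNReal.ofReal (y ^ (-(1 / 2) : ℝ)) :=
        lintegral_mono_set fun y hy => ⟨hy.1.1, hy.2⟩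
    _ = _ := by
        rw [lintegral_Ioo_rpow (by norm_num) hs]
        norm_num
        ring_nf

lemma IsRegularDist.prod_withDensity_max_lt_le (h : IsRegularDist δ d K) (hR : 0 < R)
    (hRπ : R ≤ 2 * π) {s : ℝ} (hs : 0 < s) :
    (volume.restrict (ball p R)).prod ((volume.restrict (Ioo 0 1)).withDensity
        fun y => ENNReal.ofReal (y ^ (-(1 / 2) : ℝ))) {q | max (δ q.1) q.2 < s} ≤
      ENNReal.ofReal (K * R ^ d * (s ^ (1 - d) * (s ^ (1 / 2 : ℝ) * 2))) := by
  have hrect : {q : ℝ × ℝ | max (δ q.1) q.2 < s} = {θ | δ θ < s} ×ˢ Iio s := by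
    ext q
    simp
  rw [hrect, Measure.prod_prod,
    Measure.restrict_apply (measurableSet_lt h.continuous.measurable measurable_const),
    withDensity_apply _ measurableSet_Iio, Measure.restrict_restrict measurableSet_Iio,
    inter_comm, inter_comm (Iio s)]
  grw [h.volume_le p R s hR hRπ hs, setLIntegral_inter_rpow_neg_half_le hs.le]
  have := h.const_pos
  rw [← ENNReal.ofReal_mul (by positivity)]
  exact le_of_eq (by ring_nf)

lemma rpow_neg_half_mul_mul_le {u : ℝ} (hu : 0 < u) (hd : 0 < d) :
    u ^ (-(1 / 2) : ℝ) * ((2 * u) ^ (1 - d) * ((2 * u) ^ (1 / 2 : ℝ) * 2)) ≤ 8 * u ^ (1 - d) := by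
  have htwo : ∀ e ≤ (1 : ℝ), (2 : ℝ) ^ e ≤ 2 := fun e he =>
    (rpow_le_rpow_of_exponent_le one_le_two he).trans_eq (rpow_one 2)
  have hcancel : u ^ (-(1 / 2) : ℝ) * u ^ (1 / 2 : ℝ) = 1 := by
    rw [← rpow_add hu, neg_add_cancel, rpow_zero]
  rw [mul_rpow zero_le_two hu.le, mul_rpow zero_le_two hu.le]
  calc _ = 2 ^ (1 - d) * 2 ^ (1 / 2 : ℝ) * (2 * u ^ (1 - d)) *
          (u ^ (-(1 / 2) : ℝ) * u ^ (1 / 2 : ℝ)) := by ring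
    _ ≤ 2 * 2 * (2 * u ^ (1 - d)) * 1 := by
        rw [hcancel]
        gcongr
        · exact htwo _ (by linarith)
        · exact htwo _ (by norm_num)
    _ = 8 * u ^ (1 - d) := by ring

lemma IsRegularDist.lintegral_tailEnergy_max_le (h : IsRegularDist δ d K) (ω : ℝ → ℝ) (hR : 0 < R)
    (hRπ : R ≤ 2 * π) :
    ∫⁻ θ in ball p R, ∫⁻ y in Ioo 0 1,
      ENNReal.ofReal (y ^ (-(1 / 2) : ℝ)) * tailEnergy ω (max (δ θ) y) ≤
      ENNReal.ofReal (8 * K * R ^ d) *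
        ∫⁻ u in Ioo 0 2, ENNReal.ofReal (deriv ω u ^ 2 * u ^ (1 - d)) := by
  have hδ := h.continuous.measurable
  have htail := (antitone_tailEnergy ω).measurable
  set w : ℝ → ℝ≥0∞ := fun y => ENNReal.ofReal (y ^ (-(1 / 2) : ℝ))
  have hw : Measurable w := by fun_prop
  set ν := (volume.restrict (Ioo 0 1)).withDensity w
  set μ := (volume.restrict (ball p R)).prod ν
  have hpos : ∀ᵐ q ∂μ, 0 ≤ max (δ q.1) q.2 := .of_forall fun q =>
    (h.nonneg q.1).trans (le_max_left _ _)
  calc _ = ∫⁻ q, tailEnergy ω (max (δ q.1) q.2) ∂μ := by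
        rw [lintegral_prod _ (by fun_prop)]
        refine lintegral_congr fun θ => ?_
        rw [lintegral_withDensity_eq_lintegral_mul _ hw (by fun_prop)]
        rfl
    _ = ∫⁻ u in Ioo 0 2, ENNReal.ofReal (u ^ (-(1 / 2) : ℝ) * deriv ω u ^ 2) *
          μ {q | max (δ q.1) q.2 < 2 * u} := lintegral_tailEnergy_comp (by fun_prop) hpos ω
    _ ≤ ∫⁻ u in Ioo 0 2,
          ENNReal.ofReal (8 * K * R ^ d) * ENNReal.ofReal (deriv ω u ^ 2 * u ^ (1 - d)) := by
        refine setLIntegral_mono' measurableSet_Ioo fun u hu => ?_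
        have := h.const_pos
        have := hu.1
        grw [h.prod_withDensity_max_lt_le hR hRπ (by positivity : 0 < 2 * u)]
        rw [← ENNReal.ofReal_mul (by positivity), ← ENNReal.ofReal_mul (by positivity)]
        refine ENNReal.ofReal_le_ofReal ?_
        linarith [mul_le_mul_of_nonneg_left (rpow_neg_half_mul_mul_le hu.1 h.dim_pos)
          (by positivity : 0 ≤ deriv ω u ^ 2 * (K * R ^ d))]
    _ = _ := lintegral_const_mul' _ _ ENNReal.ofReal_ne_top

lemma radialEnergy_le_lintegral (f : ℂ → ℂ) (θ : ℝ) :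
    radialEnergy f θ ≤ ∫⁻ y in Ioo 0 1, ‖deriv f (circleMap 0 (1 - y) θ)‖ₑ ^ 2 := by
  rw [setLIntegral_Ioo_const_sub (fun r => ‖deriv f (circleMap 0 r θ)‖ₑ ^ 2), sub_self, sub_zero]
  exact setLIntegral_mono' measurableSet_Ioo fun r hr =>
    mul_le_of_le_one_left zero_le (ENNReal.ofReal_le_one.2 hr.2.le)

lemma enorm_deriv_outerFun_sq_le (h : IsRegularDist (fun θ => dE E (cpt θ)) d K)
    (hω : IsRegularWeight ω) {θ y : ℝ} (hy : y ∈ Ioc 0 1) :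
    ‖deriv (outerFun ω E) (circleMap 0 (1 - y) θ)‖ₑ ^ 2 ≤
      ENNReal.ofReal (2 * (exp 168 * 12 * oscConst d K) ^ 2) *
        (ENNReal.ofReal (y ^ (-(1 / 2) : ℝ)) * tailEnergy ω (max (dE E (cpt θ)) y)) := by
  have hy0 := hy.1
  have hosc := oscConst_nonneg h
  have hroot := tailRoot_nonneg ω (max (dE E (cpt θ)) y)
  have hpow : y ^ (-(1 / 2) : ℝ) = (y ^ (-(1 / 4) : ℝ)) ^ 2 := by
    rw [← rpow_mul_natCast hy0.le]
    norm_num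
  have htail := ofReal_tailRoot_sq hω (hy0.trans_le (le_max_right (dE E (cpt θ)) y))
  grw [← ofReal_norm, norm_deriv_outerFun_le h hω hy]
  refine le_of_eq ?_
  calc _ = ENNReal.ofReal ((exp 168 * 12 * oscConst d K) ^ 2) * (ENNReal.ofReal
          (y ^ (-(1 / 2) : ℝ)) * ENNReal.ofReal (tailRoot ω (max (dE E (cpt θ)) y) ^ 2)) := by
        rw [hpow, ← ENNReal.ofReal_pow (by positivity), ← ENNReal.ofReal_mul (by positivity),
          ← ENNReal.ofReal_mul (by positivity)]
        ring_nf
    _ = _ := by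
        rw [htail, ENNReal.ofReal_mul zero_le_two, ENNReal.ofReal_ofNat]
        ring

theorem isMorreyDensity_radialEnergy_outerFun (h : IsRegularDist (fun θ => dE E (cpt θ)) d K)
    (hω : IsRegularWeight ω) :
    IsMorreyDensity (radialEnergy (outerFun ω E))
      (ENNReal.ofReal (2 * (exp 168 * 12 * oscConst d K) ^ 2 * (8 * K)) *
        ∫⁻ u in Ioo 0 2, ENNReal.ofReal (deriv ω u ^ 2 * u ^ (1 - d))) d where
  measurable := measurable_radialEnergy _
  periodic := periodic_radialEnergy _
  setLIntegral_ball_le p R hR hRπ := by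
    have := h.const_pos
    set c := 2 * (exp 168 * 12 * oscConst d K) ^ 2
    calc ∫⁻ θ in ball p R, radialEnergy (outerFun ω E) θ
        ≤ ∫⁻ θ in ball p R, ENNReal.ofReal c * ∫⁻ y in Ioo 0 1,
            ENNReal.ofReal (y ^ (-(1 / 2) : ℝ)) * tailEnergy ω (max (dE E (cpt θ)) y) := by
          refine lintegral_mono fun θ => (radialEnergy_le_lintegral _ θ).trans ?_
          rw [← lintegral_const_mul' _ _ ENNReal.ofReal_ne_top]
          exact setLIntegral_mono' measurableSet_Ioo fun y hy =>
            enorm_deriv_outerFun_sq_le h hω ⟨hy.1, hy.2.le⟩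
      _ ≤ ENNReal.ofReal c * (ENNReal.ofReal (8 * K * R ^ d) *
            ∫⁻ u in Ioo 0 2, ENNReal.ofReal (deriv ω u ^ 2 * u ^ (1 - d))) := by
          rw [lintegral_const_mul' _ _ ENNReal.ofReal_ne_top]
          grw [h.lintegral_tailEnergy_max_le ω hR hRπ]
      _ = _ := by
          rw [ENNReal.ofReal_mul (p := c) (by positivity),
            ENNReal.ofReal_mul (p := 8 * K) (by positivity)]
          ring

lemma IsRegularWeight.lintegral_deriv_sq_mul_rpow_ne_top (hω : IsRegularWeight ω) (hd : d ≤ 1)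
    {b c : ℝ} (hb : 0 < b) (hbc : b < c) (hc : c < π)
    (hI : ∫⁻ u in Ioc 0 b, ENNReal.ofReal (deriv ω u ^ 2 * u ^ (1 - d)) ≠ ∞) :
    ∫⁻ u in Ioo 0 c, ENNReal.ofReal (deriv ω u ^ 2 * u ^ (1 - d)) ≠ ∞ := by
  have houter : ∫⁻ u in Ioo b c, ENNReal.ofReal (deriv ω u ^ 2 * u ^ (1 - d)) ≤
      ∫⁻ _ in Ioo b c, ENNReal.ofReal (deriv ω b ^ 2 * c ^ (1 - d)) := by
    refine setLIntegral_mono' measurableSet_Ioo fun u hu => ?_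
    have hu' : u ∈ Ioo 0 π := ⟨hb.trans hu.1, hu.2.trans hc⟩
    have hle := hω.antitoneOn_deriv ⟨hb, hbc.trans hc⟩ hu' hu.1.le
    have := hω.deriv_nonneg hu'
    have := hu'.1
    have := hu.2.le
    have := sub_nonneg.2 hd
    gcongr
  rw [← Ioc_union_Ioo_eq_Ioo hb.le hbc]
  refine ne_top_of_le_ne_top (ENNReal.add_ne_top.2 ⟨hI, ne_top_of_le_ne_top ?_ houter⟩)
    (lintegral_union_le _ _ _)
  rw [setLIntegral_const, volume_Ioo]
  finiteness

lemma norm_outerFun_le_const (h : IsRegularDist (fun θ => dE E (cpt θ)) d K)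
    (hω : IsRegularWeight ω) {z : ℂ} (hz : z ∈ unitDisc) :
    ‖outerFun ω E z‖ ≤ exp 168 * ω 2 := by
  have hz' : ‖z‖ < 1 := mem_ball_zero_iff.1 hz
  have hy : 1 - ‖z‖ ∈ Ioc (0 : ℝ) 1 := ⟨by linarith, by linarith [norm_nonneg z]⟩
  have hbound := norm_outerFun_le (θ₀ := z.arg) h hω hy
  rw [sub_sub_cancel, circleMap_zero, Complex.norm_mul_exp_arg_mul_I] at hbound
  grw [hbound]
  gcongr
  exact hω.monotoneOn (h.max_mem_Ioo z.arg hy) ⟨two_pos, by linarith [pi_gt_three]⟩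
    (max_le (h.le_two _) (by linarith [hy.2]))

theorem isMultiplierD_outerFun (h : IsRegularDist (fun θ => dE E (cpt θ)) d K)
    (hω : IsRegularWeight ω)
    (hI : ∫⁻ u in Ioc 0 1, ENNReal.ofReal (deriv ω u ^ 2 * u ^ (1 - d)) ≠ ∞) :
    IsMultiplierD (outerFun ω E) :=
  isMultiplierD_of_isMorreyDensity (differentiableOn_outerFun (logOmegaInt_of_isRegularDist h hω))
    (fun _ => norm_outerFun_le_const h hω) h.dim_pos
    (ENNReal.mul_ne_top ENNReal.ofReal_ne_top
      (hω.lintegral_deriv_sq_mul_rpow_ne_top h.dim_lt_one.le one_pos one_lt_two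
        (by linarith [pi_gt_three]) hI))
    (isMorreyDensity_radialEnergy_outerFun h hω)

end Boxes

/-! ### Energy forced by the oscillation of radial limits -/

section Oscillation

variable {g : ℂ → ℂ} {a s c A B θ θ' σ : ℝ}

lemma ofReal_abs_norm_sub_le_lintegral_radius (hg : DifferentiableOn ℂ g unitDisc)
    (hσ : σ ∈ Ioc 0 1) (hA : Tendsto (fun y => ‖g (circleMap 0 (1 - y) θ)‖) (𝓝[>] 0) (𝓝 A)) :
    ENNReal.ofReal |‖g (circleMap 0 (1 - σ) θ)‖ - A| ≤
      ∫⁻ y in Ioo 0 σ, ‖deriv g (circleMap 0 (1 - y) θ)‖ₑ := by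
  refine le_of_tendsto ((ENNReal.continuous_ofReal.tendsto _).comp (hA.const_sub _).abs) ?_
  filter_upwards [Ioo_mem_nhdsGT hσ.1] with y hy
  calc _ ≤ ENNReal.ofReal ‖g (circleMap 0 (1 - σ) θ) - g (circleMap 0 (1 - y) θ)‖ :=
        ENNReal.ofReal_le_ofReal (abs_norm_sub_norm_le _ _)
    _ ≤ ∫⁻ x in Ioo y σ, ‖deriv g (circleMap 0 (1 - x) θ)‖ₑ := by
        rw [ofReal_norm]
        exact enorm_sub_le_lintegral_radius hg hy.1 hy.2.le hσ.2 θ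
    _ ≤ _ := lintegral_mono_set (Ioo_subset_Ioo_left hy.1.le)

lemma enorm_sub_le_lintegral_arc (hg : DifferentiableOn ℂ g unitDisc) (hθ : θ ≤ θ')
    (hσ : σ ∈ Ioc 0 1) :
    ‖g (circleMap 0 (1 - σ) θ') - g (circleMap 0 (1 - σ) θ)‖ₑ ≤
      ∫⁻ φ in Ioo θ θ', ‖deriv g (circleMap 0 (1 - σ) φ)‖ₑ := by
  refine enorm_sub_le_lintegral_path (γ := circleMap 0 (1 - σ)) isOpen_ball hg hθ
    (fun φ _ => hasDerivAt_circleMap 0 (1 - σ) φ) (by fun_prop)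
    (fun φ _ => circleMap_one_sub_mem_unitDisc hσ φ) fun φ _ => ?_
  rw [norm_mul, Complex.norm_I, mul_one, norm_circleMap_zero, abs_of_nonneg (by linarith [hσ.2])]
  linarith [hσ.1]

/-- The path goes down one radius to depth `σ`, along the arc, and up the other radius. -/
lemma ofReal_sub_le_lintegral_box_path (hg : DifferentiableOn ℂ g unitDisc) (hθ : θ ≤ θ')
    (hσ : σ ∈ Ioc 0 1) (hA : Tendsto (fun y => ‖g (circleMap 0 (1 - y) θ)‖) (𝓝[>] 0) (𝓝 A))
    (hB : Tendsto (fun y => ‖g (circleMap 0 (1 - y) θ')‖) (𝓝[>] 0) (𝓝 B)) :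
    ENNReal.ofReal (B - A) ≤ (∫⁻ y in Ioo 0 σ, ‖deriv g (circleMap 0 (1 - y) θ)‖ₑ) +
      (∫⁻ y in Ioo 0 σ, ‖deriv g (circleMap 0 (1 - y) θ')‖ₑ) +
      ∫⁻ φ in Ioo θ θ', ‖deriv g (circleMap 0 (1 - σ) φ)‖ₑ := by
  grw [← ofReal_abs_norm_sub_le_lintegral_radius hg hσ hA,
    ← ofReal_abs_norm_sub_le_lintegral_radius hg hσ hB, ← enorm_sub_le_lintegral_arc hg hθ hσ]
  set z := g (circleMap 0 (1 - σ) θ)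
  set z' := g (circleMap 0 (1 - σ) θ')
  rw [← ofReal_norm, ← ENNReal.ofReal_add (by positivity) (by positivity),
    ← ENNReal.ofReal_add (by positivity) (by positivity)]
  refine ENNReal.ofReal_le_ofReal ?_
  linarith [le_abs_self (‖z‖ - A), neg_abs_le (‖z'‖ - B), norm_sub_norm_le z' z]

lemma setLIntegral_const_add (F : ℝ → ℝ≥0∞) (e a b : ℝ) :
    ∫⁻ x in Ioo a b, F (e + x) = ∫⁻ x in Ioo (e + a) (e + b), F x := by
  simpa [add_comm] using setLIntegral_mul_add one_pos e a b F

lemma ofReal_mul_ofReal_le_lintegral_box (hg : DifferentiableOn ℂ g unitDisc) (hs : 0 < s)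
    (hs1 : s ≤ 1) {β : ℝ → ℝ} (hβ : ∀ φ ∈ Ioo a (a + 3 * s),
      Tendsto (fun y => ‖g (circleMap 0 (1 - y) φ)‖) (𝓝[>] 0) (𝓝 (β φ)))
    (hc : ∀ σ ∈ Ioo 0 s, c ≤ β (a + 2 * s + σ) - β (a + σ)) :
    ENNReal.ofReal c * ENNReal.ofReal s ≤ 3 * ∫⁻ φ in Ioo a (a + 3 * s), ∫⁻ y in Ioo 0 s,
      ‖deriv g (circleMap 0 (1 - y) φ)‖ₑ := by
  have := measurable_deriv g
  set F : ℝ → ℝ → ℝ≥0∞ := fun φ y => ‖deriv g (circleMap 0 (1 - y) φ)‖ₑ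
  have hF : Measurable (Function.uncurry F) := by fun_prop
  set G : ℝ → ℝ≥0∞ := fun φ => ∫⁻ y in Ioo 0 s, F φ y
  have hG : Measurable G := hF.lintegral_prod_right'
  set J := ∫⁻ φ in Ioo a (a + 3 * s), G φ
  have hpath : ∀ σ ∈ Ioo 0 s, ENNReal.ofReal c ≤
      G (a + σ) + G (a + 2 * s + σ) + ∫⁻ φ in Ioo a (a + 3 * s), F φ σ := fun σ hσ => by
    obtain ⟨hσ0, hσs⟩ := hσ
    grw [hc σ ⟨hσ0, hσs⟩, ofReal_sub_le_lintegral_box_path hg (by linarith) ⟨hσ0, hσs.le.trans hs1⟩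
      (hβ (a + σ) ⟨by linarith, by linarith⟩) (hβ (a + 2 * s + σ) ⟨by linarith, by linarith⟩)]
    have hsub : Ioo 0 σ ⊆ Ioo 0 s := Ioo_subset_Ioo_right hσs.le
    exact add_le_add (add_le_add (lintegral_mono_set hsub) (lintegral_mono_set hsub))
      (lintegral_mono_set (Ioo_subset_Ioo (by linarith) (by linarith)))
  have htranslate : ∀ e ∈ Icc a (a + 2 * s), ∫⁻ σ in Ioo 0 s, G (e + σ) ≤ J := fun e he => by
    rw [setLIntegral_const_add]
    exact lintegral_mono_set (Ioo_subset_Ioo (by linarith [he.1]) (by linarith [he.2]))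
  calc ENNReal.ofReal c * ENNReal.ofReal s = ∫⁻ _ in Ioo 0 s, ENNReal.ofReal c := by
        rw [setLIntegral_const, Real.volume_Ioo, sub_zero]
    _ ≤ ∫⁻ σ in Ioo 0 s, (G (a + σ) + G (a + 2 * s + σ) + ∫⁻ φ in Ioo a (a + 3 * s), F φ σ) :=
        setLIntegral_mono' measurableSet_Ioo hpath
    _ = (∫⁻ σ in Ioo 0 s, G (a + σ)) + (∫⁻ σ in Ioo 0 s, G (a + 2 * s + σ)) +
          ∫⁻ σ in Ioo 0 s, ∫⁻ φ in Ioo a (a + 3 * s), F φ σ := by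
        rw [lintegral_add_left (by fun_prop), lintegral_add_left (by fun_prop)]
    _ ≤ J + J + J := by
        grw [htranslate a ⟨le_rfl, by linarith⟩, htranslate (a + 2 * s) ⟨by linarith, le_rfl⟩,
          lintegral_lintegral_swap (by fun_prop)]
    _ = 3 * J := by ring

lemma sq_lintegral_le {X : Type*} [MeasurableSpace X] {μ : Measure X} {f : X → ℝ≥0∞}
    (hf : AEMeasurable f μ) : (∫⁻ x, f x ∂μ) ^ 2 ≤ μ univ * ∫⁻ x, f x ^ 2 ∂μ := by
  simpa using sq_lintegral_mul_le (f := fun _ => 1) aemeasurable_const hf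

lemma sq_lintegral_lintegral_Ioo_le {F : ℝ → ℝ → ℝ≥0∞} (hF : Measurable (Function.uncurry F))
    (a b a' b' : ℝ) : (∫⁻ x in Ioo a b, ∫⁻ y in Ioo a' b', F x y) ^ 2 ≤
      ENNReal.ofReal (b - a) * ENNReal.ofReal (b' - a') *
        ∫⁻ x in Ioo a b, ∫⁻ y in Ioo a' b', F x y ^ 2 := by
  have h := sq_lintegral_le (μ := (volume.restrict (Ioo a b)).prod (volume.restrict (Ioo a' b')))
    hF.aemeasurable
  rw [lintegral_prod _ (by fun_prop), lintegral_prod _ (by fun_prop), ← univ_prod_univ,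
    Measure.prod_prod] at h
  simpa using h

lemma setLIntegral_enorm_deriv_sq_le_radialEnergy (g : ℂ → ℂ) {b : ℝ} (hb : b ≤ 1 / 2) (θ : ℝ) :
    ∫⁻ y in Ioo 0 b, ‖deriv g (circleMap 0 (1 - y) θ)‖ₑ ^ 2 ≤ 2 * radialEnergy g θ := by
  rw [setLIntegral_Ioo_const_sub (fun r => ‖deriv g (circleMap 0 r θ)‖ₑ ^ 2), sub_zero,
    radialEnergy, ← lintegral_const_mul' _ _ (by finiteness)]
  refine (setLIntegral_mono' measurableSet_Ioo fun r hr => ?_).trans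
    (lintegral_mono_set (Ioo_subset_Ioo_left (by linarith)))
  rw [← mul_assoc, ← ENNReal.ofReal_ofNat, ← ENNReal.ofReal_mul zero_le_two]
  refine le_mul_of_one_le_left' (ENNReal.one_le_ofReal.2 ?_)
  linarith [hr.1]

lemma ofReal_sq_le_lintegral_radialEnergy (hg : DifferentiableOn ℂ g unitDisc) (hs : 0 < s)
    (hs1 : s ≤ 1 / 2) (hc0 : 0 ≤ c) {β : ℝ → ℝ} (hβ : ∀ φ ∈ Ioo a (a + 3 * s),
      Tendsto (fun y => ‖g (circleMap 0 (1 - y) φ)‖) (𝓝[>] 0) (𝓝 (β φ)))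
    (hc : ∀ σ ∈ Ioo 0 s, c ≤ β (a + 2 * s + σ) - β (a + σ)) :
    ENNReal.ofReal (c ^ 2) ≤ 54 * ∫⁻ φ in Ioo a (a + 3 * s), radialEnergy g φ := by
  have := measurable_deriv g
  have hs2 : ENNReal.ofReal s ^ 2 ≠ 0 := by simpa using hs
  refine (ENNReal.mul_le_mul_iff_left hs2 (by finiteness)).1 ?_
  calc ENNReal.ofReal (c ^ 2) * ENNReal.ofReal s ^ 2
      = (ENNReal.ofReal c * ENNReal.ofReal s) ^ 2 := by rw [ENNReal.ofReal_pow hc0, mul_pow]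
    _ ≤ (3 * ∫⁻ φ in Ioo a (a + 3 * s), ∫⁻ y in Ioo 0 s,
          ‖deriv g (circleMap 0 (1 - y) φ)‖ₑ) ^ 2 := by
        grw [ofReal_mul_ofReal_le_lintegral_box hg hs (by linarith) hβ hc]
    _ ≤ 9 * (3 * ENNReal.ofReal s * ENNReal.ofReal s *
          ∫⁻ φ in Ioo a (a + 3 * s), 2 * radialEnergy g φ) := by
        grw [mul_pow, sq_lintegral_lintegral_Ioo_le (by fun_prop)]
        rw [add_sub_cancel_left, sub_zero, ENNReal.ofReal_mul zero_le_three, ENNReal.ofReal_ofNat]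
        gcongr with φ
        · norm_num
        · exact setLIntegral_enorm_deriv_sq_le_radialEnergy g hs1 φ
    _ = _ := by
        rw [lintegral_const_mul' _ _ (by finiteness)]
        ring

end Oscillation

/-! ### Necessity of the integral condition -/

section Gap

variable {ω : ℝ → ℝ} {E : Set ℂ} {d K p t L : ℝ}

lemma half_mul_sub_le_sin_sub_sin {x y : ℝ} (hx : 0 ≤ x) (hxy : x ≤ y) (hy : y ≤ 1) :
    1 / 2 * (y - x) ≤ sin y - sin x := by
  refine (convex_Icc 0 1).mul_sub_le_image_sub_of_le_deriv continuousOn_sin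
    differentiable_sin.differentiableOn (fun u hu => ?_) x ⟨hx, hxy.trans hy⟩ y ⟨hx.trans hxy, hy⟩
    hxy
  rw [interior_Icc] at hu
  rw [Real.deriv_sin]
  nlinarith [one_sub_sq_div_two_le_cos (x := u), hu.1, hu.2]

lemma IsRegularWeight.deriv_mul_le_sub_two_mul_sin (hω : IsRegularWeight ω) {u v : ℝ} (hu : 0 < u)
    (huv : u ≤ v) (hvt : v ≤ t) (ht : t ≤ 1) :
    deriv ω t * ((v - u) / 2) ≤ ω (2 * sin (v / 2)) - ω (2 * sin (u / 2)) := by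
  have hsin := half_mul_sub_le_sin_sub_sin (x := u / 2) (y := v / 2) (by linarith) (by linarith)
    (by linarith)
  have hu0 : 0 < sin (u / 2) :=
    sin_pos_of_pos_of_lt_pi (by linarith) (by linarith [pi_gt_three])
  have hv0 : 0 < sin (v / 2) := by linarith
  have hvle : 2 * sin (v / 2) ≤ v := by linarith [sin_le (x := v / 2) (by linarith)]
  have hv : 2 * sin (v / 2) ∈ Ioo 0 π := ⟨by positivity, by linarith [pi_gt_three]⟩
  have htπ : t ∈ Ioo 0 π := ⟨by linarith, by linarith [pi_gt_three]⟩
  have hanti := hω.antitoneOn_deriv hv htπ (hvle.trans hvt)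
  calc deriv ω t * ((v - u) / 2) ≤ deriv ω t * (2 * sin (v / 2) - 2 * sin (u / 2)) :=
        mul_le_mul_of_nonneg_left (by linarith) (hω.deriv_nonneg htπ)
    _ ≤ deriv ω (2 * sin (v / 2)) * (2 * sin (v / 2) - 2 * sin (u / 2)) :=
        mul_le_mul_of_nonneg_right hanti (by linarith)
    _ ≤ ω (2 * sin (v / 2)) - ω (2 * sin (u / 2)) :=
        hω.deriv_mul_le_sub (by positivity) (by linarith) hv.2

lemma ofReal_deriv_mul_sq_le_lintegral_radialEnergy
    (h : IsRegularDist (fun θ => dE E (cpt θ)) d K) (hω : IsRegularWeight ω) (ht : t ∈ Ioc 0 1)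
    (hgap : ∀ u ∈ Icc 0 t, dE E (cpt (p + u)) = 2 * sin (u / 2)) :
    ENNReal.ofReal ((deriv ω t * (t / 6)) ^ 2) ≤
      54 * ∫⁻ φ in Ioo (p + t / 2) (p + t), radialEnergy (outerFun ω E) φ := by
  obtain ⟨ht0, ht1⟩ := ht
  have hderiv : 0 ≤ deriv ω t := hω.deriv_nonneg ⟨ht0, by linarith [pi_gt_three]⟩
  have hend : p + t / 2 + 3 * (t / 6) = p + t := by ring
  rw [← hend]
  refine ofReal_sq_le_lintegral_radialEnergy
    (differentiableOn_outerFun (logOmegaInt_of_isRegularDist h hω)) (by positivity) (by linarith)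
    (by positivity) (β := fun φ => ω (dE E (cpt φ))) (fun φ hφ => ?_) fun σ hσ => ?_
  · refine tendsto_norm_outerFun h hω ?_
    rw [hend] at hφ
    rw [← add_sub_cancel p φ, hgap _ ⟨by linarith [hφ.1], by linarith [hφ.2]⟩]
    have := sin_pos_of_pos_of_lt_pi (x := (φ - p) / 2) (by linarith [hφ.1])
      (by linarith [hφ.2, pi_gt_three])
    positivity
  · obtain ⟨hσ0, hσt⟩ := hσ
    rw [show p + t / 2 + 2 * (t / 6) + σ = p + (5 * t / 6 + σ) by ring, add_assoc p,
      hgap _ ⟨by linarith, by linarith⟩, hgap _ ⟨by linarith, by linarith⟩]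
    refine le_trans (le_of_eq ?_) (hω.deriv_mul_le_sub_two_mul_sin (u := t / 2 + σ)
      (v := 5 * t / 6 + σ) (by linarith) (by linarith) (by linarith) ht1)
    ring

lemma lintegral_inv_mul_lintegral_Ioo_half_le {H : ℝ → ℝ≥0∞} (hH : Measurable H) (L : ℝ) :
    ∫⁻ t in Ioc 0 L, ENNReal.ofReal t⁻¹ * ∫⁻ u in Ioo (t / 2) t, H u ≤ ∫⁻ u in Ioo 0 L, H u := by
  set S := {q : ℝ × ℝ | q.1 / 2 < q.2} ∩ {q | q.2 < q.1}
  have hS : MeasurableSet S :=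
    (measurableSet_lt (by fun_prop) (by fun_prop)).inter
      (measurableSet_lt (by fun_prop) (by fun_prop))
  have hlog : ∀ u ∈ Ioo 0 L, ∫⁻ t in Ioo u (2 * u), ENNReal.ofReal t⁻¹ ≤ 1 := fun u hu => by
    rw [lintegral_Ioo_inv hu.1 (by linarith [hu.1]), mul_div_cancel_right₀ _ hu.1.ne',
      ENNReal.ofReal_le_one]
    linarith [log_two_lt_d9]
  calc ∫⁻ t in Ioc 0 L, ENNReal.ofReal t⁻¹ * ∫⁻ u in Ioo (t / 2) t, H u
      = ∫⁻ t in Ioc 0 L, ∫⁻ u in Ioo 0 L, S.indicator (fun q => ENNReal.ofReal q.1⁻¹ * H q.2)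
          (t, u) := by
        refine setLIntegral_congr_fun measurableSet_Ioc fun t ht => ?_
        have hsub : Ioo (t / 2) t ⊆ Ioo 0 L := Ioo_subset_Ioo (by linarith [ht.1]) ht.2
        rw [← lintegral_const_mul' _ _ ENNReal.ofReal_ne_top, ← inter_eq_left.2 hsub,
          ← setLIntegral_indicator measurableSet_Ioo]
        rfl
    _ = ∫⁻ u in Ioo 0 L, ∫⁻ t in Ioc 0 L, S.indicator (fun q => ENNReal.ofReal q.1⁻¹ * H q.2)
          (t, u) := lintegral_lintegral_swap
        (Measurable.indicator (by fun_prop) hS).aemeasurable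
    _ ≤ ∫⁻ u in Ioo 0 L, (∫⁻ t in Ioo u (2 * u), ENNReal.ofReal t⁻¹) * H u := by
        refine lintegral_mono fun u => ?_
        rw [← lintegral_mul_const _ (by fun_prop), ← lintegral_indicator measurableSet_Ioo]
        refine (setLIntegral_le_lintegral _ _).trans (lintegral_mono fun t => ?_)
        by_cases ht : (t, u) ∈ S
        · have hlt : t / 2 < u := ht.1
          have hgt : u < t := ht.2
          rw [indicator_of_mem ht, indicator_of_mem (mem_Ioo.2 ⟨hgt, by linarith⟩)]
        · rw [indicator_of_notMem ht]
          exact zero_le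
    _ ≤ ∫⁻ u in Ioo 0 L, H u :=
        setLIntegral_mono' measurableSet_Ioo fun u hu => mul_le_of_le_one_left zero_le (hlog u hu)

lemma lintegral_deriv_sq_mul_le_lintegral_radialEnergy
    (h : IsRegularDist (fun θ => dE E (cpt θ)) d K) (hω : IsRegularWeight ω) (hL : L ≤ 1)
    (hgap : ∀ u ∈ Icc 0 L, dE E (cpt (p + u)) = 2 * sin (u / 2)) :
    ∫⁻ t in Ioc 0 L, ENNReal.ofReal (deriv ω t ^ 2 * t) ≤
      1944 * ∫⁻ φ in Ioo p (p + L), radialEnergy (outerFun ω E) φ := by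
  set H : ℝ → ℝ≥0∞ := fun u => radialEnergy (outerFun ω E) (p + u)
  have hH : Measurable H := (measurable_radialEnergy _).comp (by fun_prop)
  calc _ ≤ ∫⁻ t in Ioc 0 L, 1944 * (ENNReal.ofReal t⁻¹ * ∫⁻ u in Ioo (t / 2) t, H u) := by
        refine setLIntegral_mono' measurableSet_Ioc fun t ht => ?_
        have ht0 := ht.1
        have hbox := ofReal_deriv_mul_sq_le_lintegral_radialEnergy h hω ⟨ht0, ht.2.trans hL⟩
          fun u hu => hgap u ⟨hu.1, hu.2.trans ht.2⟩
        rw [← setLIntegral_const_add] at hbox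
        calc ENNReal.ofReal (deriv ω t ^ 2 * t)
            = ENNReal.ofReal (36 * t⁻¹) * ENNReal.ofReal ((deriv ω t * (t / 6)) ^ 2) := by
              rw [← ENNReal.ofReal_mul (by positivity)]
              field_simp
              norm_num
          _ ≤ ENNReal.ofReal (36 * t⁻¹) * (54 * ∫⁻ u in Ioo (t / 2) t, H u) := by gcongr
          _ = _ := by
              rw [ENNReal.ofReal_mul (by norm_num), ENNReal.ofReal_ofNat]
              ring
    _ ≤ 1944 * ∫⁻ u in Ioo 0 L, H u := by
        rw [lintegral_const_mul' _ _ (by finiteness)]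
        grw [lintegral_inv_mul_lintegral_Ioo_half_le hH L]
    _ = _ := by rw [setLIntegral_const_add, add_zero]

end Gap

section GeometricSeries

variable {ξ d c : ℝ}

lemma exists_rpow_neg_le_mul_pow_rpow_neg {t : ℝ} (hξ : ξ ∈ Ioo 0 1) (hd : 0 ≤ d) (hc : 0 < c)
    (ht : t ∈ Ioc 0 c) :
    ∃ n : ℕ, t ≤ ξ ^ n * c ∧ t ^ (-d) ≤ (ξ * c) ^ (-d) * (ξ ^ n) ^ (-d) := by
  have hξ0 := hξ.1
  obtain ⟨n, hlt, hle⟩ := exists_nat_pow_near_of_lt_one (div_pos ht.1 hc)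
    ((div_le_one hc).2 ht.2) hξ.1 hξ.2
  rw [lt_div_iff₀ hc] at hlt
  refine ⟨n, (div_le_iff₀ hc).1 hle, ?_⟩
  rw [← mul_rpow (by positivity) (by positivity), show ξ * c * ξ ^ n = ξ ^ (n + 1) * c by ring]
  exact rpow_le_rpow_of_nonpos (by positivity) hlt.le (by linarith)

lemma lintegral_rpow_neg_mul_le_of_sum_le (hξ : ξ ∈ Ioo 0 1) (hd : 0 ≤ d) (hc : 0 < c)
    {W : ℝ → ℝ≥0∞} (hW : Measurable W) {M : ℝ≥0∞}
    (hM : ∀ N, ∑ n ∈ Finset.range N, ENNReal.ofReal ((ξ ^ n) ^ (-d)) *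
      ∫⁻ t in Ioc 0 (ξ ^ n * c), W t ≤ M) :
    ∫⁻ t in Ioc 0 c, ENNReal.ofReal (t ^ (-d)) * W t ≤ ENNReal.ofReal ((ξ * c) ^ (-d)) * M := by
  have hξ0 := hξ.1
  set F : ℕ → ℝ → ℝ≥0∞ := fun n =>
    (Ioc 0 (ξ ^ n * c)).indicator fun t => ENNReal.ofReal ((ξ ^ n) ^ (-d)) * W t
  have hF : ∀ n, Measurable (F n) := fun n => (hW.const_mul _).indicator measurableSet_Ioc
  calc ∫⁻ t in Ioc 0 c, ENNReal.ofReal (t ^ (-d)) * W t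
      ≤ ∫⁻ t in Ioc 0 c, ENNReal.ofReal ((ξ * c) ^ (-d)) * ∑' n, F n t := by
        refine setLIntegral_mono' measurableSet_Ioc fun t ht => ?_
        obtain ⟨n, hle, hpow⟩ := exists_rpow_neg_le_mul_pow_rpow_neg hξ hd hc ht
        grw [← ENNReal.le_tsum n, hpow, ENNReal.ofReal_mul (by positivity), mul_assoc]
        have hFt : F n t = ENNReal.ofReal ((ξ ^ n) ^ (-d)) * W t :=
          indicator_of_mem (mem_Ioc.2 ⟨ht.1, hle⟩) _
        rw [hFt]
    _ ≤ ENNReal.ofReal ((ξ * c) ^ (-d)) * ∫⁻ t, ∑' n, F n t := by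
        rw [lintegral_const_mul' _ _ ENNReal.ofReal_ne_top]
        exact mul_le_mul_right (setLIntegral_le_lintegral _ _) _
    _ ≤ ENNReal.ofReal ((ξ * c) ^ (-d)) * M := by
        rw [lintegral_tsum fun n => (hF n).aemeasurable]
        gcongr
        refine ENNReal.summable.tsum_le_of_sum_range_le fun N => (le_of_eq ?_).trans (hM N)
        refine Finset.sum_congr rfl fun n _ => ?_
        rw [lintegral_indicator measurableSet_Ioc, lintegral_const_mul' _ _ ENNReal.ofReal_ne_top]

end GeometricSeries

section CantorSet

variable {ξ : ℝ} {ω : ℝ → ℝ}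

lemma pow_rpow_neg_cantorDim (hξ : ξ ∈ Ioo 0 1) (n : ℕ) : (ξ ^ n) ^ (-cantorDim ξ) = 2 ^ n := by
  have hξ0 := hξ.1.le
  rw [rpow_neg (by positivity), ← rpow_pow_comm hξ0, rpow_cantorDim hξ, one_div, inv_pow, inv_inv]

lemma sum_two_pow_mul_lintegral_deriv_sq_le (hξ : ξ ∈ Ioo 0 (1 / 2)) (hω : IsRegularWeight ω)
    (N : ℕ) :
    ∑ n ∈ Finset.range N, 2 ^ n *
        ∫⁻ t in Ioc 0 (ξ ^ n * (1 - 2 * ξ)), ENNReal.ofReal (deriv ω t ^ 2 * t) ≤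
      1944 * ∫⁻ θ in Ioc 0 (2 * π), radialEnergy (outerFun ω (gCantorSet fun _ => ξ)) θ := by
  obtain ⟨hξ0, hξ2⟩ := hξ
  have hπ := pi_gt_three
  set G := radialEnergy (outerFun ω (gCantorSet fun _ => ξ))
  have hself := isSelfSimilar_linearCantorSet (ξ := ξ) ⟨hξ0.le, by linarith⟩
  have hscale : ∀ a b, ∫⁻ x in Ioo a b, ENNReal.ofReal (2 * π) * (1944 * G (2 * π * x + 0)) =
      1944 * ∫⁻ θ in Ioo (2 * π * a) (2 * π * b), G θ := fun a b => by
    rw [setLIntegral_mul_add (by positivity) 0 a b fun θ => 1944 * G θ,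
      lintegral_const_mul' _ _ (by finiteness), add_zero, add_zero]
  calc _ ≤ ∫⁻ x in Ioo 0 1, ENNReal.ofReal (2 * π) * (1944 * G (2 * π * x + 0)) := by
        refine hself.sum_gaps_le_setLIntegral ⟨hξ0, hξ2⟩ N _ _ fun n _ a ha => ?_
        have hc : 0 < 1 - 2 * ξ := by linarith
        have hL : 0 < ξ ^ n * (1 - 2 * ξ) := by positivity
        have hL1 : ξ ^ n * (1 - 2 * ξ) ≤ 1 :=
          mul_le_one₀ (pow_le_one₀ hξ0.le (by linarith)) hc.le (by linarith)
        rw [hscale]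
        refine (lintegral_deriv_sq_mul_le_lintegral_radialEnergy (p := 2 * π * a)
          (isRegularDist_dE_gCantorSet ⟨hξ0, hξ2⟩) hω hL1 fun u hu => ?_).trans ?_
        · have := dE_gCantorSet_of_isGap ⟨hξ0.le, by linarith⟩ ha hu.1 (by nlinarith [hu.2])
          exact_mod_cast this
        · gcongr
          nlinarith
    _ ≤ _ := by
        rw [hscale, mul_zero, mul_one]
        gcongr
        exact Ioo_subset_Ioc_self

theorem lintegral_deriv_sq_mul_rpow_ne_top_of_memDirichlet (hξ : ξ ∈ Ioo 0 (1 / 2))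
    (hω : IsRegularWeight ω) (hf : MemDirichlet (outerFun ω (gCantorSet fun _ => ξ))) :
    ∫⁻ u in Ioc 0 1, ENNReal.ofReal (deriv ω u ^ 2 * u ^ (1 - cantorDim ξ)) ≠ ∞ := by
  have hξ1 : ξ ∈ Ioo 0 1 := ⟨hξ.1, by linarith [hξ.2]⟩
  have hc : 0 < 1 - 2 * ξ := by linarith [hξ.2]
  obtain ⟨hd0, hd1⟩ := cantorDim_mem_Ioo hξ
  have henergy :
      ∫⁻ θ in Ioc 0 (2 * π), radialEnergy (outerFun ω (gCantorSet fun _ => ξ)) θ ≠ ∞ := by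
    rw [lintegral_radialEnergy]
    exact ((integrableOn_norm_sq_iff (measurable_deriv _).aestronglyMeasurable).1 hf.2.2).ne
  have hnear : ∫⁻ u in Ioc 0 (1 - 2 * ξ),
      ENNReal.ofReal (deriv ω u ^ 2 * u ^ (1 - cantorDim ξ)) ≠ ∞ := by
    have hsum := lintegral_rpow_neg_mul_le_of_sum_le hξ1 hd0.le hc
      (W := fun t => ENNReal.ofReal (deriv ω t ^ 2 * t))
      (by have := measurable_deriv ω; fun_prop) fun N => by
        simpa only [pow_rpow_neg_cantorDim hξ1, ENNReal.ofReal_pow zero_le_two,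
          ENNReal.ofReal_ofNat] using sum_two_pow_mul_lintegral_deriv_sq_le hξ hω N
    refine ne_top_of_le_ne_top (by finiteness) (le_trans (le_of_eq ?_) hsum)
    refine setLIntegral_congr_fun measurableSet_Ioc fun u hu => ?_
    have hu0 : 0 < u := hu.1
    rw [← ENNReal.ofReal_mul (by positivity), sub_eq_add_neg, rpow_add hu0, rpow_one]
    ring_nf
  refine ne_top_of_le_ne_top (hω.lintegral_deriv_sq_mul_rpow_ne_top hd1.le hc (c := 2)
    (by linarith [hξ.1]) (by linarith [pi_gt_three]) hnear) (lintegral_mono_set fun u hu => ?_)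
  exact ⟨hu.1, by linarith [hu.2]⟩

end CantorSet

/-! ### The equivalence -/

section Equivalence

variable {ξ : ℝ} {ω : ℝ → ℝ}

lemma memDirichlet_one : MemDirichlet fun _ => 1 :=
  ⟨differentiableOn_const _, ⟨2 * π, fun r _ => by simp [pi_pos.le]⟩, by simp⟩

lemma memDirichlet_of_isMultiplierD {f : ℂ → ℂ} (hf : IsMultiplierD f) : MemDirichlet f := by
  simpa only [mul_one] using hf _ memDirichlet_one

lemma integrableOn_deriv_sq_mul_rpow_iff (ω : ℝ → ℝ) (p : ℝ) :
    IntegrableOn (fun t => deriv ω t ^ 2 * t ^ p) (Ioc 0 1) ↔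
      ∫⁻ t in Ioc 0 1, ENNReal.ofReal (deriv ω t ^ 2 * t ^ p) ≠ ∞ := by
  have := measurable_deriv ω
  have hnonneg : 0 ≤ᵐ[volume.restrict (Ioc 0 1)] fun t => deriv ω t ^ 2 * t ^ p := by
    filter_upwards [ae_restrict_mem measurableSet_Ioc] with t ht
    exact mul_nonneg (sq_nonneg _) (rpow_nonneg ht.1.le _)
  rw [← lt_top_iff_ne_top, IntegrableOn, Integrable, hasFiniteIntegral_iff_ofReal hnonneg]
  exact and_iff_right (by fun_prop)

theorem isMultiplierD_outerFun_gCantorSet_iff (hξ : ξ ∈ Ioo 0 (1 / 2)) (hω : IsRegularWeight ω) :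
    IsMultiplierD (outerFun ω (gCantorSet fun _ => ξ)) ↔
      IntegrableOn (fun t => deriv ω t ^ 2 * t ^ (1 - cantorDim ξ)) (Ioc 0 1) := by
  rw [integrableOn_deriv_sq_mul_rpow_iff]
  exact ⟨fun hf => lintegral_deriv_sq_mul_rpow_ne_top_of_memDirichlet hξ hω
    (memDirichlet_of_isMultiplierD hf),
    isMultiplierD_outerFun (isRegularDist_dE_gCantorSet hξ) hω⟩

theorem memDirichlet_outerFun_gCantorSet_iff (hξ : ξ ∈ Ioo 0 (1 / 2)) (hω : IsRegularWeight ω) :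
    MemDirichlet (outerFun ω (gCantorSet fun _ => ξ)) ↔
      IntegrableOn (fun t => deriv ω t ^ 2 * t ^ (1 - cantorDim ξ)) (Ioc 0 1) := by
  refine ⟨fun hf => ?_, fun hI => memDirichlet_of_isMultiplierD
    ((isMultiplierD_outerFun_gCantorSet_iff hξ hω).2 hI)⟩
  rw [integrableOn_deriv_sq_mul_rpow_iff]
  exact lintegral_deriv_sq_mul_rpow_ne_top_of_memDirichlet hξ hω hf

lemma integrableOn_deriv_rpow_sq_mul_rpow_iff {α d : ℝ} (hα : 0 < α) :
    IntegrableOn (fun t => deriv (fun s : ℝ => s ^ α) t ^ 2 * t ^ (1 - d)) (Ioc 0 1) ↔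
      d / 2 < α := by
  have hpow : EqOn (fun t => deriv (fun s : ℝ => s ^ α) t ^ 2 * t ^ (1 - d))
      (fun t => α ^ 2 * t ^ (2 * (α - 1) + (1 - d))) (Ioc 0 1) := fun t ht => by
    simp only [Real.deriv_rpow_const, rpow_add ht.1, two_mul]
    ring
  rw [integrableOn_congr_fun hpow measurableSet_Ioc, IntegrableOn,
    integrable_const_mul_iff (by simp [hα.ne']), ← IntegrableOn,
    integrableOn_Ioc_iff_integrableOn_Ioo, intervalIntegral.integrableOn_Ioo_rpow_iff one_pos]
  constructor <;> intro h <;> linarith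

end Equivalence

end CantorDirichlet

open CantorDirichlet in
theorem statement19_general (ξ : ℝ) (hξ : ξ ∈ Ioo (0 : ℝ) (1 / 2))
    (ω ω' : ℝ → ℝ) (γ : ℝ) (hγ : 1 ≤ γ) (hω : OmegaHyp ω ω' γ) :
    ((MemDirichlet (outerFun ω (gCantorSet fun _ => ξ)) ↔
        IntegrableOn (fun t => (ω' t) ^ 2 * t ^ (1 - log 2 / log ξ⁻¹))
          (Ioc (0 : ℝ) 1) volume) ∧
      (IsMultiplierD (outerFun ω (gCantorSet fun _ => ξ)) ↔
        IntegrableOn (fun t => (ω' t) ^ 2 * t ^ (1 - log 2 / log ξ⁻¹))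
          (Ioc (0 : ℝ) 1) volume)) ∧
    (∀ α : ℝ, α ∈ Ioc (0 : ℝ) 1 →
      ((MemDirichlet (outerFun (fun t => t ^ α) (gCantorSet fun _ => ξ)) ↔
          IsMultiplierD (outerFun (fun t => t ^ α) (gCantorSet fun _ => ξ))) ∧
        (IsMultiplierD (outerFun (fun t => t ^ α) (gCantorSet fun _ => ξ)) ↔
          log 2 / log ξ⁻¹ / 2 < α))) := by
  have hderiv : EqOn (fun t => deriv ω t ^ 2 * t ^ (1 - cantorDim ξ))
      (fun t => ω' t ^ 2 * t ^ (1 - cantorDim ξ)) (Ioc 0 1) := fun t ht => by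
    simp only [eqOn_deriv_of_omegaHyp hω ⟨ht.1, by linarith [ht.2, pi_gt_three]⟩]
  have hω₀ := isRegularWeight_of_omegaHyp hγ hω
  refine ⟨⟨?_, ?_⟩, fun α hα => ?_⟩
  · exact (memDirichlet_outerFun_gCantorSet_iff hξ hω₀).trans
      (integrableOn_congr_fun hderiv measurableSet_Ioc)
  · exact (isMultiplierD_outerFun_gCantorSet_iff hξ hω₀).trans
      (integrableOn_congr_fun hderiv measurableSet_Ioc)
  · have hmem := memDirichlet_outerFun_gCantorSet_iff hξ (isRegularWeight_rpow hα)
    have hmul := isMultiplierD_outerFun_gCantorSet_iff hξ (isRegularWeight_rpow hα)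
    exact ⟨hmem.trans hmul.symm, hmul.trans (integrableOn_deriv_rpow_sq_mul_rpow_iff hα.1)⟩

/-- For the perfect symmetric set `E_ξ` of constant ratio `ξ` (Hausdorff
dimension `log 2 / log(1/ξ)`): `f_{ω,E} ∈ 𝒟 ↔ f_{ω,E} ∈ 𝓜(𝒟) ↔
∫_0^1 ω'(t)² t^{1−dim} dt < ∞`; and in particular for `ω(t) = t^α`,
`f_{α,E_ξ} ∈ 𝒟 ↔ f_{α,E_ξ} ∈ 𝓜(𝒟) ↔ α > dim(E_ξ)/2`. -/
theorem statement19 (ξ : ℝ) (hξ : ξ ∈ Set.Ioo (0:ℝ) (1/2))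
    (ω ω' : ℝ → ℝ) (γ : ℝ) (hγ : 2 < γ) (hω : OmegaHyp ω ω' γ)
    (hlog : LogOmegaInt ω (gCantorSet fun _ => ξ)) :
    ((MemDirichlet (outerFun ω (gCantorSet fun _ => ξ)) ↔
        IntegrableOn (fun t => (ω' t) ^ 2 * t ^ (1 - Real.log 2 / Real.log ξ⁻¹))
          (Set.Ioc (0:ℝ) 1) volume) ∧
      (IsMultiplierD (outerFun ω (gCantorSet fun _ => ξ)) ↔
        IntegrableOn (fun t => (ω' t) ^ 2 * t ^ (1 - Real.log 2 / Real.log ξ⁻¹))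
          (Set.Ioc (0:ℝ) 1) volume)) ∧
    (∀ α : ℝ, α ∈ Set.Ioo (0:ℝ) 1 →
      ((MemDirichlet (outerFun (fun t => t ^ α) (gCantorSet fun _ => ξ)) ↔
          IsMultiplierD (outerFun (fun t => t ^ α) (gCantorSet fun _ => ξ))) ∧
        (IsMultiplierD (outerFun (fun t => t ^ α) (gCantorSet fun _ => ξ)) ↔
          Real.log 2 / Real.log ξ⁻¹ / 2 < α))) := by
  obtain ⟨hgeneral, hpow⟩ := statement19_general ξ hξ ω ω' γ (by linarith) hω
  exact ⟨hgeneral, fun α hα => hpow α (Ioo_subset_Ioc_self hα)⟩
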